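/- Let φ be as in the standing hypotheses, satisfy the vanishing expansion of order 1/2 at a, and assume that 2a₁ < r₀ and that the associated constant M_a satisfies |M_a| ≤ C₀·H(φ,2a₁,π(a)) for some C₀ > 0. Then there exists a constant C > 0 depending only on λ, on the C¹ norm of p and on C₀ (and not on a₁, k, r, r₀) such that for every k > 1 with a₁ < r₀/k and every r with k·a₁ < r < r₀ one has N(φ,r,π(a),λ,A_a) ≤ ( N(φ,r₀,π(a),λ,A_a) + 1 )·exp( C·e^{C r₀²}/k² + C r₀²/(1 − C r₀²) ) − 1, provided C r₀² < 1. -/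

import Mathlib

/-!
Write `ζ = s + it` for the logarithmic coordinate centred at `π(a)`, so `x = π(a) + e^ζ`, with
`t ∈ (-π/2, π/2)`, and let `α = log a₁` be the radius of the pole in this coordinate. With `D` the
gauge-covariant derivative and integrals over `t`, put `H = ∫ |φ|²`, `e = ∫ ⟨D_s φ, φ⟩`,
`a = ∫ |D_s φ|²`, `b = ∫ |D_t φ|²` and `c = ∫ λ e^{2s} p |φ|²` (`fH`, `fe`, `fa`, `fb`, `fc`). Then
`H(φ, e^s) = H(s)` and `E(φ, e^s) = e(s)`, so the frequency is `N = e / H`. The function `e` is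
continuous across `α` because of the vanishing expansion at the pole.

On either side of `α`, multiplying `φ` by a unimodular gauge with phase `-θ_a/2` turns the equation
into `Δv = -Wv` on a strip, with `v = 0` on the edges. Barrier estimates up to the edges (`flat_est`,
`flat_est2`) justify all differentiations and integrations by parts, which give, with
`Λ = λ·‖p‖_{C¹}`,
* `H' = 2e` and `e' = a + b - c`;
* `b ≥ H` (Wirtinger) and `e² ≤ aH` (Cauchy–Schwarz), hence `N ≥ 1 - Λe^{2s}`;
* for the Pohozaev defect `Φ = a - b + c`: `|Φ'| ≤ 3Λe^{2s} H` and `(log N)' ≥ -Φ/e`.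

The rest is an argument about functions of one variable.

*Far from the pole*, `s ≥ α + log 2` (`far_mono`). Since `Φ` is nearly constant beyond `α` and `e`
grows at least at rate `Φ` there, `Φ ≤ (3/2) e` up to errors. As `H` grows like `e^{2s}` at least
and `N` stays bounded below by its value at `α + log 2` up to a factor, `Φ/e` decays like
`e^{-2(s-α)}`; integrating yields `log N(s) ≤ log N(s') + O(e^{-2(s-α)}) + Λe^{2s'}`, that is, the
terms in `1/k²` and `r₀²`.

*Near the pole*, `α < s < α + log 2` (`near_le`), only `N(s) ≤ 10¹⁷ N₁` is needed, where
`N₁ = N(α + log 2)`. If `Φ(s) ≤ 0` this is immediate. Otherwise it suffices to bound `Φ(s)` by a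
multiple of `N₁² H(s)` (`near_of_pos`). Were `Φ(s)` much larger, `√H` would grow linearly with slope
`√Φ(s)` on an interval of length `L = 10⁻⁸/N₁` beyond `s`, and on some slice `t₁` of this interval
the angular energy `b` would be tiny. Cut the profile of `v` at `t₁` off near angle `0`, where the
pole sits, at scale `L`, and consider the flux `∫ ⟨v_s, ψ⟩` of the solution against this fixed
profile `ψ` (`FluxTest`). Because `ψ` vanishes at angle `0`, this flux makes sense on both sides of
`α` and is continuous across it. It is large at `t₁`; it is small at `s` by averaging over
`[s - L, s]`, where the energy is controlled by `e(s)`; and it hardly changes between `s` and `t₁`.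
This is a contradiction.

Letting the outer radius tend to `r₀` gives `N(r) ≤ N(r₀)·X` with `X ≥ 1` the exponential factor and
`N(r₀) ≥ 0`, whence `N(r) + 1 ≤ (N(r₀) + 1)·X`.
-/

open MeasureTheory Real Filter Set Asymptotics

noncomputable section

/-- The open half-disk `D_r⁺(c)`: points at distance `< r` from `c` with positive
first coordinate (we identify `ℝ²` with `ℂ`). -/
def halfDisk (c : ℂ) (r : ℝ) : Set ℂ := {x : ℂ | dist x c < r ∧ 0 < x.re}

/-- Projection onto the axis `{x₁ = 0}`: `π(a) = (0, a₂)`. -/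
def proj (a : ℂ) : ℂ := (a.im : ℂ) * Complex.I

/-- First partial derivative of a complex-valued function on `ℝ² = ℂ`. -/
def pd1 (u : ℂ → ℂ) (x : ℂ) : ℂ := fderiv ℝ u x 1

/-- Second partial derivative of a complex-valued function on `ℝ² = ℂ`. -/
def pd2 (u : ℂ → ℂ) (x : ℂ) : ℂ := fderiv ℝ u x Complex.I

/-- The Aharonov–Bohm potential `A_a(x)`, encoded as the complex number whose real and
imaginary parts are its two components:
`A_a(x) = (1/2)(−(x₂−a₂)/|x−a|², (x₁−a₁)/|x−a|²) = i(x−a)/(2|x−a|²)`. -/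
def abPot (a x : ℂ) : ℂ := Complex.I * (x - a) / (2 * (‖x - a‖ : ℂ) ^ 2)

/-- First component of `A_a`. -/
def abPot1 (a x : ℂ) : ℝ := (abPot a x).re

/-- Second component of `A_a`. -/
def abPot2 (a x : ℂ) : ℝ := (abPot a x).im

/-- First component of the magnetic gradient `(i∇ + A_a)u`. -/
def mg1 (a : ℂ) (u : ℂ → ℂ) (x : ℂ) : ℂ := Complex.I * pd1 u x + (abPot1 a x : ℂ) * u x

/-- Second component of the magnetic gradient `(i∇ + A_a)u`. -/
def mg2 (a : ℂ) (u : ℂ → ℂ) (x : ℂ) : ℂ := Complex.I * pd2 u x + (abPot2 a x : ℂ) * u x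

/-- `|(i∇+A_a)u|²`. -/
def mgSq (a : ℂ) (u : ℂ → ℂ) (x : ℂ) : ℝ := ‖mg1 a u x‖ ^ 2 + ‖mg2 a u x‖ ^ 2

/-- Arclength integral of `f` over the circular part `∂D_r⁺(c)` of the boundary of a
half-disk centered at a point `c` on the axis `{x₁ = 0}`, parametrized by the angle
`θ ∈ (−π/2, π/2)`. -/
def bdryInt (c : ℂ) (r : ℝ) (f : ℂ → ℝ) : ℝ :=
  ∫ θ in Ioo (-(π / 2)) (π / 2), r * f (circleMap c r θ)

/-- The Laplacian of a complex-valued function. -/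
def lapC (u : ℂ → ℂ) (x : ℂ) : ℂ :=
  fderiv ℝ (fun y => pd1 u y) x 1 + fderiv ℝ (fun y => pd2 u y) x Complex.I

/-- Divergence `∇·A_a`. -/
def divAB (a x : ℂ) : ℝ := fderiv ℝ (abPot1 a) x 1 + fderiv ℝ (abPot2 a) x Complex.I

/-- The magnetic Laplacian `(i∇+A_a)²u = −Δu + i(∇·A_a)u + 2i A_a·∇u + |A_a|²u`. -/
def magLap (a : ℂ) (u : ℂ → ℂ) (x : ℂ) : ℂ :=
  - lapC u x + Complex.I * (divAB a x : ℂ) * u x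
    + 2 * Complex.I * ((abPot1 a x : ℂ) * pd1 u x + (abPot2 a x : ℂ) * pd2 u x)
    + ((abPot1 a x ^ 2 + abPot2 a x ^ 2 : ℝ) : ℂ) * u x

/-- The Almgren energy `E(u,r,c,λ,A_a) = ∫_{D_r⁺(c)} (|(i∇+A_a)u|² − λp|u|²) dx`. -/
def Efun (a : ℂ) (u : ℂ → ℂ) (r : ℝ) (c : ℂ) (lam : ℝ) (p : ℂ → ℝ) : ℝ :=
  ∫ x in halfDisk c r, (mgSq a u x - lam * p x * ‖u x‖ ^ 2)

/-- `H(u,r,c) = (1/r)∫_{∂D_r⁺(c)} |u|² dσ`. -/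
def Hfun (u : ℂ → ℂ) (r : ℝ) (c : ℂ) : ℝ := (1 / r) * bdryInt c r fun x => ‖u x‖ ^ 2

/-- The Almgren frequency `N = E/H`. -/
def Nfun (a : ℂ) (u : ℂ → ℂ) (r : ℝ) (c : ℂ) (lam : ℝ) (p : ℂ → ℝ) : ℝ :=
  Efun a u r c lam p / Hfun u r c

/-- The Pohozaev boundary integrand at a point `x` with unit normal `ν = (ν₁,ν₂)`:
`Re[(i∇+A_a)φ·ν · conj((i∇+A_a)φ·(x−π(a)))] − (1/2)|(i∇+A_a)φ|² (x−π(a))·ν`. -/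
def pohoIntegrand (a : ℂ) (φ : ℂ → ℂ) (x : ℂ) (ν1 ν2 : ℝ) : ℝ :=
  ((mg1 a φ x * (ν1 : ℂ) + mg2 a φ x * (ν2 : ℂ)) *
      (starRingEnd ℂ) (mg1 a φ x * (((x - proj a).re : ℝ) : ℂ) +
        mg2 a φ x * (((x - proj a).im : ℝ) : ℂ))).re -
    (1 / 2) * mgSq a φ x * ((x - proj a).re * ν1 + (x - proj a).im * ν2)

/-- The integral over the full circle `∂D_ε(a)` whose limit as `ε → 0⁺` defines the
Pohozaev remainder `M_a`. -/
def pohoBdry (a : ℂ) (φ : ℂ → ℂ) (ε : ℝ) : ℝ :=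
  ∫ θ in Ioc 0 (2 * π), ε * pohoIntegrand a φ (circleMap a ε θ) (Real.cos θ) (Real.sin θ)

/-- The model half-integer homogeneous function
`e^{iθ_a/2}|x−a|^{1/2}( c₁ cos(θ_a/2) + d₁ sin(θ_a/2) )`, written in the branch-free form
`|x−a|^{1/2}( c₁(1+ω)/2 + d₁(ω−1)/(2i) )` with `ω = (x−a)/|x−a|`. -/
def modelHalf (a : ℂ) (c₁ d₁ : ℝ) (x : ℂ) : ℂ :=
  (Real.sqrt ‖x - a‖ : ℂ) *
    ((c₁ : ℂ) * (1 + (x - a) / (‖x - a‖ : ℂ)) / 2 +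
      (d₁ : ℂ) * ((x - a) / (‖x - a‖ : ℂ) - 1) / (2 * Complex.I))

/-! ### Frequency inequalities in one variable -/

section

/-- Monotonicity from a nonnegative derivative, continuity sufficing at one exceptional point. -/
theorem le_of_deriv_nonneg_off {f f' : ℝ → ℝ} {α x y : ℝ} (hxy : x ≤ y)
    (hc : ContinuousOn f (Icc x y))
    (hd : ∀ s ∈ Ioo x y, s ≠ α → HasDerivAt f (f' s) s ∧ 0 ≤ f' s) : f x ≤ f y := by
  have key : ∀ u v, x ≤ u → u ≤ v → v ≤ y → (∀ s ∈ Ioo u v, s ≠ α) → f u ≤ f v := by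
    intro u v hu huv hv hne
    have hm : MonotoneOn f (Icc u v) := by
      apply monotoneOn_of_hasDerivWithinAt_nonneg (f' := f') (convex_Icc u v)
        (hc.mono (Icc_subset_Icc hu hv))
      · intro s hs
        rw [interior_Icc] at hs
        exact (hd s ⟨lt_of_le_of_lt hu hs.1, lt_of_lt_of_le hs.2 hv⟩ (hne s hs)).1.hasDerivWithinAt
      · intro s hs
        rw [interior_Icc] at hs
        exact (hd s ⟨lt_of_le_of_lt hu hs.1, lt_of_lt_of_le hs.2 hv⟩ (hne s hs)).2
    exact hm ⟨le_rfl, huv⟩ ⟨huv, le_rfl⟩ huv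
  by_cases hα : x ≤ α ∧ α ≤ y
  · exact (key x α le_rfl hα.1 hα.2 (fun s hs => hs.2.ne)).trans
      (key α y hα.1 hα.2 le_rfl (fun s hs => hs.1.ne'))
  · apply key x y le_rfl hxy le_rfl
    rintro s hs rfl
    exact hα ⟨hs.1.le, hs.2.le⟩

/-- The inequalities satisfied by the height `H`, the energy `e` (half the derivative of `H`) and
the radial, angular and zeroth-order boundary terms `a`, `b`, `c`, as functions of `s = log r`.
Here `α` and `σ` are the logarithms of the pole radius and of the outer radius, and `Λ e^{2s}` is the
size of the lower-order errors. Differentiability is not asked for at `s = α`. -/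
structure FreqData (α σ Λ : ℝ) (H e a b c : ℝ → ℝ) : Prop where
  Λpos : 0 < Λ
  small : Λ * exp (2 * σ) ≤ 1 / 1000
  hσ : α + log 2 < σ
  Hc : ContinuousOn H (Iio σ)
  ec : ContinuousOn e (Iio σ)
  dH : ∀ s < σ, s ≠ α → HasDerivAt H (2 * e s) s
  de : ∀ s < σ, s ≠ α → HasDerivAt e (a s + b s - c s) s
  a0 : ∀ s < σ, s ≠ α → 0 ≤ a s
  c0 : ∀ s < σ, s ≠ α → 0 ≤ c s
  c1 : ∀ s < σ, s ≠ α → c s ≤ Λ * exp (2 * s) * H s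
  bH : ∀ s < σ, s ≠ α → H s ≤ b s
  CS : ∀ s < σ, s ≠ α → e s ^ 2 ≤ a s * H s
  H0 : ∀ s < σ, 0 ≤ H s
  Hbot : Tendsto H atBot (nhds 0)

namespace FreqData
variable {α σ Λ : ℝ} {H e a b c : ℝ → ℝ}

theorem eps_le (D : FreqData α σ Λ H e a b c) {s : ℝ} (hs : s ≤ σ) :
    Λ * exp (2 * s) ≤ 1 / 1000 := by
  refine le_trans ?_ D.small
  have := D.Λpos
  gcongr

theorem eps_pos (D : FreqData α σ Λ H e a b c) (s : ℝ) : 0 < Λ * exp (2 * s) :=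
  mul_pos D.Λpos (exp_pos _)

theorem eps_mono (D : FreqData α σ Λ H e a b c) {s t : ℝ} (h : s ≤ t) :
    Λ * exp (2 * s) ≤ Λ * exp (2 * t) := by
  have := D.Λpos
  gcongr

theorem eps_deriv (Λ s : ℝ) :
    HasDerivAt (fun s => Λ * exp (2 * s)) (2 * (Λ * exp (2 * s))) s := by
  have h : HasDerivAt (fun s : ℝ => 2 * s) 2 s := by simpa using (hasDerivAt_id s).const_mul 2
  have h2 := (h.exp).const_mul Λ
  rwa [show Λ * (exp (2 * s) * 2) = 2 * (Λ * exp (2 * s)) by ring] at h2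

/-- `N ≥ 1 - Λe^{2s}`: with `ν` the right-hand side, `e - νH` is nondecreasing up to `s`, and it
cannot be negative because `H` tends to `0` at `-∞`. -/
theorem e_ge (D : FreqData α σ Λ H e a b c) {s : ℝ} (hs : s < σ) :
    (1 - Λ * exp (2 * s)) * H s ≤ e s := by
  set ν := 1 - Λ * exp (2 * s) with hν
  have hε := D.eps_le hs.le
  have hε0 := D.eps_pos s
  have mono : ∀ x y, x ≤ y → y ≤ s → e x - ν * H x ≤ e y - ν * H y := by
    intro x y hxy hy
    have hsub : Icc x y ⊆ Iio σ := fun t ht => lt_of_le_of_lt (ht.2.trans hy) hs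
    refine le_of_deriv_nonneg_off (f := fun t => e t - ν * H t)
      (f' := fun t => a t + b t - c t - ν * (2 * e t)) (α := α) hxy
      ((D.ec.mono hsub).sub ((D.Hc.mono hsub).const_smul ν)) ?_
    intro t ht hne
    have hts : t ≤ s := ht.2.le.trans hy
    have htσ : t < σ := lt_of_le_of_lt hts hs
    refine ⟨(D.de t htσ hne).sub ((D.dH t htσ hne).const_mul ν), ?_⟩
    have h1 := D.a0 t htσ hne
    have h2 := D.c1 t htσ hne
    have h3 := D.bH t htσ hne
    have h4 := D.CS t htσ hne
    have h5 := D.H0 t htσ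
    have h6 := D.eps_mono hts
    have h7 : 0 ≤ a t - 2 * ν * e t + ν ^ 2 * H t := by
      rcases h5.eq_or_lt with h0 | h0
      · rw [← h0] at h4 ⊢
        have : e t = 0 := by nlinarith
        rw [this]; linarith
      · have : 0 ≤ (a t - 2 * ν * e t + ν ^ 2 * H t) * H t := by
          nlinarith [sq_nonneg (e t - ν * H t)]
        exact nonneg_of_mul_nonneg_left this h0
    have h8 : (Λ * exp (2 * t)) * H t ≤ (Λ * exp (2 * s)) * H t := by gcongr
    have h9 : ν ^ 2 * H t ≤ ν * H t := by
      apply mul_le_mul_of_nonneg_right _ h5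
      nlinarith
    simp only [hν] at *
    nlinarith
  by_contra hlt
  push Not at hlt
  set δ := ν * H s - e s with hδ
  have hδ0 : 0 < δ := by linarith
  obtain ⟨x, hx⟩ := eventually_atBot.1 (D.Hbot.eventually (gt_mem_nhds (show (0:ℝ) < δ / 2 by linarith)))
  set x1 := min (min x s) (α - 1) with hx1
  have hx1x : x1 ≤ x := (min_le_left _ _).trans (min_le_left _ _)
  have hx1s : x1 ≤ s := (min_le_left _ _).trans (min_le_right _ _)
  have hx1α : x1 ≤ α - 1 := min_le_right _ _
  have hgrow : ∀ y ≤ x1, H x1 + δ * (x1 - y) ≤ H y := by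
    intro y hy
    have hsub : Icc y x1 ⊆ Iio σ := fun t ht => lt_of_le_of_lt (ht.2.trans hx1s) hs
    have := le_of_deriv_nonneg_off (f := fun t => -(H t) - δ * t)
      (f' := fun t => -(2 * e t) - δ * 1) (α := α) hy
      (((D.Hc.mono hsub).neg).sub ((continuous_const.mul continuous_id).continuousOn)) ?_
    · linarith
    · intro t ht hne
      have hts : t ≤ s := ht.2.le.trans hx1s
      refine ⟨((D.dH t (lt_of_le_of_lt hts hs) hne).neg).sub ((hasDerivAt_id t).const_mul δ), ?_⟩
      have h1 := mono t s hts le_rfl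
      have h2 := hx t (ht.2.le.trans hx1x)
      have h3 := D.H0 t (lt_of_le_of_lt hts hs)
      nlinarith
  have h1 := hgrow (x1 - 1) (by linarith)
  have h2 := hx (x1 - 1) (by linarith)
  have h3 := D.H0 x1 (lt_of_le_of_lt hx1s hs)
  nlinarith

theorem e_nonneg (D : FreqData α σ Λ H e a b c) {s : ℝ} (hs : s < σ) : 0 ≤ e s := by
  have h := D.e_ge hs
  have h1 := D.eps_le hs.le
  have h2 := D.H0 s hs
  nlinarith

theorem de_nonneg (D : FreqData α σ Λ H e a b c) {s : ℝ} (hs : s < σ) (hne : s ≠ α) :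
    0 ≤ a s + b s - c s := by
  have h1 := D.eps_le hs.le
  have h2 := D.H0 s hs
  have := D.a0 s hs hne
  have := D.c1 s hs hne
  have := D.bH s hs hne
  nlinarith

theorem e_mono (D : FreqData α σ Λ H e a b c) {x y : ℝ} (hxy : x ≤ y) (hy : y < σ) : e x ≤ e y :=
  le_of_deriv_nonneg_off (α := α) hxy (D.ec.mono fun _ ht => lt_of_le_of_lt ht.2 hy)
    fun s hs hne => ⟨D.de s (hs.2.trans hy) hne, D.de_nonneg (hs.2.trans hy) hne⟩

theorem H_mono (D : FreqData α σ Λ H e a b c) {x y : ℝ} (hxy : x ≤ y) (hy : y < σ) : H x ≤ H y :=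
  le_of_deriv_nonneg_off (α := α) hxy (D.Hc.mono fun _ ht => lt_of_le_of_lt ht.2 hy)
    fun s hs hne => ⟨D.dH s (hs.2.trans hy) hne, by
      have := D.e_nonneg (hs.2.trans hy); linarith⟩

theorem e_tendsto (D : FreqData α σ Λ H e a b c) : Tendsto e atBot (nhds 0) := by
  have hlt : ∀ s ≤ α, s < σ := fun s hs => by
    have := D.hσ; have := log_pos (one_lt_two); linarith
  have key : ∀ s ≤ α - 1, 2 * e (s - 1) ≤ H s := by
    intro s hs
    have hsub : Icc (s - 1) s ⊆ Iio σ := fun t ht => hlt t (by linarith [ht.2])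
    have := le_of_deriv_nonneg_off (f := fun t => H t - 2 * e (s - 1) * t)
      (f' := fun t => 2 * e t - 2 * e (s - 1) * 1) (α := α) (by linarith : s - 1 ≤ s)
      ((D.Hc.mono hsub).sub ((continuous_const.mul continuous_id).continuousOn)) ?_
    · have h2 := D.H0 (s - 1) (hlt _ (by linarith))
      linarith
    · intro t ht hne
      have htσ := hsub ⟨ht.1.le, ht.2.le⟩
      refine ⟨(D.dH t htσ hne).sub ((hasDerivAt_id t).const_mul _), ?_⟩
      have := D.e_mono ht.1.le htσ
      linarith
  have h2 : Tendsto (fun s => H (s + 1) / 2) atBot (nhds 0) := by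
    simpa using (D.Hbot.comp (tendsto_atBot_add_const_right atBot 1 tendsto_id)).div_const 2
  refine tendsto_of_tendsto_of_tendsto_of_le_of_le' tendsto_const_nhds h2 ?_ ?_
  · filter_upwards [eventually_le_atBot α] with s hs using D.e_nonneg (hlt s hs)
  · filter_upwards [eventually_le_atBot (α - 2)] with s hs
    have := key (s + 1) (by linarith)
    simp only [add_sub_cancel_right] at this
    linarith

end FreqData

end

section

/-- `FreqData` together with the near-constancy, beyond the pole, of the Pohozaev defect
`Φ = a - b + c`, and the positivity of `H` there. -/
structure PoleData (α σ Λ : ℝ) (H e a b c : ℝ → ℝ) : Prop extends FreqData α σ Λ H e a b c where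
  Hpos : ∀ s, α < s → s < σ → 0 < H s
  dΦ : ∀ s, α < s → s < σ → ∃ d, HasDerivAt (fun t => a t - b t + c t) d s ∧
    |d| ≤ 3 * (Λ * exp (2 * s)) * H s

namespace PoleData
variable {α σ Λ : ℝ} {H e a b c : ℝ → ℝ}

theorem phi_anti (D : PoleData α σ Λ H e a b c) {x y : ℝ} (hx : α < x) (hxy : x ≤ y) (hy : y < σ) :
    (a y - b y + c y) - 3 / 2 * (Λ * exp (2 * y)) * H y ≤
      (a x - b x + c x) - 3 / 2 * (Λ * exp (2 * x)) * H x := by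
  choose! d hd using D.dΦ
  have hder : ∀ s ∈ Icc x y, HasDerivAt
      (fun t => 3 / 2 * (Λ * exp (2 * t)) * H t - (a t - b t + c t))
      (3 / 2 * (2 * (Λ * exp (2 * s))) * H s + 3 / 2 * (Λ * exp (2 * s)) * (2 * e s) - d s) s :=
    fun s hs => (((FreqData.eps_deriv Λ s).const_mul (3 / 2)).mul
      (D.dH s (lt_of_le_of_lt hs.2 hy) (lt_of_lt_of_le hx hs.1).ne')).sub
      (hd s (lt_of_lt_of_le hx hs.1) (lt_of_le_of_lt hs.2 hy)).1
  have := le_of_deriv_nonneg_off (α := α) hxy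
    (fun s hs => (hder s hs).continuousAt.continuousWithinAt)
    (fun s hs _ => ⟨hder s ⟨hs.1.le, hs.2.le⟩, by
      have h1 := (abs_le.1 (hd s (hx.trans hs.1) (hs.2.trans hy)).2).2
      have h2 := mul_nonneg (D.eps_pos s).le (D.e_nonneg (hs.2.trans hy))
      nlinarith⟩)
  linarith

theorem phi_mono (D : PoleData α σ Λ H e a b c) {x y : ℝ} (hx : α < x) (hxy : x ≤ y) (hy : y < σ) :
    (a x - b x + c x) + 3 / 2 * (Λ * exp (2 * x)) * H x ≤
      (a y - b y + c y) + 3 / 2 * (Λ * exp (2 * y)) * H y := by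
  choose! d hd using D.dΦ
  have hder : ∀ s ∈ Icc x y, HasDerivAt
      (fun t => 3 / 2 * (Λ * exp (2 * t)) * H t + (a t - b t + c t))
      (3 / 2 * (2 * (Λ * exp (2 * s))) * H s + 3 / 2 * (Λ * exp (2 * s)) * (2 * e s) + d s) s :=
    fun s hs => (((FreqData.eps_deriv Λ s).const_mul (3 / 2)).mul
      (D.dH s (lt_of_le_of_lt hs.2 hy) (lt_of_lt_of_le hx hs.1).ne')).add
      (hd s (lt_of_lt_of_le hx hs.1) (lt_of_le_of_lt hs.2 hy)).1
  have := le_of_deriv_nonneg_off (α := α) hxy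
    (fun s hs => (hder s hs).continuousAt.continuousWithinAt)
    (fun s hs _ => ⟨hder s ⟨hs.1.le, hs.2.le⟩, by
      have h1 := (abs_le.1 (hd s (hx.trans hs.1) (hs.2.trans hy)).2).1
      have h2 := mul_nonneg (D.eps_pos s).le (D.e_nonneg (hs.2.trans hy))
      nlinarith⟩)
  linarith

/-- The energy gained between `α` and `s` is at least `s - α` times the defect, up to errors. -/
theorem phi_le_e (D : PoleData α σ Λ H e a b c) {s : ℝ} (hs : α < s) (hsσ : s < σ) :
    (s - α) * ((a s - b s + c s) - 3 / 2 * (Λ * exp (2 * s)) * H s) ≤ e s := by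
  set K := (a s - b s + c s) - 3 / 2 * (Λ * exp (2 * s)) * H s with hK
  have := le_of_deriv_nonneg_off (f := fun t => e t - K * t)
    (f' := fun t => a t + b t - c t - K * 1) (α := α) hs.le
    ((D.ec.mono fun t ht => lt_of_le_of_lt ht.2 hsσ).sub
      ((continuous_const.mul continuous_id).continuousOn)) ?_
  · have h0 := D.e_nonneg (hs.trans hsσ)
    nlinarith
  · intro t ht hne
    have htσ := ht.2.trans hsσ
    refine ⟨(D.de t htσ hne).sub ((hasDerivAt_id t).const_mul K), ?_⟩
    have h1 := D.phi_anti ht.1 ht.2.le hsσ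
    have h2 := D.c1 t htσ hne
    have h3 := D.bH t htσ hne
    have h4 := D.eps_le htσ.le
    have h5 := D.H0 t htσ
    have h6 := mul_nonneg (D.eps_pos t).le h5
    nlinarith

theorem e_pos (D : PoleData α σ Λ H e a b c) {s : ℝ} (hs : α < s) (hsσ : s < σ) : 0 < e s := by
  have h := D.e_ge hsσ
  have h1 := D.eps_le hsσ.le
  have h2 := D.Hpos s hs hsσ
  nlinarith

theorem N_ge (D : PoleData α σ Λ H e a b c) {s : ℝ} (hs : α < s) (hsσ : s < σ) :
    999 / 1000 ≤ e s / H s := by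
  have h := D.e_ge hsσ
  have h1 := D.eps_le hsσ.le
  have h2 := D.Hpos s hs hsσ
  rw [le_div_iff₀ h2]
  nlinarith

/-- `(log N)' ≥ -Φ/e`, by Cauchy–Schwarz. -/
theorem logN_deriv (D : PoleData α σ Λ H e a b c) {s : ℝ} (hs : α < s) (hsσ : s < σ) :
    ∃ d, HasDerivAt (fun t => log (e t / H t)) d s ∧ -(a s - b s + c s) / e s ≤ d := by
  have he := D.e_pos hs hsσ
  have hH := D.Hpos s hs hsσ
  have h := ((D.de s hsσ hs.ne').div (D.dH s hsσ hs.ne') hH.ne').log (div_pos he hH).ne'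
  refine ⟨_, h, ?_⟩
  have h4 := D.CS s hsσ hs.ne'
  simp only [Pi.div_apply]
  have h5 : ((a s + b s - c s) * H s - e s * (2 * e s)) / H s ^ 2 / (e s / H s)
      = ((a s + b s - c s) * H s - e s * (2 * e s)) / (e s * H s) := by
    field_simp
  rw [h5, div_le_div_iff₀ he (mul_pos he hH)]
  nlinarith

theorem N_deriv (D : PoleData α σ Λ H e a b c) {s : ℝ} (hs : α < s) (hsσ : s < σ) :
    ∃ d, HasDerivAt (fun t => e t / H t) d s ∧ -(a s - b s + c s) / H s ≤ d := by
  have hH := D.Hpos s hs hsσ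
  have h := ((D.de s hsσ hs.ne').div (D.dH s hsσ hs.ne') hH.ne')
  refine ⟨_, h, ?_⟩
  have h4 := D.CS s hsσ hs.ne'
  rw [div_le_div_iff₀ hH (by positivity)]
  nlinarith

/-- If `Φ/e ≤ q' + 2Λe^{2s}` then `log N + q + Λe^{2s}` is nondecreasing. -/
theorem logN_mono_of (D : PoleData α σ Λ H e a b c) {q q' : ℝ → ℝ} {x y : ℝ} (hx : α < x)
    (hxy : x ≤ y) (hy : y < σ) (hq : ∀ s ∈ Icc x y, HasDerivAt q (q' s) s)
    (hle : ∀ s ∈ Icc x y, (a s - b s + c s) / e s ≤ q' s + 2 * (Λ * exp (2 * s))) :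
    log (e x / H x) + q x + Λ * exp (2 * x) ≤ log (e y / H y) + q y + Λ * exp (2 * y) := by
  have hN : ∀ s ∈ Icc x y, ∃ d, HasDerivAt (fun t => log (e t / H t)) d s ∧
    -(a s - b s + c s) / e s ≤ d := fun s hs =>
      D.logN_deriv (lt_of_lt_of_le hx hs.1) (lt_of_le_of_lt hs.2 hy)
  choose! d hd using hN
  have hder : ∀ s ∈ Icc x y, HasDerivAt
      (fun t => log (e t / H t) + q t + Λ * exp (2 * t)) (d s + q' s + 2 * (Λ * exp (2 * s))) s :=
    fun s hs => ((hd s hs).1.add (hq s hs)).add (FreqData.eps_deriv Λ s)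
  exact le_of_deriv_nonneg_off (α := α) hxy
    (fun s hs => (hder s hs).continuousAt.continuousWithinAt)
    (fun s hs _ => ⟨hder s ⟨hs.1.le, hs.2.le⟩, by
      have h1 := (hd s ⟨hs.1.le, hs.2.le⟩).2
      have h2 := hle s ⟨hs.1.le, hs.2.le⟩
      rw [neg_div] at h1
      linarith⟩)

/-- `H` grows at least like `e^{2s}` up to a factor, because `N ≥ 1 - Λe^{2s}`. -/
theorem H_growth (D : PoleData α σ Λ H e a b c) {x y : ℝ} (hx : α < x)
    (hxy : x ≤ y) (hy : y < σ) : H x * exp (2 * (y - x)) ≤ 101 / 100 * H y := by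
  have hder : ∀ s ∈ Icc x y, HasDerivAt
      (fun t => log (H t) - 2 * t + Λ * exp (2 * t))
        (2 * e s / H s - 2 * 1 + 2 * (Λ * exp (2 * s))) s :=
    fun s hs => (((D.dH s (lt_of_le_of_lt hs.2 hy) (lt_of_lt_of_le hx hs.1).ne').log
      (D.Hpos s (lt_of_lt_of_le hx hs.1) (lt_of_le_of_lt hs.2 hy)).ne').sub
        ((hasDerivAt_id s).const_mul 2)).add (FreqData.eps_deriv Λ s)
  have h := le_of_deriv_nonneg_off (α := α) hxy
    (fun s hs => (hder s hs).continuousAt.continuousWithinAt)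
    (fun s hs _ => ⟨hder s ⟨hs.1.le, hs.2.le⟩, by
      have h1 := D.e_ge (hs.2.trans hy)
      have h2 := D.Hpos s (hx.trans hs.1) (hs.2.trans hy)
      have h3 : 1 - Λ * exp (2 * s) ≤ e s / H s := by rwa [le_div_iff₀ h2]
      rw [mul_div_assoc]
      linarith⟩)
  have hHx := D.Hpos x hx (lt_of_le_of_lt hxy hy)
  have hHy := D.Hpos y (lt_of_lt_of_le hx hxy) hy
  have h1 := D.eps_pos x
  have h2 := D.eps_le hy.le
  have h3 : log (H x) + 2 * (y - x) ≤ 1 / 1000 + log (H y) := by linarith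
  calc H x * exp (2 * (y - x)) = exp (log (H x) + 2 * (y - x)) := by
        rw [exp_add, exp_log hHx]
    _ ≤ exp (1 / 1000 + log (H y)) := exp_le_exp.2 h3
    _ = exp (1 / 1000) * H y := by rw [exp_add, exp_log hHy]
    _ ≤ 101 / 100 * H y := by
        have h5 : exp (1 / 1000 : ℝ) ≤ 101 / 100 := by
          have := Real.exp_bound_div_one_sub_of_interval (x := 1 / 1000) (by norm_num) (by norm_num)
          exact this.trans (by norm_num)
        gcongr

/-- Almost monotonicity of `N` at distance at least `log 2` from the pole: the defect is at most
`(3/2)e` up to errors, and decays relative to `e` since `H` grows like `e^{2s}`. -/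
theorem far_mono (D : PoleData α σ Λ H e a b c) {s s' : ℝ} (hs : α + log 2 ≤ s) (hss : s ≤ s')
    (hs' : s' < σ) :
    log (e s / H s) ≤ log (e s' / H s') + 3 / 2 * exp 7 * exp (-2 * (s - (α + log 2))) +
      Λ * exp (2 * s') := by
  have hl2 : (2:ℝ) / 3 ≤ log 2 := by have := Real.log_two_gt_d9; linarith
  set s₁ := α + log 2 with hs₁
  have hα1 : α < s₁ := by linarith
  have h1σ : s₁ < σ := by linarith
  have hN1 := D.N_ge hα1 h1σ
  -- `phi_le_e` at distance at least `log 2 ≥ 2/3` from the pole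
  have crude : ∀ t ∈ Icc s₁ s', (a t - b t + c t) ≤ 3 / 2 * e t + 3 / 2 * (Λ * exp (2 * t)) * H t := by
    intro t ht
    have htσ : t < σ := lt_of_le_of_lt ht.2 hs'
    have h1 := D.phi_le_e (lt_of_lt_of_le hα1 ht.1) htσ
    have he := D.e_nonneg htσ
    set K := a t - b t + c t - 3 / 2 * (Λ * exp (2 * t)) * H t with hK
    have : K ≤ 3 / 2 * e t := by
      by_contra hcon
      push Not at hcon
      have : 2 / 3 * K ≤ (t - α) * K := by
        apply mul_le_mul_of_nonneg_right _ (by linarith)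
        linarith [ht.1]
      linarith
    linarith
  have small : ∀ t ∈ Icc s₁ s', 3 / 2 * (Λ * exp (2 * t)) * H t ≤ 2 * (Λ * exp (2 * t)) * e t := by
    intro t ht
    have htσ : t < σ := lt_of_le_of_lt ht.2 hs'
    have h1 := D.e_ge htσ
    have h2 := D.eps_le htσ.le
    have h3 := D.eps_pos t
    have h4 := D.H0 t htσ
    have : 3 / 2 * H t ≤ 2 * e t := by nlinarith
    nlinarith
  have hpos : ∀ t ∈ Icc s₁ s', 0 < e t ∧ 0 < H t := fun t ht =>
    ⟨D.e_pos (lt_of_lt_of_le hα1 ht.1) (lt_of_le_of_lt ht.2 hs'),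
      D.Hpos t (lt_of_lt_of_le hα1 ht.1) (lt_of_le_of_lt ht.2 hs')⟩
  have h11 : s₁ ∈ Icc s₁ s' := ⟨le_rfl, hs.trans hss⟩
  -- `Φ` is nearly constant while `H` grows, so `Φ/e` decays as soon as `N` does not drop
  have refined : ∀ M : ℝ, ∀ t ∈ Icc s₁ s', 0 ≤ M → e s₁ / H s₁ ≤ M * (e t / H t) →
      (a t - b t + c t) / e t ≤ 101 / 100 * (3 / 2) * M * exp (-2 * (t - s₁)) +
        2 * (Λ * exp (2 * t)) := by
    intro M t ht hM hMN
    have htσ : t < σ := lt_of_le_of_lt ht.2 hs'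
    obtain ⟨he, hH⟩ := hpos t ht
    obtain ⟨he1, hH1⟩ := hpos s₁ h11
    rw [div_le_iff₀ he]
    have h1 := D.phi_anti hα1 ht.1 htσ
    have h2 := crude s₁ h11
    have h3 := small t ht
    have h4 := D.H_growth hα1 ht.1 htσ
    have h5 : e s₁ ≤ M * (e t / H t) * H s₁ := by rwa [div_le_iff₀ hH1] at hMN
    have h6 : H s₁ ≤ 101 / 100 * H t * exp (-2 * (t - s₁)) := by
      have h7 : H s₁ = H s₁ * exp (2 * (t - s₁)) * exp (-2 * (t - s₁)) := by
        rw [mul_assoc, ← exp_add]; ring_nf; simp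
      rw [h7]
      exact mul_le_mul_of_nonneg_right h4 (exp_pos _).le
    have h8 : M * (e t / H t) * H s₁ ≤ M * (e t / H t) * (101 / 100 * H t * exp (-2 * (t - s₁))) := by
      gcongr
    have h9 : M * (e t / H t) * (101 / 100 * H t * exp (-2 * (t - s₁)))
        = 101 / 100 * M * exp (-2 * (t - s₁)) * e t := by
      field_simp
    have h10 := mul_pos (D.eps_pos s₁) hH1
    nlinarith
  have hεs : ∀ t ∈ Icc s₁ s', Λ * exp (2 * t) ≤ 1 / 1000 := fun t ht =>
    D.eps_le (ht.2.trans hs'.le)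
  have hexp : exp (1 / 1000 : ℝ) ≤ 101 / 100 := by
    have := Real.exp_bound_div_one_sub_of_interval (x := 1 / 1000) (by norm_num) (by norm_num)
    exact this.trans (by norm_num)
  -- by the crude bound, `N` drops at most like `e^{-(3/2)(t - s₁)}`
  have c1 : ∀ t ∈ Icc s₁ s', e s₁ / H s₁ ≤ (101 / 100 * exp (3 / 2 * (t - s₁))) * (e t / H t) := by
    intro t ht
    obtain ⟨he, hH⟩ := hpos t ht
    obtain ⟨he1, hH1⟩ := hpos s₁ h11
    have h := D.logN_mono_of (q := fun t => 3 / 2 * t) (q' := fun _ => 3 / 2 * 1) hα1 ht.1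
      (lt_of_le_of_lt ht.2 hs') (fun s _ => (hasDerivAt_id s).const_mul _) (by
        intro u hu
        have hu' : u ∈ Icc s₁ s' := ⟨hu.1, hu.2.trans ht.2⟩
        rw [div_le_iff₀ (hpos u hu').1]
        linarith [crude u hu', small u hu'])
    have h0 := D.eps_pos s₁
    have h2 := hεs t ht
    have h3 : log (e s₁ / H s₁) ≤ 1 / 1000 + 3 / 2 * (t - s₁) + log (e t / H t) := by
      linarith
    have := exp_le_exp.2 h3
    rw [exp_log (div_pos he1 hH1), exp_add, exp_add, exp_log (div_pos he hH)] at this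
    refine this.trans ?_
    gcongr
  have hdexp : ∀ k m s : ℝ, HasDerivAt (fun t => k * exp (m * (t - s₁)))
      (k * m * exp (m * (s - s₁))) s := by
    intro k m s
    have h : HasDerivAt (fun t : ℝ => m * (t - s₁)) (m * 1) s :=
      ((hasDerivAt_id s).sub_const s₁).const_mul m
    have h2 := (h.exp).const_mul k
    rwa [show k * (exp (m * (s - s₁)) * (m * 1)) = k * m * exp (m * (s - s₁)) by ring] at h2
  -- fed into the refined bound, which becomes integrable, this shows a uniformly bounded drop
  have c2 : ∀ t ∈ Icc s₁ s', e s₁ / H s₁ ≤ exp 7 * (e t / H t) := by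
    intro t ht
    obtain ⟨he, hH⟩ := hpos t ht
    obtain ⟨he1, hH1⟩ := hpos s₁ h11
    have h := D.logN_mono_of (q := fun t => -6 * exp (-1 / 2 * (t - s₁)))
      (q' := fun t => -6 * (-1 / 2) * exp (-1 / 2 * (t - s₁))) hα1 ht.1
      (lt_of_le_of_lt ht.2 hs') (fun s _ => hdexp _ _ s) (by
        intro u hu
        have hu' : u ∈ Icc s₁ s' := ⟨hu.1, hu.2.trans ht.2⟩
        have h1 := refined _ u hu' (by positivity) (c1 u hu')
        have h2 : exp (3 / 2 * (u - s₁)) * exp (-2 * (u - s₁)) = exp (-1 / 2 * (u - s₁)) := by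
          rw [← exp_add]; ring_nf
        have h3 := exp_pos (-1 / 2 * (u - s₁))
        have h4 : 101 / 100 * (3 / 2) * (101 / 100 * exp (3 / 2 * (u - s₁))) * exp (-2 * (u - s₁))
          = 101 / 100 * (3 / 2) * (101 / 100) * exp (-1 / 2 * (u - s₁)) := by rw [← h2]; ring
        rw [h4] at h1
        linarith)
    have h0 := D.eps_pos s₁
    have h2 := hεs t ht
    have h4 := exp_pos (-1 / 2 * (t - s₁))
    have h3 : log (e s₁ / H s₁) ≤ 7 + log (e t / H t) := by
      simp only [sub_self, mul_zero, exp_zero] at h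
      linarith
    have := exp_le_exp.2 h3
    rwa [exp_log (div_pos he1 hH1), exp_add, exp_log (div_pos he hH)] at this
  have h := D.logN_mono_of (q := fun t => -(3 / 2 * exp 7) * exp (-2 * (t - s₁)))
      (q' := fun t => -(3 / 2 * exp 7) * (-2) * exp (-2 * (t - s₁))) (lt_of_lt_of_le hα1 hs) hss hs'
      (fun s _ => hdexp _ _ s) (by
        intro u hu
        have hu' : u ∈ Icc s₁ s' := ⟨hs.trans hu.1, hu.2⟩
        have h1 := refined _ u hu' (by positivity) (c2 u hu')
        have h3 := mul_pos (exp_pos 7) (exp_pos (-2 * (u - s₁)))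
        nlinarith)
  have h0 := D.eps_pos s
  have h4 := mul_pos (exp_pos 7) (exp_pos (-2 * (s' - s₁)))
  nlinarith

end PoleData

end

/-! ### One-variable estimates near the pole -/

section

/-- For every slice `s₁` beyond the pole and every scale `L` there is a test flux: `F` is the flux of
the solution against the profile at `s₁` cut off near angle `0` at scale `L`, and `P`, `Q`, `R` stand
for the squared `L²` norms of the test profile, of its derivative, and of the part of the profile
removed by the cutoff. The flux is continuous across the pole, where the cutoff vanishes. -/
def FluxTest (α σ Λ : ℝ) (H e a b : ℝ → ℝ) : Prop :=
  ∀ s₁, α < s₁ → s₁ < σ → ∀ L > 0, ∃ F Fd : ℝ → ℝ, ∃ P Q R : ℝ,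
    0 ≤ P ∧ P ≤ H s₁ ∧ 0 ≤ Q ∧ Q ≤ 2 * b s₁ + 16 * π / L * √(H s₁ * b s₁) ∧
    0 ≤ R ∧ R ≤ 2 * π * L * √(H s₁ * b s₁) ∧ ContinuousOn F (Iio σ) ∧
    (∀ s < σ, s ≠ α → HasDerivAt F (Fd s) s ∧ F s ≤ √(a s) * √P ∧
      Fd s ≤ √(b s) * √Q + Λ * exp (2 * s) * (√(H s) * √P)) ∧
    e s₁ - √(a s₁) * √R ≤ F s₁

theorem sqrt_mul_le_weighted {x y τ : ℝ} (hx : 0 ≤ x) (hy : 0 ≤ y) (hτ : 0 < τ) :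
    √x * √y ≤ τ / 2 * x + y / (2 * τ) := by
  have h1 := sq_sqrt hx
  have h2 := sq_sqrt hy
  have h3 : 0 ≤ (τ * √x - √y) ^ 2 := sq_nonneg _
  have h4 : (τ / 2 * x + y / (2 * τ)) * τ = (τ ^ 2 * x + y) / 2 := by field_simp
  have h5 : (τ * √x - √y) ^ 2 = τ ^ 2 * √x ^ 2 - 2 * (√x * √y * τ) + √y ^ 2 := by ring
  rw [h5, h1, h2] at h3
  have : √x * √y * τ ≤ (τ / 2 * x + y / (2 * τ)) * τ := by linarith
  exact le_of_mul_le_mul_right this hτ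

namespace PoleData
variable {α σ Λ : ℝ} {H e a b c : ℝ → ℝ}

/-- If the defect is nonpositive at `s₀` it stays small, and `N` barely decreases after `s₀`. -/
theorem near_of_nonpos (D : PoleData α σ Λ H e a b c) {s₀ s₁ : ℝ} (h0 : α < s₀) (h01 : s₀ ≤ s₁)
    (h1 : s₁ < σ) (hΦ : a s₀ - b s₀ + c s₀ ≤ 0) : e s₀ / H s₀ ≤ 2 * (e s₁ / H s₁) := by
  have hN : ∀ s ∈ Icc s₀ s₁, ∃ d, HasDerivAt (fun t => e t / H t) d s ∧
    -(a s - b s + c s) / H s ≤ d := fun s hs =>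
      D.N_deriv (lt_of_lt_of_le h0 hs.1) (lt_of_le_of_lt hs.2 h1)
  choose! d hd using hN
  have hder : ∀ s ∈ Icc s₀ s₁, HasDerivAt
      (fun t => e t / H t + Λ * exp (2 * t)) (d s + 2 * (Λ * exp (2 * s))) s :=
    fun s hs => (hd s hs).1.add (FreqData.eps_deriv Λ s)
  have h := le_of_deriv_nonneg_off (α := α) h01
    (fun s hs => (hder s hs).continuousAt.continuousWithinAt)
    (fun s hs _ => ⟨hder s ⟨hs.1.le, hs.2.le⟩, by
      have h2 := (hd s ⟨hs.1.le, hs.2.le⟩).2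
      have h3 := D.phi_anti h0 hs.1.le (hs.2.trans h1)
      have hH := D.Hpos s (h0.trans hs.1) (hs.2.trans h1)
      have hH0 := mul_pos (D.eps_pos s₀) (D.Hpos s₀ h0 (lt_of_le_of_lt h01 h1))
      have h4 : (a s - b s + c s) / H s ≤ 2 * (Λ * exp (2 * s)) := by
        rw [div_le_iff₀ hH]
        have := mul_pos (D.eps_pos s) hH
        nlinarith
      rw [neg_div] at h2
      linarith⟩)
  have h2 := D.N_ge (lt_of_lt_of_le h0 h01) h1
  have h3 := D.eps_le h1.le
  have h4 := D.eps_pos s₀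
  linarith

/-- `N² ≤ Φ/H + 2N(s₁)²` before `s₁`: up to errors, `N² - Φ/H` is nondecreasing. -/
theorem Nsq_le (D : PoleData α σ Λ H e a b c) {s₀ s₁ t : ℝ} (h0 : α < s₀) (h0t : s₀ ≤ t)
    (ht1 : t ≤ s₁) (h1 : s₁ < σ) (hΦ : 0 ≤ a s₀ - b s₀ + c s₀) :
    (e t / H t) ^ 2 ≤ (a t - b t + c t) / H t + 2 * (e s₁ / H s₁) ^ 2 := by
  have hαt : α < t := lt_of_lt_of_le h0 h0t
  have hN : ∀ s ∈ Icc t s₁, ∃ d, HasDerivAt (fun t => e t / H t) d s ∧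
    -(a s - b s + c s) / H s ≤ d := fun s hs =>
      D.N_deriv (lt_of_lt_of_le hαt hs.1) (lt_of_le_of_lt hs.2 h1)
  choose! d hd using hN
  choose! f hf using D.dΦ
  have hder : ∀ s ∈ Icc t s₁, HasDerivAt
      (fun t => (e t / H t) ^ 2 - (a t - b t + c t) / H t + 2 * (Λ * exp (2 * t)))
      (((2 : ℕ) : ℝ) * (e s / H s) ^ (2 - 1) * d s -
        (f s * H s - (a s - b s + c s) * (2 * e s)) / H s ^ 2 + 2 * (2 * (Λ * exp (2 * s)))) s := by
    intro s hs
    have hαs : α < s := lt_of_lt_of_le hαt hs.1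
    have hsσ : s < σ := lt_of_le_of_lt hs.2 h1
    exact (((hd s hs).1.pow 2).sub ((hf s hαs hsσ).1.div (D.dH s hsσ hαs.ne')
      (D.Hpos s hαs hsσ).ne')).add ((FreqData.eps_deriv Λ s).const_mul 2)
  have h := le_of_deriv_nonneg_off (α := α) ht1
    (fun s hs => (hder s hs).continuousAt.continuousWithinAt)
    (fun s hs _ => ⟨hder s ⟨hs.1.le, hs.2.le⟩, by
      have hαs : α < s := hαt.trans hs.1
      have hsσ : s < σ := hs.2.trans h1
      have hH := D.Hpos s hαs hsσ
      have hε := D.eps_pos s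
      have h2 := (hd s ⟨hs.1.le, hs.2.le⟩).2
      have h3 := (abs_le.1 (hf s hαs hsσ).2).2
      have hN := D.N_ge hαs hsσ
      have e1 : (f s * H s - (a s - b s + c s) * (2 * e s)) / H s ^ 2
          = f s / H s + 2 * (e s / H s) * (-(a s - b s + c s) / H s) := by
        field_simp; ring
      have e2 : f s / H s ≤ 3 * (Λ * exp (2 * s)) := by rwa [div_le_iff₀ hH]
      have e3 : (e s / H s) * (-(a s - b s + c s) / H s) ≤ (e s / H s) * d s := by gcongr
      rw [e1]
      simp only [Nat.cast_ofNat, Nat.add_one_sub_one, pow_one]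
      linarith⟩)
  have hN1 := D.N_ge (lt_of_lt_of_le hαt ht1) h1
  have hε1 := D.eps_le h1.le
  have hε := D.eps_pos t
  have hH1 := D.Hpos s₁ (lt_of_lt_of_le hαt ht1) h1
  have h5 : -(3 / 2 * (Λ * exp (2 * s₁))) ≤ (a s₁ - b s₁ + c s₁) / H s₁ := by
    rw [le_div_iff₀ hH1]
    have h6 := D.phi_mono h0 (h0t.trans ht1) h1
    have h7 := mul_pos (D.eps_pos s₀) (D.Hpos s₀ h0 (lt_of_le_of_lt (h0t.trans ht1) h1))
    nlinarith
  nlinarith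

end PoleData

end

section

namespace PoleData
variable {α σ Λ : ℝ} {H e a b c : ℝ → ℝ}

set_option maxHeartbeats 1600000 in
theorem near_of_pos (D : PoleData α σ Λ H e a b c) (T : FluxTest α σ Λ H e a b) {s₀ : ℝ}
    (h0 : α < s₀) (h01 : s₀ ≤ α + log 2) (hΦ : 0 < a s₀ - b s₀ + c s₀) :
    a s₀ - b s₀ + c s₀ ≤ 10 ^ 32 * (e (α + log 2) / H (α + log 2)) ^ 2 * H s₀ := by
  have hl2 : (2:ℝ) / 3 ≤ log 2 := by have := Real.log_two_gt_d9; linarith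
  set s₁ := α + log 2 with hs₁
  have h1 : s₁ < σ := D.hσ
  have h0σ : s₀ < σ := lt_of_le_of_lt h01 h1
  set N₁ := e s₁ / H s₁ with hN₁
  have hN1 : 999 / 1000 ≤ N₁ := D.N_ge (lt_of_lt_of_le h0 h01) h1
  by_contra hcon
  push Not at hcon
  set g2 := a s₀ - b s₀ + c s₀ with hg2
  set g := √g2 with hg
  have hgg : g ^ 2 = g2 := sq_sqrt hΦ.le
  have hg0 : 0 < g := sqrt_pos.2 hΦ
  have hH0 := D.Hpos s₀ h0 h0σ
  set L := 1 / 10 ^ 8 / N₁ with hL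
  have hL0 : 0 < L := by positivity
  have hNL : N₁ * L = 1 / 10 ^ 8 := by rw [hL]; field_simp
  have hLle : L ≤ 101 / 100 / 10 ^ 8 := by
    rw [hL, div_le_div_iff₀ (by linarith) (by norm_num)]; linarith
  -- under the contrary assumption `H(s₀)` is negligible at the scale `(gL)²`, with `g = √Φ(s₀)`
  have hG0 : √(H s₀) ≤ 1 / 10 ^ 8 * (g * L) := by
    apply sqrt_le_iff.2 ⟨by positivity, ?_⟩
    have : (1 / 10 ^ 8 * (g * L)) ^ 2 = 1 / 10 ^ 32 * g2 / N₁ ^ 2 := by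
      rw [hL, ← hgg]; field_simp
    rw [this, le_div_iff₀ (by positivity)]
    linarith
  clear_value L g
  have hG00 : 0 < √(H s₀) := sqrt_pos.2 hH0
  have hsqH : ∀ t, α < t → t < σ → √(H t) ^ 2 = H t ∧ 0 < √(H t) := fun t h h' =>
    ⟨sq_sqrt (D.Hpos t h h').le, sqrt_pos.2 (D.Hpos t h h')⟩
  have hgL : 0 < g * L := by positivity
  have hV : g2 * L = g * (g * L) := by rw [← hgg]; ring
  have hV0 : 0 < g2 * L := by positivity
  -- from `Nsq_le`, as `Φ` stays close to `g²`
  have e_up : ∀ t, s₀ ≤ t → t ≤ s₁ → e t ≤ g * √(H t) + 2 * N₁ * H t := by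
    intro t ht0 ht1
    have hαt : α < t := lt_of_lt_of_le h0 ht0
    have htσ : t < σ := lt_of_le_of_lt ht1 h1
    have hH := D.Hpos t hαt htσ
    obtain ⟨hq, hq0⟩ := hsqH t hαt htσ
    have hN := D.Nsq_le h0 ht0 ht1 h1 hΦ.le
    have hP := D.phi_anti h0 ht0 htσ
    have hε := D.eps_le htσ.le
    have hε0 := mul_pos (D.eps_pos s₀) hH0
    have hN' : e t ^ 2 ≤ (a t - b t + c t) * H t + 2 * N₁ ^ 2 * H t ^ 2 := by
      have : e t ^ 2 = (e t / H t) ^ 2 * H t ^ 2 := by field_simp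
      rw [this]
      calc (e t / H t) ^ 2 * H t ^ 2 ≤ ((a t - b t + c t) / H t + 2 * N₁ ^ 2) * H t ^ 2 := by gcongr
        _ = _ := by field_simp
    have hΦt : a t - b t + c t ≤ g2 + N₁ ^ 2 * H t := by
      have : 3 / 2 * (Λ * exp (2 * t)) ≤ N₁ ^ 2 := by
        have : (999 / 1000) ^ 2 ≤ N₁ ^ 2 := by gcongr
        linarith
      have := mul_le_mul_of_nonneg_right this hH.le
      linarith
    have : e t ^ 2 ≤ (g * √(H t) + 2 * N₁ * H t) ^ 2 := by
      have h3 : (g * √(H t) + 2 * N₁ * H t) ^ 2 = g2 * H t + 4 * N₁ * g * √(H t) * H t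
          + 4 * N₁ ^ 2 * H t ^ 2 := by
        rw [← hgg]
        have : (g * √(H t) + 2 * N₁ * H t) ^ 2 = g ^ 2 * √(H t) ^ 2 + 4 * N₁ * g * √(H t) * H t
          + 4 * N₁ ^ 2 * H t ^ 2 := by ring
        rw [this, hq]
      have h4 : 0 ≤ 4 * N₁ * g * √(H t) * H t := by positivity
      have h5 : 0 ≤ N₁ ^ 2 * H t ^ 2 := by positivity
      have h6 : (a t - b t + c t) * H t ≤ (g2 + N₁ ^ 2 * H t) * H t := by gcongr
      rw [h3]
      linarith
    exact le_of_sq_le_sq this (by positivity)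
  have he0 : e s₀ ≤ 102 / 100 / 10 ^ 8 * (g2 * L) := by
    have h := e_up s₀ le_rfl h01
    obtain ⟨hq, hq0⟩ := hsqH s₀ h0 h0σ
    have h3 : g * √(H s₀) ≤ g * (1 / 10 ^ 8 * (g * L)) := by gcongr
    have h4 : √(H s₀) ^ 2 ≤ (1 / 10 ^ 8 * (g * L)) ^ 2 := by gcongr
    have h5 : 2 * N₁ * √(H s₀) ^ 2 ≤ 2 * N₁ * (1 / 10 ^ 8 * (g * L)) ^ 2 := by gcongr
    have h6 : 2 * N₁ * (1 / 10 ^ 8 * (g * L)) ^ 2 = 2 / 10 ^ 16 * (N₁ * L) * (g2 * L) := by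
      rw [← hgg]; ring
    rw [h6, hNL, hq] at h5
    rw [hV] at *
    linarith
  have hx0 : s₀ - α ≤ 1 / 10 := by
    have h := D.phi_le_e h0 h0σ
    have hε := D.eps_le h0σ.le
    have h3 : 3 / 2 * (Λ * exp (2 * s₀)) * H s₀ ≤ g2 / 2 := by
      have k1 : 3 / 2 * (Λ * exp (2 * s₀)) * H s₀ ≤ 1 * H s₀ := by gcongr; linarith
      have k2 : 10 ≤ 10 ^ 32 * N₁ ^ 2 := by
        have : (999 / 1000) ^ 2 ≤ N₁ ^ 2 := by gcongr
        linarith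
      have k3 := mul_le_mul_of_nonneg_right k2 hH0.le
      linarith
    have h4 : (s₀ - α) * (g2 / 2) ≤ e s₀ := by
      refine le_trans ?_ h
      apply mul_le_mul_of_nonneg_left _ (by linarith)
      linarith
    by_contra hx
    push Not at hx
    have k5 : 1 / 10 * (g2 / 2) ≤ (s₀ - α) * (g2 / 2) := by gcongr
    have k6 : g2 * L ≤ g2 * 1 := by gcongr; linarith
    linarith
  have hLs : ∀ t, t ≤ s₀ + L → t ≤ s₁ := fun t ht => by linarith
  -- `(√H)' = e/√H` is at most about `g`, so `√H` grows at most linearly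
  have G_up : ∀ t, s₀ ≤ t → t ≤ s₀ + L →
      √(H t) ≤ (1 + 3 / 10 ^ 8) * (g * (t - s₀) + 1 / 10 ^ 8 * (g * L)) := by
    intro t ht0 htL
    have hder : ∀ u ∈ Icc s₀ t, HasDerivAt
        (fun t => g * (t - s₀) - √(H t) * exp (-2 * N₁ * (t - s₀)))
        (g * 1 - (2 * e u / (2 * √(H u)) * exp (-2 * N₁ * (u - s₀)) +
          √(H u) * (exp (-2 * N₁ * (u - s₀)) * (-2 * N₁ * 1)))) u := by
      intro u hu
      have huα : α < u := lt_of_lt_of_le h0 hu.1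
      have huσ : u < σ := lt_of_le_of_lt (hLs u (hu.2.trans htL)) h1
      have h2 := (D.dH u huσ huα.ne').sqrt (D.Hpos u huα huσ).ne'
      have h3 : HasDerivAt (fun t => t - s₀) 1 u := (hasDerivAt_id u).sub_const s₀
      exact (h3.const_mul g).sub (h2.mul (h3.const_mul (-2 * N₁)).exp)
    have h := le_of_deriv_nonneg_off (α := α) ht0
      (fun s hs => (hder s hs).continuousAt.continuousWithinAt)
      (fun u hu _ => ⟨hder u ⟨hu.1.le, hu.2.le⟩, by
        have huα : α < u := h0.trans hu.1
        have hu1 := hLs u (hu.2.le.trans htL)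
        have huσ : u < σ := lt_of_le_of_lt hu1 h1
        obtain ⟨hq, hq0⟩ := hsqH u huα huσ
        have h3 := e_up u hu.1.le hu1
        have h4 : 2 * e u / (2 * √(H u)) ≤ g + 2 * N₁ * √(H u) := by
          rw [div_le_iff₀ (by positivity)]
          have h5 : (g + 2 * N₁ * √(H u)) * (2 * √(H u)) =
              2 * (g * √(H u) + 2 * N₁ * √(H u) ^ 2) := by ring
          rw [h5, hq]
          linarith
        have hE := exp_pos (-2 * N₁ * (u - s₀))
        have hE1 : exp (-2 * N₁ * (u - s₀)) ≤ 1 := by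
          rw [exp_le_one_iff]
          have : 0 ≤ N₁ * (u - s₀) := mul_nonneg (by linarith) (by linarith [hu.1])
          linarith
        have h6 := mul_le_mul_of_nonneg_right h4 hE.le
        have h7 : g * exp (-2 * N₁ * (u - s₀)) ≤ g * 1 := by gcongr
        linarith⟩)
    simp only [sub_self, mul_zero, exp_zero, mul_one] at h
    have hE : 1 - 2 / 10 ^ 8 ≤ exp (-2 * N₁ * (t - s₀)) := by
      have h3 := add_one_le_exp (-2 * N₁ * (t - s₀))
      have : N₁ * (t - s₀) ≤ N₁ * L := by gcongr; linarith
      linarith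
    have hq0 := sqrt_nonneg (H t)
    have h4 : √(H t) * (1 - 2 / 10 ^ 8) ≤ √(H t) * exp (-2 * N₁ * (t - s₀)) := by gcongr
    have h5 : √(H t) * (1 - 2 / 10 ^ 8) ≤ g * (t - s₀) + 1 / 10 ^ 8 * (g * L) := by linarith
    linarith
  have G_up' : ∀ t, s₀ ≤ t → t ≤ s₀ + L → √(H t) ≤ 11 / 10 * (g * L) := by
    intro t ht0 htL
    have h := G_up t ht0 htL
    have : g * (t - s₀) ≤ g * L := by gcongr; linarith
    linarith
  have H_up : ∀ t, s₀ ≤ t → t ≤ s₀ + L → H t ≤ 121 / 100 * (g2 * L ^ 2) := by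
    intro t ht0 htL
    have hαt : α < t := lt_of_lt_of_le h0 ht0
    have htσ : t < σ := lt_of_le_of_lt (hLs t htL) h1
    rw [← (hsqH t hαt htσ).1]
    calc √(H t) ^ 2 ≤ (11 / 10 * (g * L)) ^ 2 := by
          gcongr; exact G_up' t ht0 htL
      _ = _ := by rw [← hgg]; ring
  have hLsq : g2 * L ^ 2 ≤ 102 / 100 / 10 ^ 8 * (g2 * L) := by
    have : g2 * L ^ 2 = L * (g2 * L) := by ring
    rw [this]; apply mul_le_mul_of_nonneg_right _ hV0.le; linarith
  have hLsq' : g2 * L ^ 2 ≤ 11 / 10 / 10 ^ 16 * g2 := by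
    have : L ^ 2 ≤ (101 / 100 / 10 ^ 8) ^ 2 := by gcongr
    have := mul_le_mul_of_nonneg_left this hΦ.le
    linarith
  have e_up' : ∀ t, s₀ ≤ t → t ≤ s₀ + L → e t ≤ g2 * (t - s₀) + 7 / 10 ^ 8 * (g2 * L) := by
    intro t ht0 htL
    have h := e_up t ht0 (hLs t htL)
    have h2 := mul_le_mul_of_nonneg_left (G_up t ht0 htL) hg0.le
    have h3 := mul_le_mul_of_nonneg_left (H_up t ht0 htL) (show 0 ≤ 2 * N₁ by linarith)
    have h4 : 2 * N₁ * (121 / 100 * (g2 * L ^ 2)) = 242 / 100 * (N₁ * L) * (g2 * L) := by ring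
    have h5 : g * ((1 + 3 / 10 ^ 8) * (g * (t - s₀) + 1 / 10 ^ 8 * (g * L)))
        = (1 + 3 / 10 ^ 8) * (g2 * (t - s₀) + 1 / 10 ^ 8 * (g2 * L)) := by rw [← hgg]; ring
    rw [h4, hNL] at h3
    rw [h5] at h2
    have h6 : g2 * (t - s₀) ≤ g2 * L := by gcongr; linarith
    linarith
  have de_low : ∀ t, s₀ ≤ t → t ≤ s₀ + L →
      g2 * (1 - 1 / 10 ^ 8) + 2 * b t ≤ a t + b t - c t ∧ 0 ≤ b t ∧ a t ≤ b t + 101 / 100 * g2 := by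
    intro t ht0 htL
    have hαt : α < t := lt_of_lt_of_le h0 ht0
    have htσ : t < σ := lt_of_le_of_lt (hLs t htL) h1
    have hP := D.phi_mono h0 ht0 htσ
    have hP' := D.phi_anti h0 ht0 htσ
    have hε := D.eps_le htσ.le
    have hε1 := D.eps_pos t
    have hε0 := mul_pos (D.eps_pos s₀) hH0
    have hc := D.c1 t htσ hαt.ne'
    have hc0 := D.c0 t htσ hαt.ne'
    have hH := D.Hpos t hαt htσ
    have hu := H_up t ht0 htL
    have h5 : Λ * exp (2 * t) * H t ≤ 1 / 1000 * H t := by gcongr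
    have hb := D.bH t htσ hαt.ne'
    refine ⟨by linarith, by linarith, by linarith⟩
  have hasD : ∀ t, s₀ ≤ t → t ≤ s₀ + L → t < σ ∧ t ≠ α := fun t h h' =>
    ⟨lt_of_le_of_lt (hLs t h') h1, (lt_of_lt_of_le h0 h).ne'⟩
  -- `e' = Φ + 2(b - c)` is about `g² + 2b` at least
  have e_low : ∀ x y m, s₀ ≤ x → x ≤ y → y ≤ s₀ + L → (∀ t ∈ Ioo x y, m ≤ b t) →
      e x + (g2 * (1 - 1 / 10 ^ 8) + 2 * m) * (y - x) ≤ e y := by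
    intro x y m hx hxy hy hm
    set K := g2 * (1 - 1 / 10 ^ 8) + 2 * m with hK
    have hder : ∀ u ∈ Icc x y, HasDerivAt (fun t => e t - K * t) (a u + b u - c u - K * 1) u := by
      intro u hu
      obtain ⟨h3, h4⟩ := hasD u (hx.trans hu.1) (hu.2.trans hy)
      exact (D.de u h3 h4).sub ((hasDerivAt_id u).const_mul K)
    have := le_of_deriv_nonneg_off (α := α) hxy
      (fun s hs => (hder s hs).continuousAt.continuousWithinAt)
      (fun u hu _ => ⟨hder u ⟨hu.1.le, hu.2.le⟩, by
        have h3 := (de_low u (hx.trans hu.1.le) (hu.2.le.trans hy)).1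
        have h4 := hm u hu
        linarith⟩)
    linarith
  -- a slice with small angular energy: otherwise `e` would grow faster than `e_up` allows
  obtain ⟨t₁, ht1a, ht1b, hb1⟩ : ∃ t₁, s₀ + L / 2 ≤ t₁ ∧ t₁ ≤ s₀ + L ∧ b t₁ ≤ 10 / 10 ^ 8 * g2 := by
    by_contra hno
    push Not at hno
    have h3 := e_low s₀ (s₀ + L / 2) 0 le_rfl (by linarith) (by linarith)
      (fun t ht => (de_low t ht.1.le (by linarith [ht.2])).2.1)
    have h4 := e_low (s₀ + L / 2) (s₀ + L) (10 / 10 ^ 8 * g2) (by linarith) (by linarith) le_rfl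
      (fun t ht => (hno t ht.1.le ht.2.le).le)
    have h5 := e_up' (s₀ + L) (by linarith) le_rfl
    have h6 := D.e_nonneg h0σ
    linarith
  have ht1s : s₀ ≤ t₁ := by linarith
  obtain ⟨ht1σ, ht1α⟩ := hasD t₁ ht1s ht1b
  have hαt1 : α < t₁ := lt_of_lt_of_le h0 ht1s
  obtain ⟨F, Fd, P, Q, R, hP0, hP, hQ0, hQ, hR0, hR, Fc, hF, hFe⟩ := T t₁ hαt1 ht1σ L hL0
  have hH1 := H_up t₁ ht1s ht1b
  have hH1p := D.Hpos t₁ hαt1 ht1σ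
  have hb1p := (de_low t₁ ht1s ht1b).2.1
  have hHb : √(H t₁ * b t₁) ≤ 4 / 10 ^ 4 * (g2 * L) := by
    apply sqrt_le_iff.2 ⟨by positivity, ?_⟩
    calc H t₁ * b t₁ ≤ (121 / 100 * (g2 * L ^ 2)) * (10 / 10 ^ 8 * g2) := by gcongr
      _ ≤ (4 / 10 ^ 4 * (g2 * L)) ^ 2 := by
        have : 0 ≤ g2 ^ 2 * L ^ 2 := by positivity
        linarith
  have hpi := Real.pi_lt_d2
  have hpi0 := Real.pi_pos
  have hQ' : Q ≤ 250 / 10 ^ 4 * g2 := by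
    have h3 : 16 * π / L * √(H t₁ * b t₁) ≤ 16 * 3.15 / L * (4 / 10 ^ 4 * (g2 * L)) := by gcongr
    have h4 : 16 * 3.15 / L * (4 / 10 ^ 4 * (g2 * L)) = 16 * 3.15 * (4 / 10 ^ 4) * g2 := by
      field_simp
    rw [h4] at h3
    linarith
  have hR' : R ≤ 26 / 10 ^ 4 * (g2 * L ^ 2) := by
    have h3 : 2 * π * L * √(H t₁ * b t₁) ≤ 2 * 3.15 * L * (4 / 10 ^ 4 * (g2 * L)) := by gcongr
    have h4 : 2 * 3.15 * L * (4 / 10 ^ 4 * (g2 * L)) = 2 * 3.15 * (4 / 10 ^ 4) * (g2 * L ^ 2) := by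
      ring
    have : 0 < g2 * L ^ 2 := by positivity
    linarith
  have hP' : P ≤ 121 / 100 * (g2 * L ^ 2) := hP.trans hH1
  -- up to the removed part, the flux at `t₁` is `e(t₁)`, which is about `g²L` at least
  have F_low : 2 / 5 * (g2 * L) ≤ F t₁ := by
    have ha := (de_low t₁ ht1s ht1b).2.2
    have ha0 := D.a0 t₁ ht1σ ht1α
    have h3 : √(a t₁) * √R ≤ 8 / 100 * (g2 * L) := by
      rw [← sqrt_mul ha0]
      apply sqrt_le_iff.2 ⟨by positivity, ?_⟩
      calc a t₁ * R ≤ (2 * g2) * (26 / 10 ^ 4 * (g2 * L ^ 2)) := by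
            gcongr; linarith
        _ ≤ (8 / 100 * (g2 * L)) ^ 2 := by
          have : 0 ≤ g2 ^ 2 * L ^ 2 := by positivity
          linarith
    have h4 := e_low s₀ t₁ 0 le_rfl ht1s ht1b
      (fun t ht => (de_low t ht.1.le (by linarith [ht.2])).2.1)
    have h6 := D.e_nonneg h0σ
    have h7 : g2 * (L / 2) ≤ g2 * (t₁ - s₀) := by gcongr; linarith
    linarith
  -- averaging over `[s₀ - L, s₀]`, where the integral of `a` is controlled by `e(s₀)`
  have F_s0 : F s₀ ≤ 5 / 10 ^ 4 * (g2 * L) := by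
    have hsub : Icc (s₀ - L) s₀ ⊆ Iio σ := fun t ht => lt_of_le_of_lt ht.2 h0σ
    have h := le_of_deriv_nonneg_off (α := α)
      (f := fun t => 2 * 10 ^ 4 * e t + 2 / 10 ^ 4 * g2 * t - (t - (s₀ - L)) / L * F t)
      (f' := fun t => 2 * 10 ^ 4 * (a t + b t - c t) + 2 / 10 ^ 4 * g2 * 1 -
        (1 / L * F t + (t - (s₀ - L)) / L * Fd t)) (by linarith : s₀ - L ≤ s₀)
      (by
        refine ContinuousOn.sub (ContinuousOn.add ?_ ?_) (ContinuousOn.mul ?_ ?_)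
        · exact continuousOn_const.mul (D.ec.mono hsub)
        · fun_prop
        · fun_prop
        · exact Fc.mono hsub)
      (by
        intro t ht hne
        have htσ : t < σ := ht.2.trans h0σ
        obtain ⟨f1, f2, f3⟩ := hF t htσ hne
        have h3 : HasDerivAt (fun t => (t - (s₀ - L)) / L) (1 / L) t :=
          ((hasDerivAt_id t).sub_const _).div_const L
        refine ⟨(((D.de t htσ hne).const_mul _).add ((hasDerivAt_id t).const_mul _)).sub
          (h3.mul f1), ?_⟩
        have ha0 := D.a0 t htσ hne
        have hH0' := D.H0 t htσ
        have hbH := D.bH t htσ hne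
        have hb0 : 0 ≤ b t := hH0'.trans hbH
        have hε := D.eps_le htσ.le
        have hε0 := D.eps_pos t
        have hc := D.c1 t htσ hne
        have q1 : 1 / L * F t ≤ 10 ^ 4 / 2 * a t + 121 / 100 / (2 * 10 ^ 4) * g2 := by
          have := sqrt_mul_le_weighted ha0 hP0 (show 0 < 10 ^ 4 * L by positivity)
          have k1 : F t ≤ 10 ^ 4 * L / 2 * a t + 121 / 100 * (g2 * L ^ 2) / (2 * (10 ^ 4 * L)) := by
            refine f2.trans (this.trans ?_)
            gcongr
          calc 1 / L * F t ≤ 1 / L * (10 ^ 4 * L / 2 * a t +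
                121 / 100 * (g2 * L ^ 2) / (2 * (10 ^ 4 * L))) := by gcongr
            _ = _ := by field_simp
        have q2 : √(b t) * √Q ≤ 10 ^ 4 / 2 * b t + 250 / 10 ^ 4 * g2 / (2 * 10 ^ 4) := by
          refine (sqrt_mul_le_weighted hb0 hQ0 (show (0:ℝ) < 10 ^ 4 by positivity)).trans ?_
          gcongr
        have q3 : √(H t) * √P ≤ 1 / 2 * b t + 121 / 100 * (g2 * L ^ 2) / 2 := by
          have := sqrt_mul_le_weighted hH0' hP0 (show (0:ℝ) < 1 by positivity)
          linarith
        have q4 : Λ * exp (2 * t) * (√(H t) * √P) ≤ 1 / 1000 * (1 / 2 * b t + 121 / 100 * (g2 * L ^ 2) / 2) := by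
          gcongr
        have χ0 : 0 ≤ (t - (s₀ - L)) / L := div_nonneg (by linarith [ht.1]) hL0.le
        have χ1 : (t - (s₀ - L)) / L ≤ 1 := by rw [div_le_one hL0]; linarith [ht.2]
        have q5 : (t - (s₀ - L)) / L * Fd t ≤ 10 ^ 4 / 2 * b t + 250 / 10 ^ 4 * g2 / (2 * 10 ^ 4) +
            1 / 1000 * (1 / 2 * b t + 121 / 100 * (g2 * L ^ 2) / 2) := by
          have k2 : Fd t ≤ 10 ^ 4 / 2 * b t + 250 / 10 ^ 4 * g2 / (2 * 10 ^ 4) +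
            1 / 1000 * (1 / 2 * b t + 121 / 100 * (g2 * L ^ 2) / 2) := by linarith
          have k3 : (0:ℝ) ≤ 10 ^ 4 / 2 * b t + 250 / 10 ^ 4 * g2 / (2 * 10 ^ 4) +
            1 / 1000 * (1 / 2 * b t + 121 / 100 * (g2 * L ^ 2) / 2) := by positivity
          calc _ ≤ (t - (s₀ - L)) / L * _ := mul_le_mul_of_nonneg_left k2 χ0
            _ ≤ 1 * _ := mul_le_mul_of_nonneg_right χ1 k3
            _ = _ := one_mul _
        have q6 : Λ * exp (2 * t) * H t ≤ 1 / 1000 * b t := by gcongr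
        linarith)
    have h4 : (s₀ - (s₀ - L)) / L = 1 := by field_simp; ring
    have h5 : (s₀ - L - (s₀ - L)) / L = 0 := by simp
    simp only [h4, h5, zero_mul, one_mul] at h
    have h6 := D.e_nonneg (show s₀ - L < σ by linarith)
    linarith
  -- the derivative of the flux is controlled by `√(bQ)`, and the integral of `b` by `e(t₁)`
  have F_inc : F t₁ ≤ F s₀ + 130 / 10 ^ 4 * (g2 * L) := by
    have hder : ∀ t ∈ Icc s₀ t₁, HasDerivAt
        (fun t => 1 / 4 * (e t - g2 * (1 - 1 / 10 ^ 8) * t) + (126 / 10 ^ 4 * g2) * t - F t)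
        (1 / 4 * (a t + b t - c t - g2 * (1 - 1 / 10 ^ 8) * 1) + (126 / 10 ^ 4 * g2) * 1 - Fd t) t := by
      intro t ht
      obtain ⟨h3, h4⟩ := hasD t ht.1 (ht.2.trans ht1b)
      exact ((((D.de t h3 h4).sub ((hasDerivAt_id t).const_mul _)).const_mul _).add
        ((hasDerivAt_id t).const_mul _)).sub (hF t h3 h4).1
    have h := le_of_deriv_nonneg_off (α := α) ht1s
      (fun s hs => (hder s hs).continuousAt.continuousWithinAt)
      (fun t ht _ => ⟨hder t ⟨ht.1.le, ht.2.le⟩, by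
        have htL := ht.2.le.trans ht1b
        obtain ⟨h3, h4⟩ := hasD t ht.1.le htL
        obtain ⟨f1, f2, f3⟩ := hF t h3 h4
        obtain ⟨l1, l2, l3⟩ := de_low t ht.1.le htL
        have hH0' := D.H0 t h3
        have q2 := sqrt_mul_le_weighted l2 hQ0 (show (0:ℝ) < 1 by positivity)
        have q3 := sqrt_mul_le_weighted hH0' hP0 (show (0:ℝ) < 1 by positivity)
        have hu := H_up t ht.1.le htL
        have hε := D.eps_le h3.le
        have q4 : Λ * exp (2 * t) * (√(H t) * √P) ≤ 1 / 1000 * (√(H t) * √P) := by gcongr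
        linarith⟩)
    have h5 := e_up' t₁ ht1s ht1b
    have h6 := D.e_nonneg h0σ
    have h7 : g2 * (t₁ - s₀) ≤ g2 * L := by gcongr; linarith
    linarith
  linarith

/-- Between the pole and twice its radius, `N` is bounded by a multiple of its value at `2a₁`. -/
theorem near_le (D : PoleData α σ Λ H e a b c) (T : FluxTest α σ Λ H e a b) {s : ℝ}
    (h0 : α < s) (h01 : s ≤ α + log 2) :
    e s / H s ≤ 10 ^ 17 * (e (α + log 2) / H (α + log 2)) := by
  have h1 := D.hσ
  have hsσ := lt_of_le_of_lt h01 h1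
  have hN1 := D.N_ge (lt_of_lt_of_le h0 h01) h1
  rcases le_or_gt (a s - b s + c s) 0 with hΦ | hΦ
  · have := D.near_of_nonpos h0 h01 h1 hΦ
    linarith
  · have h2 := D.near_of_pos T h0 h01 hΦ
    have h3 := D.Nsq_le h0 le_rfl h01 h1 hΦ.le
    have hH := D.Hpos s h0 hsσ
    rw [← div_le_iff₀ hH] at h2
    refine le_of_sq_le_sq ?_ (by linarith)
    nlinarith

/-- Almost monotonicity from any radius beyond `k` times that of the pole; for `k < 2` the bounded
loss near the pole is absorbed in the term `1/k²`. -/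
theorem main_le (D : PoleData α σ Λ H e a b c) (T : FluxTest α σ Λ H e a b) {s s' k : ℝ}
    (hk : 1 < k) (hs : α + log k < s) (hss : s ≤ s')
    (h3 : α + log 2 ≤ s') (hs' : s' < σ) :
    e s / H s ≤ e s' / H s' *
      exp ((6 * exp 7 + 4 * log (10 ^ 17)) / k ^ 2 + Λ * exp (2 * s')) := by
  have hk0 : 0 < log k := log_pos hk
  have hαs : α < s := by linarith
  have hsσ := lt_of_le_of_lt hss hs'
  have hN : 0 < e s / H s := div_pos (D.e_pos hαs hsσ) (D.Hpos s hαs hsσ)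
  have hN' : 0 < e s' / H s' := div_pos (D.e_pos (by linarith) hs') (D.Hpos s' (by linarith) hs')
  have hlogC : 0 < log (10 ^ 17 : ℝ) := log_pos (by norm_num)
  suffices hlog : log (e s / H s) ≤ log (e s' / H s') +
      ((6 * exp 7 + 4 * log (10 ^ 17)) / k ^ 2 + Λ * exp (2 * s')) by
    have := exp_le_exp.2 hlog
    rwa [exp_log hN, exp_add, exp_log hN'] at this
  have hkk : exp (-2 * log k) = 1 / k ^ 2 := by
    rw [show -2 * log k = -(log k + log k) by ring, exp_neg, exp_add, exp_log (by linarith)]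
    rw [one_div, sq]
  have h4 : exp (-2 * (s - (α + log 2))) ≤ 4 / k ^ 2 := by
    have : -2 * (s - (α + log 2)) ≤ (log 2 + log 2) + -2 * log k := by linarith
    refine (exp_le_exp.2 this).trans ?_
    rw [exp_add, hkk, exp_add, exp_log (by norm_num)]
    apply le_of_eq; ring
  rcases le_or_gt (α + log 2) s with h2 | h2
  · have h := D.far_mono h2 hss hs'
    have h5 : 3 / 2 * exp 7 * exp (-2 * (s - (α + log 2))) ≤ 3 / 2 * exp 7 * (4 / k ^ 2) := by gcongr
    have h6 : (6 * exp 7 + 4 * log (10 ^ 17)) / k ^ 2 = 3 / 2 * exp 7 * (4 / k ^ 2) +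
      4 * log (10 ^ 17) / k ^ 2 := by ring
    have h7 : 0 ≤ 4 * log (10 ^ 17 : ℝ) / k ^ 2 := by positivity
    linarith
  · have hlt : log k < log 2 := by linarith
    have hk2 : k < 2 := (log_lt_log_iff (by linarith) (by norm_num)).1 hlt
    have hk4 : 1 ≤ 4 / k ^ 2 := by
      rw [le_div_iff₀ (by positivity)]; nlinarith
    have h1 := D.hσ
    have hα1 : α < α + log 2 := by linarith
    have hN1 : 0 < e (α + log 2) / H (α + log 2) := div_pos (D.e_pos hα1 h1) (D.Hpos _ hα1 h1)
    have hnear : log (e s / H s) ≤ log (10 ^ 17) + log (e (α + log 2) / H (α + log 2)) := by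
      rw [← log_mul (by norm_num) hN1.ne']
      exact log_le_log hN (D.near_le T hαs h2.le)
    have h6 : (6 * exp 7 + 4 * log (10 ^ 17)) / k ^ 2 =
      (3 / 2 * exp 7 + log (10 ^ 17)) * (4 / k ^ 2) := by ring
    have h7 : (3 / 2 * exp 7 + log (10 ^ 17)) * 1 ≤
      (3 / 2 * exp 7 + log (10 ^ 17)) * (4 / k ^ 2) := by gcongr
    have h := D.far_mono le_rfl h3 hs'
    simp only [sub_self, mul_zero, exp_zero] at h
    linarith

end PoleData

end

/-! ### Barriers and boundary regularity -/

section

/-- `f` has second derivative `p` at `x` -/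
def HasD2 {E : Type*} [NormedAddCommGroup E] [NormedSpace ℝ E] (f : ℝ → E) (p : E) (x : ℝ) : Prop :=
  ∃ f' : ℝ → E, (∀ᶠ y in nhds x, HasDerivAt f (f' y) y) ∧ HasDerivAt f' p x

namespace HasD2
variable {E F : Type*} [NormedAddCommGroup E] [NormedSpace ℝ E] [NormedAddCommGroup F] [NormedSpace ℝ F]

theorem sub {f g : ℝ → E} {p q : E} {x : ℝ} (hf : HasD2 f p x) (hg : HasD2 g q x) :
    HasD2 (fun y => f y - g y) (p - q) x := by
  obtain ⟨f', h1, h2⟩ := hf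
  obtain ⟨g', h3, h4⟩ := hg
  exact ⟨fun y => f' y - g' y, by filter_upwards [h1, h3] with y a b using a.sub b, h2.sub h4⟩

theorem clm {f : ℝ → E} {p : E} {x : ℝ} (hf : HasD2 f p x) (ℓ : E →L[ℝ] F) :
    HasD2 (fun y => ℓ (f y)) (ℓ p) x := by
  obtain ⟨f', h1, h2⟩ := hf
  exact ⟨fun y => ℓ (f' y), by
    filter_upwards [h1] with y a using ℓ.hasFDerivAt.comp_hasDerivAt y a,
    ℓ.hasFDerivAt.comp_hasDerivAt x h2⟩

theorem comp_affine {f : ℝ → E} {p : E} {x k m : ℝ} (hk : k ^ 2 = 1) (hf : HasD2 f p (k * x + m)) :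
    HasD2 (fun y => f (k * y + m)) p x := by
  obtain ⟨f', h1, h2⟩ := hf
  have hl : ∀ y : ℝ, HasDerivAt (fun y : ℝ => k * y + m) k y := fun y => by
    simpa using ((hasDerivAt_id y).const_mul k).add_const m
  refine ⟨fun y => k • f' (k * y + m), ?_, ?_⟩
  · have : Tendsto (fun y => k * y + m) (nhds x) (nhds (k * x + m)) := by
      apply Continuous.tendsto; fun_prop
    filter_upwards [this.eventually h1] with y a
    exact a.scomp y (hl y)
  · have := (h2.scomp x (hl x)).const_smul k
    rwa [smul_smul, ← sq, hk, one_smul] at this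

theorem nonpos_of_max {f : ℝ → ℝ} {p x : ℝ} (hf : HasD2 f p x) (hm : IsLocalMax f x) : p ≤ 0 := by
  by_contra hp
  push Not at hp
  obtain ⟨f', h1, h2⟩ := hf
  have hx : f' x = 0 := hm.hasDerivAt_eq_zero h1.self_of_nhds
  have h3 := h2.tendsto_slope
  have h4 : ∀ᶠ y in nhdsWithin x {x}ᶜ, 0 < slope f' x y := h3.eventually (lt_mem_nhds hp)
  rw [eventually_nhdsWithin_iff] at h4
  obtain ⟨δ, hδ, hb⟩ := Metric.eventually_nhds_iff.1 (h1.and (h4.and hm))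
  have hmono : StrictMonoOn f (Icc x (x + δ / 2)) := by
    apply strictMonoOn_of_deriv_pos (convex_Icc _ _)
    · intro y hy
      refine ((hb ?_).1).continuousAt.continuousWithinAt
      rw [Real.dist_eq, abs_of_nonneg (by linarith [hy.1])]; linarith [hy.2]
    · intro y hy
      rw [interior_Icc] at hy
      have hd : dist y x < δ := by
        rw [Real.dist_eq, abs_of_nonneg (by linarith [hy.1])]; linarith [hy.2]
      obtain ⟨k1, k2, _⟩ := hb hd
      rw [k1.deriv]
      have := k2 hy.1.ne'
      rw [slope_def_field, hx, sub_zero] at this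
      have h5 : 0 < y - x := by linarith [hy.1]
      exact (div_pos_iff_of_pos_right h5).1 this
  have h6 := hmono ⟨le_rfl, by linarith⟩ ⟨by linarith, le_rfl⟩ (by linarith : x < x + δ / 2)
  have h7 := (hb (y := x + δ / 2) (by
    rw [Real.dist_eq, add_sub_cancel_left, abs_of_pos (by linarith)]; linarith)).2.2
  linarith

theorem quad (k m n x : ℝ) : HasD2 (fun y => k * y ^ 2 + m * y + n) (2 * k) x := by
  refine ⟨fun y => 2 * k * y + m, Eventually.of_forall fun y => ?_, ?_⟩
  · have := (((hasDerivAt_pow 2 y).const_mul k).add ((hasDerivAt_id y).const_mul m)).add_const n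
    refine this.congr_deriv ?_
    simp; ring
  · simpa using ((hasDerivAt_id x).const_mul (2 * k)).add_const m

end HasD2

/-- A bounded function with Laplacian bounded below that vanishes on a flat piece of boundary grows
at most linearly away from it, by comparison with `A t - (β + γ) t² + γ x²`. -/
theorem barrier_real {u : ℝ → ℝ → ℝ} {ρ M K : ℝ} (hρ : 0 < ρ) (hM0 : 0 ≤ M) (hK0 : 0 ≤ K)
    (hu : ContinuousOn (fun z : ℝ × ℝ => u z.1 z.2) (Icc (-ρ) ρ ×ˢ Icc 0 ρ))
    (h0 : ∀ x ∈ Icc (-ρ) ρ, u x 0 = 0)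
    (hM : ∀ x ∈ Icc (-ρ) ρ, ∀ t ∈ Icc 0 ρ, u x t ≤ M)
    (hlap : ∀ x ∈ Ioo (-ρ) ρ, ∀ t ∈ Ioo 0 ρ, ∃ p q, HasD2 (fun y => u y t) p x ∧
      HasD2 (fun τ => u x τ) q t ∧ -K ≤ p + q) {t : ℝ} (ht : t ∈ Icc 0 ρ) :
    u 0 t ≤ (2 * M / ρ + (K + 1) * ρ) * t := by
  set β := (K + 1) / 2 with hβ
  set γ := M / ρ ^ 2 with hγ
  set A := (β + 2 * γ) * ρ with hA
  have hγ0 : 0 ≤ γ := by positivity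
  have hβ0 : 0 < β := by positivity
  have hγρ : γ * ρ ^ 2 = M := by rw [hγ]; field_simp
  set z : ℝ × ℝ → ℝ := fun z => u z.1 z.2 - (A * z.2 - (β + γ) * z.2 ^ 2 + γ * z.1 ^ 2) with hz
  have hzc : ContinuousOn z (Icc (-ρ) ρ ×ˢ Icc 0 ρ) := hu.sub (by fun_prop)
  obtain ⟨m, hm, hmax⟩ := (isCompact_Icc.prod isCompact_Icc).exists_isMaxOn
    ⟨(0, t), ⟨⟨by linarith, hρ.le⟩, ht⟩⟩ hzc
  have hzm : z m ≤ 0 := by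
    obtain ⟨⟨hm1, hm2⟩, hm3, hm4⟩ := hm
    have hB : ∀ t ∈ Icc (0:ℝ) ρ, 0 ≤ A * t - (β + γ) * t ^ 2 := by
      intro t ht
      have : (β + γ) * t ^ 2 ≤ A * t := by
        have h1 : t ^ 2 ≤ ρ * t := by nlinarith [ht.1, ht.2]
        have h2 : 0 ≤ γ * (ρ * t) := by have := ht.1; positivity
        have h3 := mul_le_mul_of_nonneg_left h1 (show 0 ≤ β + γ by linarith)
        rw [hA]; nlinarith
      linarith
    have hum := hM m.1 ⟨hm1, hm2⟩ m.2 ⟨hm3, hm4⟩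
    by_cases hside : m.1 = -ρ ∨ m.1 = ρ
    · have : m.1 ^ 2 = ρ ^ 2 := by rcases hside with h | h <;> rw [h]; ring
      simp only [hz, this, hγρ]
      linarith [hB m.2 ⟨hm3, hm4⟩]
    push Not at hside
    have hi1 : m.1 ∈ Ioo (-ρ) ρ := ⟨lt_of_le_of_ne hm1 (Ne.symm hside.1), lt_of_le_of_ne hm2 hside.2⟩
    rcases hm3.eq_or_lt with h | h3
    · simp only [hz, ← h, h0 m.1 ⟨hm1, hm2⟩]
      nlinarith [sq_nonneg m.1]
    rcases hm4.eq_or_lt with h | h4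
    · simp only [hz, h] at hum ⊢
      nlinarith [sq_nonneg m.1, mul_nonneg hγ0 (sq_nonneg m.1)]
    exfalso
    obtain ⟨p, q, hp, hq, hpq⟩ := hlap m.1 hi1 m.2 ⟨h3, h4⟩
    have hmaxx : IsLocalMax (fun y => u y m.2 - (γ * y ^ 2 + 0 * y + (A * m.2 - (β + γ) * m.2 ^ 2))) m.1 := by
      filter_upwards [Ioo_mem_nhds hi1.1 hi1.2] with y hy
      have := hmax (show (y, m.2) ∈ _ from ⟨⟨hy.1.le, hy.2.le⟩, hm3, hm4⟩)
      simp only [hz, mem_ofPred_eq] at this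
      linarith
    have hmaxt : IsLocalMax (fun τ => u m.1 τ - (-(β + γ) * τ ^ 2 + A * τ + γ * m.1 ^ 2)) m.2 := by
      filter_upwards [Ioo_mem_nhds h3 h4] with τ hτ
      have := hmax (show (m.1, τ) ∈ _ from ⟨⟨hm1, hm2⟩, hτ.1.le, hτ.2.le⟩)
      simp only [hz, mem_ofPred_eq] at this
      linarith
    have e1 := (hp.sub (HasD2.quad γ 0 (A * m.2 - (β + γ) * m.2 ^ 2) m.1)).nonpos_of_max hmaxx
    have e2 := (hq.sub (HasD2.quad (-(β + γ)) A (γ * m.1 ^ 2) m.2)).nonpos_of_max hmaxt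
    linarith
  have h := hmax (show ((0:ℝ), t) ∈ _ from ⟨⟨by linarith, hρ.le⟩, ht⟩)
  simp only [hz, mem_ofPred_eq] at h hzm
  have hAle : A ≤ 2 * M / ρ + (K + 1) * ρ := by
    have : 2 * γ * ρ = 2 * M / ρ := by rw [hγ]; field_simp
    have h2 : A = β * ρ + 2 * γ * ρ := by rw [hA]; ring
    rw [h2, this, hβ]; nlinarith
  have h5 := mul_le_mul_of_nonneg_right hAle ht.1
  have h6 : 0 ≤ (β + γ) * t ^ 2 := by positivity
  nlinarith

theorem barrier_complex {f : ℝ → ℝ → ℂ} {ρ M K : ℝ} (hρ : 0 < ρ) (hM0 : 0 ≤ M) (hK0 : 0 ≤ K)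
    (hu : ContinuousOn (fun z : ℝ × ℝ => f z.1 z.2) (Icc (-ρ) ρ ×ˢ Icc 0 ρ))
    (h0 : ∀ x ∈ Icc (-ρ) ρ, f x 0 = 0)
    (hM : ∀ x ∈ Icc (-ρ) ρ, ∀ t ∈ Icc 0 ρ, ‖f x t‖ ≤ M)
    (hlap : ∀ x ∈ Ioo (-ρ) ρ, ∀ t ∈ Ioo 0 ρ, ∃ p q, HasD2 (fun y => f y t) p x ∧
      HasD2 (fun τ => f x τ) q t ∧ ‖p + q‖ ≤ K) {t : ℝ} (ht : t ∈ Icc 0 ρ) :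
    ‖f 0 t‖ ≤ (2 * M / ρ + (K + 1) * ρ) * t := by
  -- project onto the direction of the value in question
  set ω : ℂ := if f 0 t = 0 then 1 else f 0 t / ‖f 0 t‖ with hω
  have hω1 : ‖ω‖ = 1 := by
    rw [hω]; split_ifs with h
    · simp
    · simp [h]
  set ℓ : ℂ →L[ℝ] ℝ := innerSL ℝ ω with hℓ
  have hle : ∀ z, |ℓ z| ≤ ‖z‖ := fun z => by
    have := abs_real_inner_le_norm ω z
    rw [hω1, one_mul] at this
    simpa [hℓ] using this
  have hval : ℓ (f 0 t) = ‖f 0 t‖ := by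
    rw [hℓ, innerSL_apply_apply]
    by_cases h : f 0 t = 0
    · simp [h]
    · have h2 : ω = (‖f 0 t‖⁻¹ : ℝ) • f 0 t := by
        rw [hω, if_neg h]; simp [div_eq_inv_mul]
      rw [h2, real_inner_smul_left, real_inner_self_eq_norm_sq]
      have : ‖f 0 t‖ ≠ 0 := by simpa using h
      field_simp
  rw [← hval]
  refine barrier_real (u := fun x t => ℓ (f x t)) hρ hM0 hK0 (ℓ.continuous.comp_continuousOn hu)
    (fun x hx => by simp [h0 x hx]) (fun x hx t ht => ((le_abs_self _).trans (hle _)).trans (hM x hx t ht))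
    ?_ ht
  intro x hx t ht
  obtain ⟨p, q, hp, hq, hpq⟩ := hlap x hx t ht
  refine ⟨ℓ p, ℓ q, hp.clm ℓ, hq.clm ℓ, ?_⟩
  rw [← map_add]
  exact (abs_le.1 ((hle _).trans hpq)).1

end

section

/-- A twice differentiable function on a rectangle, with all its derivatives. -/
structure C2On (f fs ft fss ftt : ℝ → ℝ → ℂ) (I J : Set ℝ) : Prop where
  ds : ∀ s ∈ I, ∀ t ∈ J, HasDerivAt (fun x => f x t) (fs s t) s
  dt : ∀ s ∈ I, ∀ t ∈ J, HasDerivAt (fun y => f s y) (ft s t) t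
  dss : ∀ s ∈ I, ∀ t ∈ J, HasDerivAt (fun x => fs x t) (fss s t) s
  dtt : ∀ s ∈ I, ∀ t ∈ J, HasDerivAt (fun y => ft s y) (ftt s t) t

theorem norm_le_of_deriv_bound {g : ℝ → ℂ} {g' : ℂ} {C ρ : ℝ} (hρ : 0 < ρ) (h : HasDerivAt g g' 0)
    (h0 : g 0 = 0) (hb : ∀ t ∈ Icc 0 ρ, ‖g t‖ ≤ C * t) : ‖g'‖ ≤ C := by
  have h1 := h.hasDerivWithinAt (s := Ioi 0)
  rw [hasDerivWithinAt_iff_tendsto_slope' (by simp)] at h1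
  refine le_of_tendsto h1.norm ?_
  filter_upwards [Ioo_mem_nhdsGT hρ] with t ht
  rw [slope_def_module, h0, sub_zero, sub_zero, norm_smul, norm_inv, Real.norm_of_nonneg ht.1.le,
    inv_mul_le_iff₀ ht.1]
  linarith [hb t ⟨ht.1.le, ht.2.le⟩]

variable {f fs ft fss ftt : ℝ → ℝ → ℂ}

/-- Interior gradient bound: the difference of `f` and its reflection in a line through the point
vanishes on that line, so that the boundary barrier applies to it. -/
theorem grad_est {s₀ t₀ d ρ M K : ℝ} (hρ : 0 < ρ) (hd : ρ < d) (hM0 : 0 ≤ M) (hK0 : 0 ≤ K)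
    (hc : ContinuousOn (fun z : ℝ × ℝ => f z.1 z.2) (Ioo (s₀ - d) (s₀ + d) ×ˢ Ioo (t₀ - d) (t₀ + d)))
    (hf : C2On f fs ft fss ftt (Ioo (s₀ - d) (s₀ + d)) (Ioo (t₀ - d) (t₀ + d)))
    (hM : ∀ s ∈ Ioo (s₀ - d) (s₀ + d), ∀ t ∈ Ioo (t₀ - d) (t₀ + d), ‖f s t‖ ≤ M)
    (hK : ∀ s ∈ Ioo (s₀ - d) (s₀ + d), ∀ t ∈ Ioo (t₀ - d) (t₀ + d), ‖fss s t + ftt s t‖ ≤ K) :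
    ‖fs s₀ t₀‖ ≤ 2 * M / ρ + (K + 1) * ρ ∧ ‖ft s₀ t₀‖ ≤ 2 * M / ρ + (K + 1) * ρ := by
  have D2s : ∀ s ∈ Ioo (s₀ - d) (s₀ + d), ∀ t ∈ Ioo (t₀ - d) (t₀ + d),
      HasD2 (fun x => f x t) (fss s t) s := fun s hs t ht =>
    ⟨fun x => fs x t, by
      filter_upwards [Ioo_mem_nhds hs.1 hs.2] with x hx using hf.ds x hx t ht, hf.dss s hs t ht⟩
  have D2t : ∀ s ∈ Ioo (s₀ - d) (s₀ + d), ∀ t ∈ Ioo (t₀ - d) (t₀ + d),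
      HasD2 (fun y => f s y) (ftt s t) t := fun s hs t ht =>
    ⟨fun y => ft s y, by
      filter_upwards [Ioo_mem_nhds ht.1 ht.2] with y hy using hf.dt s hs y hy, hf.dtt s hs t ht⟩
  have mem : ∀ c x : ℝ, |x| ≤ ρ → c + x ∈ Ioo (c - d) (c + d) ∧ c - x ∈ Ioo (c - d) (c + d) := by
    intro c x hx
    obtain ⟨h1, h2⟩ := abs_le.1 hx
    exact ⟨⟨by linarith, by linarith⟩, ⟨by linarith, by linarith⟩⟩
  have half : (‖(1 / 2 : ℝ)‖) = 1 / 2 := by norm_num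
  have nrm : ∀ z w : ℂ, ∀ m, ‖z‖ ≤ m → ‖w‖ ≤ m → ‖(1 / 2 : ℝ) • (z - w)‖ ≤ m := by
    intro z w m hz hw
    rw [norm_smul, half]
    linarith [norm_sub_le z w]
  have aff : ∀ {g : ℝ → ℂ} {p q : ℂ} {c x : ℝ}, HasD2 g p (c + x) → HasD2 g q (c - x) →
      HasD2 (fun y => (1 / 2 : ℝ) • (g (c + y) - g (c - y))) ((1 / 2 : ℝ) • (p - q)) x := by
    intro g p q c x hp hq
    have h1 : HasD2 (fun y => g (1 * y + c)) p x :=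
      HasD2.comp_affine (by norm_num) (by rwa [one_mul, add_comm])
    have h2 : HasD2 (fun y => g (-1 * y + c)) q x :=
      HasD2.comp_affine (by norm_num) (by rwa [neg_one_mul, neg_add_eq_sub])
    have h3 := (h1.sub h2).clm ((1 / 2 : ℝ) • ContinuousLinearMap.id ℝ ℂ)
    convert h3 using 1
    · ext y
      simp [sub_eq_add_neg, add_comm]
    · simp
  have shift : ∀ {g : ℝ → ℂ} {p : ℂ} {c x : ℝ}, HasD2 g p (c + x) → HasD2 (fun y => g (c + y)) p x := by
    intro g p c x hp
    have h1 : HasD2 (fun y => g (1 * y + c)) p x :=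
      HasD2.comp_affine (by norm_num) (by rwa [one_mul, add_comm])
    convert h1 using 3
    ring
  have scal : ∀ {g h : ℝ → ℂ} {p q : ℂ} {x : ℝ}, HasD2 g p x → HasD2 h q x →
      HasD2 (fun y => (1 / 2 : ℝ) • (g y - h y)) ((1 / 2 : ℝ) • (p - q)) x := by
    intro g h p q x hp hq
    exact (hp.sub hq).clm ((1 / 2 : ℝ) • ContinuousLinearMap.id ℝ ℂ)
  have absx : ∀ x ∈ Icc (-ρ) ρ, |x| ≤ ρ := fun x hx => abs_le.2 hx
  have abst : ∀ x ∈ Icc 0 ρ, |x| ≤ ρ := fun x hx => abs_le.2 ⟨by linarith [hx.1], hx.2⟩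
  have sum_eq : ∀ p q p' q' : ℂ, (1 / 2 : ℝ) • (p - q) + (1 / 2 : ℝ) • (p' - q')
      = (1 / 2 : ℝ) • ((p + p') - (q + q')) := by intros; module
  constructor
  · refine norm_le_of_deriv_bound (g := fun x => (1 / 2 : ℝ) • (f (s₀ + x) t₀ - f (s₀ - x) t₀)) hρ ?_ (by simp) ?_
    · have ht₀ : t₀ ∈ Ioo (t₀ - d) (t₀ + d) := ⟨by linarith, by linarith⟩
      have hs₀ : s₀ ∈ Ioo (s₀ - d) (s₀ + d) := ⟨by linarith, by linarith⟩
      have k := hf.ds s₀ hs₀ t₀ ht₀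
      have k1 : HasDerivAt (fun x => f (s₀ + x) t₀) (fs s₀ t₀) 0 := by
        exact HasDerivAt.comp_const_add (f := fun x => f x t₀) s₀ 0 (by simpa using k)
      have k2 : HasDerivAt (fun x => f (s₀ - x) t₀) (-fs s₀ t₀) 0 := by
        exact HasDerivAt.comp_const_sub (f := fun x => f x t₀) s₀ 0 (by simpa using k)
      refine ((k1.sub k2).const_smul (1 / 2 : ℝ)).congr_deriv ?_
      module
    · intro x hx
      refine barrier_complex (f := fun y x => (1 / 2 : ℝ) • (f (s₀ + x) (t₀ + y) - f (s₀ - x) (t₀ + y)))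
        hρ hM0 hK0 ?_ (by simp) ?_ ?_ hx |>.trans' (by simp)
      · refine ContinuousOn.fun_const_smul ?_ _
        apply ContinuousOn.sub
        · refine hc.comp (f := fun z : ℝ × ℝ => (s₀ + z.2, t₀ + z.1)) (by fun_prop) ?_
          rintro ⟨y, x⟩ ⟨hy, hx⟩
          exact ⟨(mem s₀ x (abst x hx)).1, (mem t₀ y (absx y hy)).1⟩
        · refine hc.comp (f := fun z : ℝ × ℝ => (s₀ - z.2, t₀ + z.1)) (by fun_prop) ?_
          rintro ⟨y, x⟩ ⟨hy, hx⟩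
          exact ⟨(mem s₀ x (abst x hx)).2, (mem t₀ y (absx y hy)).1⟩
      · intro y hy x hx
        exact nrm _ _ _ (hM _ (mem s₀ x (abst x hx)).1 _ (mem t₀ y (absx y hy)).1)
          (hM _ (mem s₀ x (abst x hx)).2 _ (mem t₀ y (absx y hy)).1)
      · intro y hy x hx
        have m1 := mem s₀ x (abst x ⟨hx.1.le, hx.2.le⟩)
        have m2 := (mem t₀ y (absx y ⟨hy.1.le, hy.2.le⟩)).1
        refine ⟨_, _, scal (shift (D2t _ m1.1 _ m2)) (shift (D2t _ m1.2 _ m2)),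
          aff (g := fun s => f s (t₀ + y)) (D2s _ m1.1 _ m2) (D2s _ m1.2 _ m2), ?_⟩
        rw [sum_eq]
        refine nrm _ _ _ ?_ ?_
        · rw [add_comm]; exact hK _ m1.1 _ m2
        · rw [add_comm]; exact hK _ m1.2 _ m2
  · refine norm_le_of_deriv_bound (g := fun x => (1 / 2 : ℝ) • (f s₀ (t₀ + x) - f s₀ (t₀ - x))) hρ ?_ (by simp) ?_
    · have ht₀ : t₀ ∈ Ioo (t₀ - d) (t₀ + d) := ⟨by linarith, by linarith⟩
      have hs₀ : s₀ ∈ Ioo (s₀ - d) (s₀ + d) := ⟨by linarith, by linarith⟩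
      have k := hf.dt s₀ hs₀ t₀ ht₀
      have k1 : HasDerivAt (fun x => f s₀ (t₀ + x)) (ft s₀ t₀) 0 := by
        exact HasDerivAt.comp_const_add (f := f s₀) t₀ 0 (by simpa using k)
      have k2 : HasDerivAt (fun x => f s₀ (t₀ - x)) (-ft s₀ t₀) 0 := by
        exact HasDerivAt.comp_const_sub (f := f s₀) t₀ 0 (by simpa using k)
      refine ((k1.sub k2).const_smul (1 / 2 : ℝ)).congr_deriv ?_
      module
    · intro x hx
      refine barrier_complex (f := fun y x => (1 / 2 : ℝ) • (f (s₀ + y) (t₀ + x) - f (s₀ + y) (t₀ - x)))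
        hρ hM0 hK0 ?_ (by simp) ?_ ?_ hx |>.trans' (by simp)
      · refine ContinuousOn.fun_const_smul ?_ _
        apply ContinuousOn.sub
        · refine hc.comp (f := fun z : ℝ × ℝ => (s₀ + z.1, t₀ + z.2)) (by fun_prop) ?_
          rintro ⟨y, x⟩ ⟨hy, hx⟩
          exact ⟨(mem s₀ y (absx y hy)).1, (mem t₀ x (abst x hx)).1⟩
        · refine hc.comp (f := fun z : ℝ × ℝ => (s₀ + z.1, t₀ - z.2)) (by fun_prop) ?_
          rintro ⟨y, x⟩ ⟨hy, hx⟩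
          exact ⟨(mem s₀ y (absx y hy)).1, (mem t₀ x (abst x hx)).2⟩
      · intro y hy x hx
        exact nrm _ _ _ (hM _ (mem s₀ y (absx y hy)).1 _ (mem t₀ x (abst x hx)).1)
          (hM _ (mem s₀ y (absx y hy)).1 _ (mem t₀ x (abst x hx)).2)
      · intro y hy x hx
        have m1 := mem t₀ x (abst x ⟨hx.1.le, hx.2.le⟩)
        have m2 := (mem s₀ y (absx y ⟨hy.1.le, hy.2.le⟩)).1
        refine ⟨_, _, scal (shift (g := fun s => f s (t₀ + x)) (D2s _ m2 _ m1.1))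
          (shift (g := fun s => f s (t₀ - x)) (D2s _ m2 _ m1.2)),
          aff (D2t _ m2 _ m1.1) (D2t _ m2 _ m1.2), ?_⟩
        rw [sum_eq]
        exact nrm _ _ _ (hK _ m2 _ m1.1) (hK _ m2 _ m1.2)

end

section

/-- The constant in the boundary gradient estimate `flat_est`. -/
def flatC (ρ M K : ℝ) : ℝ := 8 * (2 * M / (3 * ρ) + (K + 1) * (3 * ρ)) + (K + 1) * ρ

/-- Boundary gradient estimate: a bounded function with bounded Laplacian vanishing on a flat
piece of boundary grows at most linearly away from it and has bounded gradient. -/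
theorem flat_est {f fs ft fss ftt : ℝ → ℝ → ℂ} {s₀ ρ M K : ℝ} (hρ : 0 < ρ) (hM0 : 0 ≤ M) (hK0 : 0 ≤ K)
    (hc : ContinuousOn (fun z : ℝ × ℝ => f z.1 z.2)
      (Ioo (s₀ - 8 * ρ) (s₀ + 8 * ρ) ×ˢ Ico 0 (8 * ρ)))
    (h0 : ∀ s ∈ Ioo (s₀ - 8 * ρ) (s₀ + 8 * ρ), f s 0 = 0)
    (hf : C2On f fs ft fss ftt (Ioo (s₀ - 8 * ρ) (s₀ + 8 * ρ)) (Ioo 0 (8 * ρ)))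
    (hM : ∀ s ∈ Ioo (s₀ - 8 * ρ) (s₀ + 8 * ρ), ∀ t ∈ Ioo 0 (8 * ρ), ‖f s t‖ ≤ M)
    (hK : ∀ s ∈ Ioo (s₀ - 8 * ρ) (s₀ + 8 * ρ), ∀ t ∈ Ioo 0 (8 * ρ), ‖fss s t + ftt s t‖ ≤ K)
    {t : ℝ} (ht : t ∈ Ioo 0 ρ) :
    ‖f s₀ t‖ ≤ flatC ρ M K * t ∧ ‖fs s₀ t‖ ≤ flatC ρ M K ∧ ‖ft s₀ t‖ ≤ flatC ρ M K := by
  have D2s : ∀ s ∈ Ioo (s₀ - 8 * ρ) (s₀ + 8 * ρ), ∀ t ∈ Ioo 0 (8 * ρ),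
      HasD2 (fun x => f x t) (fss s t) s := fun s hs t ht =>
    ⟨fun x => fs x t, by
      filter_upwards [Ioo_mem_nhds hs.1 hs.2] with x hx using hf.ds x hx t ht, hf.dss s hs t ht⟩
  have D2t : ∀ s ∈ Ioo (s₀ - 8 * ρ) (s₀ + 8 * ρ), ∀ t ∈ Ioo 0 (8 * ρ),
      HasD2 (fun y => f s y) (ftt s t) t := fun s hs t ht =>
    ⟨fun y => ft s y, by
      filter_upwards [Ioo_mem_nhds ht.1 ht.2] with y hy using hf.dt s hs y hy, hf.dtt s hs t ht⟩
  have B : ∀ s ∈ Ioo (s₀ - 4 * ρ) (s₀ + 4 * ρ), ∀ t ∈ Icc 0 (3 * ρ),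
      ‖f s t‖ ≤ (2 * M / (3 * ρ) + (K + 1) * (3 * ρ)) * t := by
    intro s hs t ht
    have mem : ∀ y ∈ Icc (-(3 * ρ)) (3 * ρ), s + y ∈ Ioo (s₀ - 8 * ρ) (s₀ + 8 * ρ) := fun y hy =>
      ⟨by linarith [hs.1, hy.1], by linarith [hs.2, hy.2]⟩
    have := barrier_complex (f := fun y t => f (s + y) t) (ρ := 3 * ρ) (by linarith) hM0 hK0 ?_
      ?_ ?_ ?_ ht
    · simpa using this
    · refine hc.comp (f := fun z : ℝ × ℝ => (s + z.1, z.2)) (by fun_prop) ?_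
      rintro ⟨y, x⟩ ⟨hy, hx⟩
      exact ⟨mem y hy, hx.1, by linarith [hx.2]⟩
    · intro y hy
      exact h0 _ (mem y hy)
    · intro y hy t ht
      rcases eq_or_lt_of_le ht.1 with h | h
      · rw [← h, h0 _ (mem y hy), norm_zero]; exact hM0
      · exact hM _ (mem y hy) _ ⟨h, by linarith [ht.2]⟩
    · intro y hy t ht
      have m1 := mem y ⟨hy.1.le, hy.2.le⟩
      have m2 : t ∈ Ioo 0 (8 * ρ) := ⟨ht.1, by linarith [ht.2]⟩
      refine ⟨_, _, ?_, D2t _ m1 _ m2, hK _ m1 _ m2⟩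
      have h1 : HasD2 (fun y => (fun x => f x t) (1 * y + s)) (fss (s + y) t) y :=
        HasD2.comp_affine (k := 1) (by norm_num) (by rw [one_mul, add_comm]; exact D2s _ m1 _ m2)
      convert h1 using 3
      ring
  have hB0 : 0 ≤ 2 * M / (3 * ρ) + (K + 1) * (3 * ρ) := by positivity
  obtain ⟨ht0, ht1⟩ := ht
  set Bc := 2 * M / (3 * ρ) + (K + 1) * (3 * ρ) with hBc
  clear_value Bc
  have hle : Bc ≤ flatC ρ M K := by
    rw [flatC, ← hBc]
    have : 0 ≤ (K + 1) * ρ := by positivity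
    linarith
  have sub : ∀ s ∈ Ioo (s₀ - 3 * t / 4) (s₀ + 3 * t / 4), s ∈ Ioo (s₀ - 4 * ρ) (s₀ + 4 * ρ) ∧
      s ∈ Ioo (s₀ - 8 * ρ) (s₀ + 8 * ρ) := fun s hs =>
    ⟨⟨by linarith [hs.1], by linarith [hs.2]⟩, ⟨by linarith [hs.1], by linarith [hs.2]⟩⟩
  have sut : ∀ x ∈ Ioo (t - 3 * t / 4) (t + 3 * t / 4), x ∈ Icc 0 (3 * ρ) ∧
      x ∈ Ioo 0 (8 * ρ) := fun s hs =>
    ⟨⟨by linarith [hs.1], by linarith [hs.2]⟩, ⟨by linarith [hs.1], by linarith [hs.2]⟩⟩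
  have G := grad_est (f := f) (fs := fs) (ft := ft) (fss := fss) (ftt := ftt) (s₀ := s₀) (t₀ := t)
    (d := 3 * t / 4) (ρ := t / 2) (M := Bc * (2 * t)) (K := K) (by linarith) (by linarith)
    (by positivity) hK0 (hc.mono ?_) ⟨?_, ?_, ?_, ?_⟩ ?_ ?_
  · have e1 : 2 * (Bc * (2 * t)) / (t / 2) + (K + 1) * (t / 2) ≤ flatC ρ M K := by
      have : 2 * (Bc * (2 * t)) / (t / 2) = 8 * Bc := by field_simp; ring
      rw [this, flatC, ← hBc]
      have : (K + 1) * (t / 2) ≤ (K + 1) * ρ :=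
        mul_le_mul_of_nonneg_left (by linarith) (by linarith)
      linarith
    refine ⟨?_, G.1.trans e1, G.2.trans e1⟩
    exact (B s₀ ⟨by linarith, by linarith⟩ t ⟨by linarith, by linarith⟩).trans
      (mul_le_mul_of_nonneg_right hle ht0.le)
  · rintro ⟨s, x⟩ ⟨hs, hx⟩
    exact ⟨(sub s hs).2, Ioo_subset_Ico_self (sut x hx).2⟩
  · exact fun s hs x hx => hf.ds s (sub s hs).2 x (sut x hx).2
  · exact fun s hs x hx => hf.dt s (sub s hs).2 x (sut x hx).2
  · exact fun s hs x hx => hf.dss s (sub s hs).2 x (sut x hx).2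
  · exact fun s hs x hx => hf.dtt s (sub s hs).2 x (sut x hx).2
  · intro s hs x hx
    exact (B s (sub s hs).1 x (sut x hx).1).trans
      (mul_le_mul_of_nonneg_left (by linarith [hx.2]) hB0)
  · exact fun s hs x hx => hK s (sub s hs).2 x (sut x hx).2

theorem norm_le_of_quot {g : ℝ → ℂ} {g' : ℂ} {C ρ s : ℝ} (hρ : 0 < ρ) (h : HasDerivAt g g' s)
    (hb : ∀ h ∈ Ioo 0 ρ, ‖h⁻¹ • (g (s + h) - g s)‖ ≤ C) : ‖g'‖ ≤ C := by
  refine le_of_tendsto h.tendsto_slope_zero_right.norm ?_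
  filter_upwards [Ioo_mem_nhdsGT hρ] with t ht using hb t ht

theorem quot_le_of_deriv {g g' : ℝ → ℂ} {C s h : ℝ} (hh : 0 < h)
    (hd : ∀ x ∈ Icc s (s + h), HasDerivAt g (g' x) x) (hb : ∀ x ∈ Icc s (s + h), ‖g' x‖ ≤ C) :
    ‖h⁻¹ • (g (s + h) - g s)‖ ≤ C := by
  have := (convex_Icc s (s + h)).norm_image_sub_le_of_norm_hasDerivWithin_le
    (fun x hx => (hd x hx).hasDerivWithinAt) hb (left_mem_Icc.2 (by linarith))
    (right_mem_Icc.2 (by linarith))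
  rw [norm_smul, norm_inv, Real.norm_of_nonneg hh.le, inv_mul_le_iff₀ hh]
  rw [add_sub_cancel_left, Real.norm_of_nonneg hh.le] at this
  linarith

/-- Second-order boundary estimate for `Δf = -Wf`, obtained by applying `flat_est` to difference
quotients of `f` along the boundary. -/
theorem flat_est2 {f fs ft fss fts ftt : ℝ → ℝ → ℂ} {W Ws : ℝ → ℝ → ℝ} {s₀ ρ M B : ℝ} (hρ : 0 < ρ)
    (hM0 : 0 ≤ M) (hB0 : 0 ≤ B)
    (hc : ContinuousOn (fun z : ℝ × ℝ => f z.1 z.2)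
      (Ioo (s₀ - 10 * ρ) (s₀ + 10 * ρ) ×ˢ Ico 0 (8 * ρ)))
    (h0 : ∀ s ∈ Ioo (s₀ - 10 * ρ) (s₀ + 10 * ρ), f s 0 = 0)
    (hf : C2On f fs ft fss ftt (Ioo (s₀ - 10 * ρ) (s₀ + 10 * ρ)) (Ioo 0 (8 * ρ)))
    (hts : ∀ s ∈ Ioo (s₀ - 10 * ρ) (s₀ + 10 * ρ), ∀ t ∈ Ioo 0 (8 * ρ),
      HasDerivAt (fun x => ft x t) (fts s t) s)
    (hM : ∀ s ∈ Ioo (s₀ - 10 * ρ) (s₀ + 10 * ρ), ∀ t ∈ Ioo 0 (8 * ρ), ‖f s t‖ ≤ M)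
    (heq : ∀ s ∈ Ioo (s₀ - 10 * ρ) (s₀ + 10 * ρ), ∀ t ∈ Ioo 0 (8 * ρ),
      fss s t + ftt s t = -(W s t : ℂ) * f s t)
    (hW : ∀ s ∈ Ioo (s₀ - 10 * ρ) (s₀ + 10 * ρ), ∀ t ∈ Ioo 0 (8 * ρ), |W s t| ≤ B)
    (hWd : ∀ s ∈ Ioo (s₀ - 10 * ρ) (s₀ + 10 * ρ), ∀ t ∈ Ioo 0 (8 * ρ),
      HasDerivAt (fun x => W x t) (Ws s t) s ∧ |Ws s t| ≤ B)
    {t : ℝ} (ht : t ∈ Ioo 0 (ρ / 8)) :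
    (‖f s₀ t‖ ≤ flatC ρ M (B * M) * t ∧ ‖ft s₀ t‖ ≤ flatC ρ M (B * M)) ∧
    ‖fs s₀ t‖ ≤ flatC (ρ / 8) (flatC ρ M (B * M)) (B * M + B * flatC ρ M (B * M)) * t ∧
    ‖fss s₀ t‖ ≤ flatC (ρ / 8) (flatC ρ M (B * M)) (B * M + B * flatC ρ M (B * M)) ∧
    ‖fts s₀ t‖ ≤ flatC (ρ / 8) (flatC ρ M (B * M)) (B * M + B * flatC ρ M (B * M)) := by
  have L1 : ∀ s ∈ Ioo (s₀ - 2 * ρ) (s₀ + 2 * ρ), ∀ t ∈ Ioo 0 ρ,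
      ‖f s t‖ ≤ flatC ρ M (B * M) * t ∧ ‖fs s t‖ ≤ flatC ρ M (B * M) ∧
      ‖ft s t‖ ≤ flatC ρ M (B * M) := by
    intro s hs t ht
    have sub : Ioo (s - 8 * ρ) (s + 8 * ρ) ⊆ Ioo (s₀ - 10 * ρ) (s₀ + 10 * ρ) := fun x hx =>
      ⟨by linarith [hs.1, hx.1], by linarith [hs.2, hx.2]⟩
    refine flat_est hρ hM0 (by positivity) (hc.mono (prod_mono sub le_rfl))
      (fun x hx => h0 x (sub hx))
      ⟨fun x hx => hf.ds x (sub hx), fun x hx => hf.dt x (sub hx), fun x hx => hf.dss x (sub hx),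
        fun x hx => hf.dtt x (sub hx)⟩ (fun x hx => hM x (sub hx)) (fun x hx y hy => ?_) ht
    rw [heq x (sub hx) y hy, norm_mul, norm_neg, Complex.norm_real]
    exact mul_le_mul (hW x (sub hx) y hy) (hM x (sub hx) y hy) (norm_nonneg _) hB0
  set C1 := flatC ρ M (B * M) with hC1
  have hC10 : 0 ≤ C1 := by rw [hC1, flatC]; positivity
  clear_value C1
  have t8 : t < ρ := by linarith [ht.2]
  have L := L1 s₀ ⟨by linarith, by linarith⟩ t ⟨ht.1, t8⟩
  refine ⟨⟨L.1, L.2.2⟩, ?_⟩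
  have Q : ∀ h ∈ Ioo 0 ρ, ‖h⁻¹ • (f (s₀ + h) t - f s₀ t)‖ ≤
        flatC (ρ / 8) C1 (B * M + B * C1) * t ∧
      ‖h⁻¹ • (fs (s₀ + h) t - fs s₀ t)‖ ≤ flatC (ρ / 8) C1 (B * M + B * C1) ∧
      ‖h⁻¹ • (ft (s₀ + h) t - ft s₀ t)‖ ≤ flatC (ρ / 8) C1 (B * M + B * C1) := by
    intro h hh
    have mA : ∀ s ∈ Ioo (s₀ - 8 * (ρ / 8)) (s₀ + 8 * (ρ / 8)), ∀ x ∈ Icc s (s + h),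
        x ∈ Ioo (s₀ - 2 * ρ) (s₀ + 2 * ρ) ∧ x ∈ Ioo (s₀ - 10 * ρ) (s₀ + 10 * ρ) := fun s hs x hx =>
      ⟨⟨by linarith [hs.1, hx.1], by linarith [hs.2, hx.2, hh.2]⟩,
        ⟨by linarith [hs.1, hx.1], by linarith [hs.2, hx.2, hh.2]⟩⟩
    have m0 : ∀ s ∈ Ioo (s₀ - 8 * (ρ / 8)) (s₀ + 8 * (ρ / 8)),
        s ∈ Ioo (s₀ - 10 * ρ) (s₀ + 10 * ρ) := fun s hs => (mA s hs s ⟨le_rfl, by linarith [hh.1]⟩).2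
    have m1 : ∀ s ∈ Ioo (s₀ - 8 * (ρ / 8)) (s₀ + 8 * (ρ / 8)),
        s + h ∈ Ioo (s₀ - 10 * ρ) (s₀ + 10 * ρ) := fun s hs =>
      (mA s hs (s + h) ⟨by linarith [hh.1], le_rfl⟩).2
    have tt : ∀ t ∈ Ioo 0 (8 * (ρ / 8)), t ∈ Ioo 0 (8 * ρ) ∧ t ∈ Ioo 0 ρ := fun t ht =>
      ⟨⟨ht.1, by linarith [ht.2]⟩, ⟨ht.1, by linarith [ht.2]⟩⟩
    refine flat_est (f := fun s t => h⁻¹ • (f (s + h) t - f s t))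
      (fs := fun s t => h⁻¹ • (fs (s + h) t - fs s t))
      (ft := fun s t => h⁻¹ • (ft (s + h) t - ft s t))
      (fss := fun s t => h⁻¹ • (fss (s + h) t - fss s t))
      (ftt := fun s t => h⁻¹ • (ftt (s + h) t - ftt s t)) (by linarith) hC10 (by positivity)
      ?_ ?_ ⟨?_, ?_, ?_, ?_⟩ ?_ ?_ ht
    · refine ContinuousOn.fun_const_smul (ContinuousOn.sub ?_ ?_) _
      · refine hc.comp (f := fun z : ℝ × ℝ => (z.1 + h, z.2)) (by fun_prop) ?_
        rintro ⟨y, x⟩ ⟨hy, hx⟩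
        exact ⟨m1 y hy, hx.1, by linarith [hx.2]⟩
      · refine hc.mono ?_
        rintro ⟨y, x⟩ ⟨hy, hx⟩
        exact ⟨m0 y hy, hx.1, by linarith [hx.2]⟩
    · intro s hs
      simp [h0 s (m0 s hs), h0 (s + h) (m1 s hs)]
    · intro s hs x hx
      exact ((HasDerivAt.comp_add_const (f := fun y => f y x) s h (hf.ds _ (m1 s hs) x (tt x hx).1)).sub
        (hf.ds _ (m0 s hs) x (tt x hx).1)).const_smul h⁻¹
    · intro s hs x hx
      exact ((hf.dt _ (m1 s hs) x (tt x hx).1).sub (hf.dt _ (m0 s hs) x (tt x hx).1)).const_smul h⁻¹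
    · intro s hs x hx
      exact ((HasDerivAt.comp_add_const s h (f := fun y => fs y x) (hf.dss _ (m1 s hs) x (tt x hx).1)).sub
        (hf.dss _ (m0 s hs) x (tt x hx).1)).const_smul h⁻¹
    · intro s hs x hx
      exact ((hf.dtt _ (m1 s hs) x (tt x hx).1).sub (hf.dtt _ (m0 s hs) x (tt x hx).1)).const_smul h⁻¹
    · intro s hs x hx
      exact quot_le_of_deriv (g := fun y => f y x) (g' := fun y => fs y x) hh.1
        (fun y hy => hf.ds y (mA s hs y hy).2 x (tt x hx).1)
        (fun y hy => (L1 y (mA s hs y hy).1 x (tt x hx).2).2.1)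
    · intro s hs x hx
      rw [← smul_add, sub_add_sub_comm, heq _ (m1 s hs) x (tt x hx).1, heq _ (m0 s hs) x (tt x hx).1]
      refine quot_le_of_deriv (g := fun y => -(W y x : ℂ) * f y x)
        (g' := fun y => -(Ws y x : ℂ) * f y x + -(W y x : ℂ) * fs y x) hh.1 ?_ ?_
      · intro y hy
        exact ((hWd y (mA s hs y hy).2 x (tt x hx).1).1.ofReal_comp.neg).mul
          (hf.ds y (mA s hs y hy).2 x (tt x hx).1)
      · intro y hy
        have mm := (mA s hs y hy).2
        have mx := (tt x hx).1
        refine (norm_add_le _ _).trans (add_le_add ?_ ?_)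
        · rw [norm_mul, norm_neg, Complex.norm_real]
          exact mul_le_mul (hWd y mm x mx).2 (hM y mm x mx) (norm_nonneg _) hB0
        · rw [norm_mul, norm_neg, Complex.norm_real]
          exact mul_le_mul (hW y mm x mx) (L1 y (mA s hs y hy).1 x (tt x hx).2).2.1 (norm_nonneg _) hB0
  have ms : s₀ ∈ Ioo (s₀ - 10 * ρ) (s₀ + 10 * ρ) := ⟨by linarith, by linarith⟩
  have mt : t ∈ Ioo 0 (8 * ρ) := ⟨ht.1, by linarith⟩
  exact ⟨norm_le_of_quot hρ (hf.ds _ ms _ mt) fun h hh => (Q h hh).1,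
    norm_le_of_quot hρ (hf.dss _ ms _ mt) fun h hh => (Q h hh).2.1,
    norm_le_of_quot hρ (hts _ ms _ mt) fun h hh => (Q h hh).2.2⟩

end

/-! ### Solutions on strips and their integral identities -/

section

/-- A `C²` solution `v` of `Δv = -Wv` on the strip `I × (-π/2, π/2)`, vanishing on the two edges,
together with its partial derivatives (`s` along the strip, `t` across it). -/
structure Strip (v vs vt vss vst vtt : ℝ → ℝ → ℂ) (W Ws : ℝ → ℝ → ℝ) (I : Set ℝ) : Prop where
  isOpen : IsOpen I
  cv : ContinuousOn (fun z : ℝ × ℝ => v z.1 z.2) (I ×ˢ Icc (-(π / 2)) (π / 2))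
  zr : ∀ s ∈ I, v s (π / 2) = 0
  zl : ∀ s ∈ I, v s (-(π / 2)) = 0
  ds : ∀ s ∈ I, ∀ t ∈ Ioo (-(π / 2)) (π / 2), HasDerivAt (fun x => v x t) (vs s t) s
  dt : ∀ s ∈ I, ∀ t ∈ Ioo (-(π / 2)) (π / 2), HasDerivAt (fun y => v s y) (vt s t) t
  dss : ∀ s ∈ I, ∀ t ∈ Ioo (-(π / 2)) (π / 2), HasDerivAt (fun x => vs x t) (vss s t) s
  dst : ∀ s ∈ I, ∀ t ∈ Ioo (-(π / 2)) (π / 2), HasDerivAt (fun y => vs s y) (vst s t) t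
  dts : ∀ s ∈ I, ∀ t ∈ Ioo (-(π / 2)) (π / 2), HasDerivAt (fun x => vt x t) (vst s t) s
  dtt : ∀ s ∈ I, ∀ t ∈ Ioo (-(π / 2)) (π / 2), HasDerivAt (fun y => vt s y) (vtt s t) t
  cvs : ContinuousOn (fun z : ℝ × ℝ => vs z.1 z.2) (I ×ˢ Ioo (-(π / 2)) (π / 2))
  cvt : ContinuousOn (fun z : ℝ × ℝ => vt z.1 z.2) (I ×ˢ Ioo (-(π / 2)) (π / 2))
  cvss : ContinuousOn (fun z : ℝ × ℝ => vss z.1 z.2) (I ×ˢ Ioo (-(π / 2)) (π / 2))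
  cvst : ContinuousOn (fun z : ℝ × ℝ => vst z.1 z.2) (I ×ˢ Ioo (-(π / 2)) (π / 2))
  cW : ContinuousOn (fun z : ℝ × ℝ => W z.1 z.2) (I ×ˢ Ioo (-(π / 2)) (π / 2))
  cWs : ContinuousOn (fun z : ℝ × ℝ => Ws z.1 z.2) (I ×ˢ Ioo (-(π / 2)) (π / 2))
  eq : ∀ s ∈ I, ∀ t ∈ Ioo (-(π / 2)) (π / 2), vss s t + vtt s t = -(W s t : ℂ) * v s t
  dW : ∀ s ∈ I, ∀ t ∈ Ioo (-(π / 2)) (π / 2), HasDerivAt (fun x => W x t) (Ws s t) s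
  W0 : ∀ s ∈ I, ∀ t ∈ Ioo (-(π / 2)) (π / 2), 0 ≤ W s t
  bW : ∀ s ∈ I, ∀ t ∈ Ioo (-(π / 2)) (π / 2), W s t ≤ 1
  bWs : ∀ s ∈ I, ∀ t ∈ Ioo (-(π / 2)) (π / 2), |Ws s t| ≤ 1

namespace Strip
variable {v vs vt vss vst vtt : ℝ → ℝ → ℂ} {W Ws : ℝ → ℝ → ℝ} {I : Set ℝ}

theorem reflect (S : Strip v vs vt vss vst vtt W Ws I) :
    Strip (fun s t => v s (-t)) (fun s t => vs s (-t)) (fun s t => -vt s (-t))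
      (fun s t => vss s (-t)) (fun s t => -vst s (-t)) (fun s t => vtt s (-t))
      (fun s t => W s (-t)) (fun s t => Ws s (-t)) I := by
  have m : ∀ t ∈ Ioo (-(π / 2)) (π / 2), -t ∈ Ioo (-(π / 2)) (π / 2) := fun t ht =>
    ⟨by linarith [ht.2], by linarith [ht.1]⟩
  have mc : MapsTo (fun z : ℝ × ℝ => (z.1, -z.2)) (I ×ˢ Ioo (-(π / 2)) (π / 2))
      (I ×ˢ Ioo (-(π / 2)) (π / 2)) := fun z hz => ⟨hz.1, m _ hz.2⟩
  have neg : ∀ {g : ℝ → ℂ} {d : ℂ} {t : ℝ}, HasDerivAt g d (-t) →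
      HasDerivAt (fun y => g (-y)) (-d) t := by
    intro g d t h
    exact (h.scomp t (hasDerivAt_neg t)).congr_deriv (by simp)
  refine ⟨S.isOpen, ?_, ?_, ?_, fun s hs t ht => S.ds s hs _ (m t ht),
    fun s hs t ht => neg (S.dt s hs _ (m t ht)), fun s hs t ht => S.dss s hs _ (m t ht),
    fun s hs t ht => neg (S.dst s hs _ (m t ht)), fun s hs t ht => (S.dts s hs _ (m t ht)).neg,
    fun s hs t ht => ?_, S.cvs.comp (by fun_prop) mc, (S.cvt.comp (by fun_prop) mc).neg,
    S.cvss.comp (by fun_prop) mc, (S.cvst.comp (by fun_prop) mc).neg, S.cW.comp (by fun_prop) mc,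
    S.cWs.comp (by fun_prop) mc, fun s hs t ht => S.eq s hs _ (m t ht),
    fun s hs t ht => S.dW s hs _ (m t ht), fun s hs t ht => S.W0 s hs _ (m t ht),
    fun s hs t ht => S.bW s hs _ (m t ht), fun s hs t ht => S.bWs s hs _ (m t ht)⟩
  · exact S.cv.comp (f := fun z : ℝ × ℝ => (z.1, -z.2)) (by fun_prop)
      fun z hz => ⟨hz.1, by linarith [hz.2.2], by linarith [hz.2.1]⟩
  · exact fun s hs => S.zl s hs
  · exact fun s hs => by simpa using S.zr s hs
  · exact (neg (S.dtt s hs _ (m t ht))).neg.congr_deriv (neg_neg _)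

theorem bound_end (S : Strip v vs vt vss vst vtt W Ws I) {s₀ ρ M : ℝ} (hρ : 0 < ρ) (hρ1 : ρ ≤ 1 / 10)
    (hI : Icc (s₀ - 11 * ρ) (s₀ + 11 * ρ) ⊆ I)
    (hM : ∀ s ∈ Icc (s₀ - 11 * ρ) (s₀ + 11 * ρ), ∀ t ∈ Icc (-(π / 2)) (π / 2), ‖v s t‖ ≤ M) :
    ∃ C, 0 ≤ C ∧ ∀ s ∈ Ioo (s₀ - ρ) (s₀ + ρ), ∀ t ∈ Ioo (π / 2 - ρ / 8) (π / 2),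
      ‖v s t‖ ≤ C * (π / 2 - t) ∧ ‖vs s t‖ ≤ C * (π / 2 - t) ∧ ‖vt s t‖ ≤ C ∧
      ‖vss s t‖ ≤ C ∧ ‖vst s t‖ ≤ C := by
  have hpi := Real.pi_gt_three
  have hM0 : 0 ≤ M := (norm_nonneg _).trans (hM s₀ ⟨by linarith, by linarith⟩ 0 ⟨by linarith, by linarith⟩)
  set C1 := flatC ρ M (1 * M) with hC1
  set C2 := flatC (ρ / 8) C1 (1 * M + 1 * C1) with hC2
  have h1 : 0 ≤ C1 := by rw [hC1, flatC]; positivity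
  have h2 : 0 ≤ C2 := by rw [hC2, flatC]; positivity
  refine ⟨C1 + C2, by positivity, fun s hs t ht => ?_⟩
  have mI : ∀ x ∈ Ioo (s - 10 * ρ) (s + 10 * ρ), x ∈ Icc (s₀ - 11 * ρ) (s₀ + 11 * ρ) := fun x hx =>
    ⟨by linarith [hs.1, hx.1], by linarith [hs.2, hx.2]⟩
  have mt : ∀ y ∈ Ioo 0 (8 * ρ), π / 2 - y ∈ Ioo (-(π / 2)) (π / 2) := fun y hy =>
    ⟨by linarith [hy.2], by linarith [hy.1]⟩
  have neg : ∀ {g : ℝ → ℂ} {d : ℂ} {t : ℝ}, HasDerivAt g d (π / 2 - t) →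
      HasDerivAt (fun y => g (π / 2 - y)) (-d) t := fun h => HasDerivAt.comp_const_sub _ _ h
  have ht' : π / 2 - t ∈ Ioo 0 (ρ / 8) := ⟨by linarith [ht.2], by linarith [ht.1]⟩
  have key := flat_est2 (f := fun s t => v s (π / 2 - t)) (fs := fun s t => vs s (π / 2 - t))
    (ft := fun s t => -vt s (π / 2 - t)) (fss := fun s t => vss s (π / 2 - t))
    (fts := fun s t => -vst s (π / 2 - t)) (ftt := fun s t => vtt s (π / 2 - t))
    (W := fun s t => W s (π / 2 - t)) (Ws := fun s t => Ws s (π / 2 - t)) (s₀ := s) (B := 1) hρ hM0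
    zero_le_one ?_ ?_ ⟨?_, ?_, ?_, ?_⟩ ?_ ?_ ?_ ?_ ?_ ht'
  · rw [← hC1, ← hC2] at key
    simp only [sub_sub_cancel, norm_neg] at key
    obtain ⟨⟨k1, k2⟩, k3, k4, k5⟩ := key
    have h0 := ht'.1
    have p1 : 0 ≤ C1 * (π / 2 - t) := by positivity
    have p2 : 0 ≤ C2 * (π / 2 - t) := by positivity
    refine ⟨?_, ?_, ?_, ?_, ?_⟩ <;> linarith
  · refine S.cv.comp (f := fun z : ℝ × ℝ => (z.1, π / 2 - z.2)) (by fun_prop) ?_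
    rintro ⟨x, y⟩ ⟨hx, hy⟩
    exact ⟨hI (mI x hx), by linarith [hy.2], by linarith [hy.1]⟩
  · exact fun x hx => by simpa using S.zr x (hI (mI x hx))
  · exact fun x hx y hy => S.ds x (hI (mI x hx)) _ (mt y hy)
  · exact fun x hx y hy => neg (S.dt x (hI (mI x hx)) _ (mt y hy))
  · exact fun x hx y hy => S.dss x (hI (mI x hx)) _ (mt y hy)
  · intro x hx y hy
    exact (neg (S.dtt x (hI (mI x hx)) _ (mt y hy))).neg.congr_deriv (neg_neg _)
  · exact fun x hx y hy => (S.dts x (hI (mI x hx)) _ (mt y hy)).neg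
  · exact fun x hx y hy => hM x (mI x hx) _ (Ioo_subset_Icc_self (mt y hy))
  · exact fun x hx y hy => S.eq x (hI (mI x hx)) _ (mt y hy)
  · intro x hx y hy
    rw [abs_of_nonneg (S.W0 x (hI (mI x hx)) _ (mt y hy))]
    exact S.bW x (hI (mI x hx)) _ (mt y hy)
  · exact fun x hx y hy => ⟨S.dW x (hI (mI x hx)) _ (mt y hy), S.bWs x (hI (mI x hx)) _ (mt y hy)⟩

/-- Local uniform bounds up to the edges of the strip. -/
theorem bounds (S : Strip v vs vt vss vst vtt W Ws I) {s₀ : ℝ} (hs₀ : s₀ ∈ I) :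
    ∃ δ, 0 < δ ∧ ∃ C, 0 ≤ C ∧ Ioo (s₀ - δ) (s₀ + δ) ⊆ I ∧
      ∀ s ∈ Ioo (s₀ - δ) (s₀ + δ), ∀ t ∈ Ioo (-(π / 2)) (π / 2),
      ‖v s t‖ ≤ C * (π / 2 - |t|) ∧ ‖vs s t‖ ≤ C * (π / 2 - |t|) ∧ ‖vt s t‖ ≤ C ∧
      ‖vss s t‖ ≤ C ∧ ‖vst s t‖ ≤ C := by
  have hpi := Real.pi_gt_three
  obtain ⟨ε, hε, hb⟩ := Metric.nhds_basis_closedBall.mem_iff.1 (S.isOpen.mem_nhds hs₀)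
  rw [Real.closedBall_eq_Icc] at hb
  set ρ := min (ε / 11) (1 / 10) with hρd
  have hρ : 0 < ρ := by positivity
  have hρ1 : ρ ≤ 1 / 10 := min_le_right _ _
  have hρ2 : ρ ≤ ε / 11 := min_le_left _ _
  clear_value ρ
  have hI : Icc (s₀ - 11 * ρ) (s₀ + 11 * ρ) ⊆ I := (Icc_subset_Icc (by linarith) (by linarith)).trans hb
  have hK : IsCompact (Icc (s₀ - 11 * ρ) (s₀ + 11 * ρ) ×ˢ Icc (-(π / 2)) (π / 2)) :=
    isCompact_Icc.prod isCompact_Icc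
  obtain ⟨M, hM⟩ := hK.exists_bound_of_continuousOn (S.cv.mono (prod_mono hI le_rfl))
  have hM' : ∀ s ∈ Icc (s₀ - 11 * ρ) (s₀ + 11 * ρ), ∀ t ∈ Icc (-(π / 2)) (π / 2), ‖v s t‖ ≤ M :=
    fun s hs t ht => hM (s, t) ⟨hs, ht⟩
  have hM0 : 0 ≤ M := (norm_nonneg _).trans (hM' s₀ ⟨by linarith, by linarith⟩ 0 ⟨by linarith, by linarith⟩)
  obtain ⟨C1, hC1, b1⟩ := S.bound_end hρ hρ1 hI hM'
  obtain ⟨C2, hC2, b2⟩ := S.reflect.bound_end hρ hρ1 hI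
    (fun s hs t ht => hM' s hs (-t) ⟨by linarith [ht.2], by linarith [ht.1]⟩)
  have hK2 : IsCompact (Icc (s₀ - ρ) (s₀ + ρ) ×ˢ Icc (-(π / 2 - ρ / 8)) (π / 2 - ρ / 8)) :=
    isCompact_Icc.prod isCompact_Icc
  have sub2 : Icc (s₀ - ρ) (s₀ + ρ) ×ˢ Icc (-(π / 2 - ρ / 8)) (π / 2 - ρ / 8) ⊆
      I ×ˢ Ioo (-(π / 2)) (π / 2) := by
    rintro ⟨x, y⟩ ⟨hx, hy⟩
    exact ⟨hI ⟨by linarith [hx.1], by linarith [hx.2]⟩, by linarith [hy.1], by linarith [hy.2]⟩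
  obtain ⟨B1, hB1⟩ := hK2.exists_bound_of_continuousOn (S.cvs.mono sub2)
  obtain ⟨B2, hB2⟩ := hK2.exists_bound_of_continuousOn (S.cvt.mono sub2)
  obtain ⟨B3, hB3⟩ := hK2.exists_bound_of_continuousOn (S.cvss.mono sub2)
  obtain ⟨B4, hB4⟩ := hK2.exists_bound_of_continuousOn (S.cvst.mono sub2)
  have o : ((s₀, 0) : ℝ × ℝ) ∈ Icc (s₀ - ρ) (s₀ + ρ) ×ˢ Icc (-(π / 2 - ρ / 8)) (π / 2 - ρ / 8) :=
    ⟨⟨by linarith, by linarith⟩, ⟨by linarith, by linarith⟩⟩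
  have p1 := (norm_nonneg _).trans (hB1 _ o)
  have p2 := (norm_nonneg _).trans (hB2 _ o)
  have p3 := (norm_nonneg _).trans (hB3 _ o)
  have p4 := (norm_nonneg _).trans (hB4 _ o)
  have hq : 0 ≤ (M + B1) * (8 / ρ) := by positivity
  refine ⟨ρ, hρ, C1 + C2 + (M + B1) * (8 / ρ) + B2 + B3 + B4, by positivity,
    fun x hx => hI ⟨by linarith [hx.1], by linarith [hx.2]⟩, fun s hs t ht => ?_⟩
  have ht0 : 0 < π / 2 - |t| := by linarith [abs_lt.2 ht]
  set Q := (M + B1) * (8 / ρ) with hQ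
  by_cases c1 : π / 2 - ρ / 8 < t
  · obtain ⟨k1, k2, k3, k4, k5⟩ := b1 s hs t ⟨c1, ht.2⟩
    have e : |t| = t := abs_of_nonneg (by linarith)
    rw [e] at ht0 ⊢
    have : C1 * (π / 2 - t) ≤ (C1 + C2 + Q + B2 + B3 + B4) * (π / 2 - t) :=
      mul_le_mul_of_nonneg_right (by linarith) ht0.le
    refine ⟨?_, ?_, ?_, ?_, ?_⟩ <;> linarith
  by_cases c2 : t < -(π / 2 - ρ / 8)
  · have k := b2 s hs (-t) ⟨by linarith, by linarith [ht.1]⟩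
    simp only [neg_neg, norm_neg] at k
    obtain ⟨k1, k2, k3, k4, k5⟩ := k
    have e : |t| = -t := abs_of_nonpos (by linarith)
    rw [e] at ht0 ⊢
    have : C2 * (π / 2 - -t) ≤ (C1 + C2 + Q + B2 + B3 + B4) * (π / 2 - -t) :=
      mul_le_mul_of_nonneg_right (by linarith) ht0.le
    refine ⟨?_, ?_, ?_, ?_, ?_⟩ <;> linarith
  push Not at c1 c2
  have hm : ((s, t) : ℝ × ℝ) ∈ Icc (s₀ - ρ) (s₀ + ρ) ×ˢ Icc (-(π / 2 - ρ / 8)) (π / 2 - ρ / 8) :=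
    ⟨⟨hs.1.le, hs.2.le⟩, c2, c1⟩
  have hd : ρ / 8 ≤ π / 2 - |t| := by linarith [abs_le.2 ⟨c2, c1⟩]
  have e1 : M + B1 ≤ (C1 + C2 + Q + B2 + B3 + B4) * (π / 2 - |t|) := by
    have : Q * (ρ / 8) = M + B1 := by rw [hQ]; field_simp
    have h3 : Q * (ρ / 8) ≤ Q * (π / 2 - |t|) := mul_le_mul_of_nonneg_left hd hq
    have h4 : Q * (π / 2 - |t|) ≤ (C1 + C2 + Q + B2 + B3 + B4) * (π / 2 - |t|) :=
      mul_le_mul_of_nonneg_right (by linarith) ht0.le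
    linarith
  have k0 := hM' s ⟨by linarith [hs.1], by linarith [hs.2]⟩ t ⟨ht.1.le, ht.2.le⟩
  have k1 := hB1 _ hm
  have k2 := hB2 _ hm
  have k3 := hB3 _ hm
  have k4 := hB4 _ hm
  simp only at k1 k2 k3 k4
  refine ⟨?_, ?_, ?_, ?_, ?_⟩ <;> linarith

end Strip

end

section

/-- The angular interval `(-π/2, π/2)`. -/
abbrev Ang : Set ℝ := Ioo (-(π / 2)) (π / 2)

/-- Bounded continuous functions on the angular interval. -/
def BC {E : Type*} [NormedAddCommGroup E] (f : ℝ → E) : Prop :=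
  ContinuousOn f Ang ∧ ∃ C, ∀ t ∈ Ang, ‖f t‖ ≤ C

namespace BC
variable {E : Type*} [NormedAddCommGroup E] [InnerProductSpace ℝ E]
set_option linter.unusedSectionVars false

theorem integrable {f : ℝ → E} (h : BC f) : IntegrableOn f Ang := by
  obtain ⟨hc, C, hC⟩ := h
  refine Integrable.of_bound (hc.aestronglyMeasurable measurableSet_Ioo) C ?_
  exact (ae_restrict_iff' measurableSet_Ioo).2 (Eventually.of_forall hC)

theorem add {f g : ℝ → E} (hf : BC f) (hg : BC g) : BC (fun t => f t + g t) := by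
  obtain ⟨hc, C, hC⟩ := hf
  obtain ⟨gc, D, hD⟩ := hg
  exact ⟨hc.add gc, C + D, fun t ht => (norm_add_le _ _).trans (add_le_add (hC t ht) (hD t ht))⟩

theorem smul {f : ℝ → ℝ} {g : ℝ → E} (hf : BC f) (hg : BC g) : BC (fun t => f t • g t) := by
  obtain ⟨hc, C, hC⟩ := hf
  obtain ⟨gc, D, hD⟩ := hg
  exact ⟨hc.smul gc, C * D, fun t ht => by
    rw [norm_smul]
    exact mul_le_mul (hC t ht) (hD t ht) (norm_nonneg _) ((norm_nonneg _).trans (hC t ht))⟩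

theorem mul {f g : ℝ → ℝ} (hf : BC f) (hg : BC g) : BC (fun t => f t * g t) := hf.smul hg

theorem const (c : E) : BC (fun _ => c) := ⟨continuousOn_const, ‖c‖, fun _ _ => le_rfl⟩

theorem neg {f : ℝ → E} (hf : BC f) : BC (fun t => -f t) :=
  ⟨hf.1.neg, by obtain ⟨C, hC⟩ := hf.2; exact ⟨C, fun t ht => by rw [norm_neg]; exact hC t ht⟩⟩

theorem sub {f g : ℝ → E} (hf : BC f) (hg : BC g) : BC (fun t => f t - g t) := by
  simpa [sub_eq_add_neg] using hf.add hg.neg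

theorem inner {f g : ℝ → E} (hf : BC f) (hg : BC g) : BC (fun t => inner ℝ (f t) (g t)) := by
  obtain ⟨hc, C, hC⟩ := hf
  obtain ⟨gc, D, hD⟩ := hg
  exact ⟨hc.inner gc, C * D, fun t ht => (norm_inner_le_norm _ _).trans
    (mul_le_mul (hC t ht) (hD t ht) (norm_nonneg _) ((norm_nonneg _).trans (hC t ht)))⟩

theorem norm {f : ℝ → E} (hf : BC f) : BC (fun t => ‖f t‖) :=
  ⟨hf.1.norm, by obtain ⟨C, hC⟩ := hf.2; exact ⟨C, fun t ht => by rw [norm_norm]; exact hC t ht⟩⟩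

theorem sq {f : ℝ → E} (hf : BC f) : BC (fun t => ‖f t‖ ^ 2) := by
  simpa [pow_two] using hf.norm.mul hf.norm

/-- Cauchy–Schwarz. -/
theorem cs_sq {f g : ℝ → E} (hf : BC f) (hg : BC g) :
    (∫ t in Ang, Inner.inner ℝ (f t) (g t)) ^ 2 ≤
      (∫ t in Ang, ‖f t‖ ^ 2) * ∫ t in Ang, ‖g t‖ ^ 2 := by
  have key : ∀ x : ℝ, 0 ≤ (∫ t in Ang, ‖f t‖ ^ 2) * (x * x) +
      (2 * ∫ t in Ang, Inner.inner ℝ (f t) (g t)) * x + ∫ t in Ang, ‖g t‖ ^ 2 := by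
    intro x
    have h : (∫ t in Ang, ‖x • f t + g t‖ ^ 2) = (∫ t in Ang, ‖f t‖ ^ 2) * (x * x) +
      (2 * ∫ t in Ang, Inner.inner ℝ (f t) (g t)) * x + ∫ t in Ang, ‖g t‖ ^ 2 := by
      rw [← integral_mul_const, ← integral_const_mul, ← integral_mul_const, ← integral_add, ← integral_add]
      · congr 1
        ext t
        rw [norm_add_sq_real, norm_smul, mul_pow, Real.norm_eq_abs, sq_abs, real_inner_smul_left]
        ring
      · exact (hf.sq.integrable.mul_const _).add (((hf.inner hg).integrable.const_mul 2).mul_const x)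
      · exact hg.sq.integrable
      · exact hf.sq.integrable.mul_const _
      · exact ((hf.inner hg).integrable.const_mul 2).mul_const x
    rw [← h]
    exact integral_nonneg fun t => by positivity
  have := discrim_le_zero key
  rw [discrim] at this
  linarith

theorem cs {f g : ℝ → E} (hf : BC f) (hg : BC g) :
    (∫ t in Ang, Inner.inner ℝ (f t) (g t)) ≤
      √(∫ t in Ang, ‖f t‖ ^ 2) * √(∫ t in Ang, ‖g t‖ ^ 2) := by
  rw [← Real.sqrt_mul (integral_nonneg fun t => by positivity)]
  exact Real.le_sqrt_of_sq_le (hf.cs_sq hg)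

theorem cs_norm {f g : ℝ → E} (hf : BC f) (hg : BC g) :
    (∫ t in Ang, ‖f t‖ * ‖g t‖) ≤
      √(∫ t in Ang, ‖f t‖ ^ 2) * √(∫ t in Ang, ‖g t‖ ^ 2) := by
  have := hf.norm.cs hg.norm
  simpa [mul_comm] using this

end BC

/-- An exact derivative whose primitive vanishes at both ends integrates to zero. -/
theorem ibp_zero {g g' : ℝ → ℝ} {C : ℝ} (hd : ∀ t ∈ Ang, HasDerivAt g (g' t) t) (hg : BC g')
    (hb : ∀ t ∈ Ang, |g t| ≤ C * (π / 2 - |t|)) : ∫ t in Ang, g' t = 0 := by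
  have hpi := Real.pi_pos
  have hle : -(π / 2) < π / 2 := by linarith
  rw [← integral_Ioc_eq_integral_Ioo, ← intervalIntegral.integral_of_le hle.le]
  have hInt : IntervalIntegrable g' volume (-(π / 2)) (π / 2) := by
    rw [intervalIntegrable_iff_integrableOn_Ioo_of_le hle.le]; exact hg.integrable
  have lim : ∀ x : ℝ, |x| = π / 2 → ∀ S : Set ℝ, (∀ᶠ t in nhdsWithin x S, t ∈ Ang) →
      Tendsto g (nhdsWithin x S) (nhds 0) := by
    intro x hx S hS
    refine squeeze_zero_norm' (a := fun t => C * (π / 2 - |t|)) ?_ ?_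
    · filter_upwards [hS] with t ht using hb t ht
    · have : ContinuousAt (fun t => C * (π / 2 - |t|)) x := by fun_prop
      have h2 := this.tendsto
      rw [hx, sub_self, mul_zero] at h2
      exact h2.mono_left nhdsWithin_le_nhds
  rw [intervalIntegral.integral_eq_sub_of_hasDerivAt_of_tendsto hle (fa := 0) (fb := 0) hd hInt
    (lim _ (by rw [abs_neg, abs_of_pos (by linarith)]) _ ?_)
    (lim _ (by rw [abs_of_pos (by linarith)]) _ ?_), sub_zero]
  · exact Ioo_mem_nhdsGT hle
  · exact Ioo_mem_nhdsLT hle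

/-- Differentiation under the angular integral. -/
theorem deriv_int {g g' : ℝ → ℝ → ℝ} {s₀ δ C : ℝ} (hδ : 0 < δ)
    (hd : ∀ s ∈ Ioo (s₀ - δ) (s₀ + δ), ∀ t ∈ Ang, HasDerivAt (fun x => g x t) (g' s t) s)
    (hg : ∀ s ∈ Ioo (s₀ - δ) (s₀ + δ), BC (g s)) (hg' : BC (g' s₀))
    (hC : ∀ s ∈ Ioo (s₀ - δ) (s₀ + δ), ∀ t ∈ Ang, |g' s t| ≤ C) :
    HasDerivAt (fun s => ∫ t in Ang, g s t) (∫ t in Ang, g' s₀ t) s₀ := by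
  have hs₀ : Ioo (s₀ - δ) (s₀ + δ) ∈ nhds s₀ := Ioo_mem_nhds (by linarith) (by linarith)
  refine (hasDerivAt_integral_of_dominated_loc_of_deriv_le (μ := volume.restrict Ang)
    (bound := fun _ => C) hs₀ ?_ (hg s₀ (mem_of_mem_nhds hs₀)).integrable
    hg'.integrable.aestronglyMeasurable ?_ ((BC.const C).integrable) ?_).2
  · filter_upwards [hs₀] with s hs using (hg s hs).integrable.aestronglyMeasurable
  · exact (ae_restrict_iff' measurableSet_Ioo).2 (Eventually.of_forall fun t ht s hs => hC s hs t ht)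
  · exact (ae_restrict_iff' measurableSet_Ioo).2 (Eventually.of_forall fun t ht s hs => hd s hs t ht)

end

section

namespace Strip
variable {v vs vt vss vst vtt : ℝ → ℝ → ℂ} {W Ws : ℝ → ℝ → ℝ} {I : Set ℝ}

theorem slice {E : Type*} [TopologicalSpace E] {g : ℝ → ℝ → E}
    (h : ContinuousOn (fun z : ℝ × ℝ => g z.1 z.2) (I ×ˢ Ang)) {s : ℝ} (hs : s ∈ I) :
    ContinuousOn (g s) Ang :=
  h.comp (f := fun t => (s, t)) (by fun_prop) fun t ht => ⟨hs, ht⟩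

theorem cvtt (S : Strip v vs vt vss vst vtt W Ws I) {s : ℝ} (hs : s ∈ I) :
    ContinuousOn (vtt s) Ang := by
  have h1 : ContinuousOn (fun t => -(W s t : ℂ) * v s t - vss s t) Ang := by
    refine ((Complex.continuous_ofReal.comp_continuousOn (slice S.cW hs)).neg.mul ?_).sub (slice S.cvss hs)
    exact slice (S.cv.mono (prod_mono le_rfl Ioo_subset_Icc_self)) hs
  exact h1.congr fun t ht => by simp only [← S.eq s hs t ht]; ring

theorem bc (S : Strip v vs vt vss vst vtt W Ws I) {s : ℝ} (hs : s ∈ I) :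
    BC (v s) ∧ BC (vs s) ∧ BC (vt s) ∧ BC (vss s) ∧ BC (vst s) ∧ BC (vtt s) ∧ BC (W s) ∧ BC (Ws s) := by
  obtain ⟨δ, hδ, C, hC, _, hb⟩ := S.bounds hs
  have ms : s ∈ Ioo (s - δ) (s + δ) := ⟨by linarith, by linarith⟩
  have hl : ∀ t ∈ Ang, C * (π / 2 - |t|) ≤ C * (π / 2) := fun t _ =>
    mul_le_mul_of_nonneg_left (by linarith [abs_nonneg t]) hC
  have bW : ∀ t ∈ Ang, ‖W s t‖ ≤ 1 := fun t ht => by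
    rw [Real.norm_of_nonneg (S.W0 s hs t ht)]; exact S.bW s hs t ht
  refine ⟨⟨slice (S.cv.mono (prod_mono le_rfl Ioo_subset_Icc_self)) hs, C * (π / 2), fun t ht =>
    (hb s ms t ht).1.trans (hl t ht)⟩, ⟨slice S.cvs hs, C * (π / 2), fun t ht =>
    (hb s ms t ht).2.1.trans (hl t ht)⟩, ⟨slice S.cvt hs, C, fun t ht => (hb s ms t ht).2.2.1⟩,
    ⟨slice S.cvss hs, C, fun t ht => (hb s ms t ht).2.2.2.1⟩,
    ⟨slice S.cvst hs, C, fun t ht => (hb s ms t ht).2.2.2.2⟩,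
    ⟨S.cvtt hs, C * (π / 2) + C, fun t ht => ?_⟩, ⟨slice S.cW hs, 1, bW⟩,
    ⟨slice S.cWs hs, 1, fun t ht => S.bWs s hs t ht⟩⟩
  obtain ⟨k1, k2, k3, k4, k5⟩ := hb s ms t ht
  have : vtt s t = -(W s t : ℂ) * v s t - vss s t := by rw [← S.eq s hs t ht]; ring
  rw [this]
  refine (norm_sub_le _ _).trans (add_le_add ?_ k4)
  rw [norm_mul, norm_neg, Complex.norm_real]
  calc ‖W s t‖ * ‖v s t‖ ≤ 1 * ‖v s t‖ := mul_le_mul_of_nonneg_right (bW t ht) (norm_nonneg _)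
    _ ≤ _ := by rw [one_mul]; exact k1.trans (hl t ht)

theorem edge (S : Strip v vs vt vss vst vtt W Ws I) {s : ℝ} (hs : s ∈ I) :
    ∃ C, 0 ≤ C ∧ ∀ t ∈ Ang, ‖v s t‖ ≤ C * (π / 2 - |t|) ∧ ‖vs s t‖ ≤ C * (π / 2 - |t|) ∧ ‖vt s t‖ ≤ C := by
  obtain ⟨δ, hδ, C, hC, _, hb⟩ := S.bounds hs
  have ms : s ∈ Ioo (s - δ) (s + δ) := ⟨by linarith, by linarith⟩
  exact ⟨C, hC, fun t ht => ⟨(hb s ms t ht).1, (hb s ms t ht).2.1, (hb s ms t ht).2.2.1⟩⟩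

theorem dH (S : Strip v vs vt vss vst vtt W Ws I) {s : ℝ} (hs : s ∈ I) :
    HasDerivAt (fun x => ∫ t in Ang, ‖v x t‖ ^ 2) (2 * ∫ t in Ang, inner ℝ (vs s t) (v s t)) s := by
  obtain ⟨δ, hδ, C, hC, hI, hb⟩ := S.bounds hs
  rw [← integral_const_mul]
  refine deriv_int (g' := fun s t => 2 * inner ℝ (vs s t) (v s t))
    (C := 2 * (C * (π / 2) * (C * (π / 2)))) hδ ?_ ?_ ?_ ?_
  · intro x hx t ht
    refine (S.ds x (hI hx) t ht).norm_sq.congr_deriv ?_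
    rw [real_inner_comm]
  · exact fun x hx => (S.bc (hI hx)).1.sq
  · exact (BC.const (2 : ℝ)).mul ((S.bc hs).2.1.inner (S.bc hs).1)
  · intro x hx t ht
    obtain ⟨k1, k2, _⟩ := hb x hx t ht
    have hl : C * (π / 2 - |t|) ≤ C * (π / 2) :=
      mul_le_mul_of_nonneg_left (by linarith [abs_nonneg t]) hC
    rw [abs_mul, abs_two]
    refine mul_le_mul_of_nonneg_left ?_ (by norm_num)
    exact (abs_real_inner_le_norm _ _).trans
      (mul_le_mul (k2.trans hl) (k1.trans hl) (norm_nonneg _) (by positivity))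

/-- Differentiation of the flux `∫ ⟪v_s, ψ⟫` against a fixed test function vanishing at the edges. -/
theorem dflux (S : Strip v vs vt vss vst vtt W Ws I) {s : ℝ} (hs : s ∈ I) {ψ ψ' : ℝ → ℂ} {C₀ : ℝ}
    (hψ : BC ψ) (hψ' : BC ψ') (hd : ∀ t ∈ Ang, HasDerivAt ψ (ψ' t) t)
    (he : ∀ t ∈ Ang, ‖ψ t‖ ≤ C₀ * (π / 2 - |t|)) :
    HasDerivAt (fun x => ∫ t in Ang, inner ℝ (vs x t) (ψ t))
      ((∫ t in Ang, inner ℝ (vt s t) (ψ' t)) - ∫ t in Ang, W s t * inner ℝ (v s t) (ψ t)) s := by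
  obtain ⟨δ, hδ, C, hC, hI, hb⟩ := S.bounds hs
  obtain ⟨b1, b2, b3, b4, b5, b6, b7, b8⟩ := S.bc hs
  have h1 : HasDerivAt (fun x => ∫ t in Ang, inner ℝ (vs x t) (ψ t))
      (∫ t in Ang, inner ℝ (vss s t) (ψ t)) s := by
    obtain ⟨D, hD⟩ := hψ.2
    refine deriv_int (g' := fun s t => inner ℝ (vss s t) (ψ t)) (C := C * D) hδ ?_ ?_ ?_ ?_
    · intro x hx t ht
      exact ((S.dss x (hI hx) t ht).inner ℝ (hasDerivAt_const x (ψ t))).congr_deriv (by simp)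
    · exact fun x hx => (S.bc (hI hx)).2.1.inner hψ
    · exact b4.inner hψ
    · intro x hx t ht
      exact (abs_real_inner_le_norm _ _).trans
        (mul_le_mul (hb x hx t ht).2.2.2.1 (hD t ht) (norm_nonneg _) hC)
  refine h1.congr_deriv ?_
  have z := ibp_zero (g := fun t => inner ℝ (vt s t) (ψ t)) (C := C * C₀)
    (g' := fun t => inner ℝ (vt s t) (ψ' t) + inner ℝ (vtt s t) (ψ t))
    (fun t ht => (S.dt s hs t ht |> fun _ => (S.dtt s hs t ht).inner ℝ (hd t ht)))
    ((b3.inner hψ').add (b6.inner hψ)) ?_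
  · rw [integral_add (b3.inner hψ').integrable (b6.inner hψ).integrable] at z
    have e : ∫ t in Ang, inner ℝ (vss s t) (ψ t) =
        ∫ t in Ang, (-(W s t * inner ℝ (v s t) (ψ t)) - inner ℝ (vtt s t) (ψ t)) := by
      refine setIntegral_congr_fun measurableSet_Ioo fun t ht => ?_
      have : vss s t = -((W s t) • v s t) - vtt s t := by
        rw [Complex.real_smul, ← neg_mul, ← S.eq s hs t ht]; ring
      simp only [this, inner_sub_left, inner_neg_left, real_inner_smul_left]
    rw [e, integral_sub (b7.mul (b1.inner hψ)).neg.integrable (b6.inner hψ).integrable, integral_neg]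
    linarith
  · intro t ht
    have ms : s ∈ Ioo (s - δ) (s + δ) := ⟨by linarith, by linarith⟩
    refine (abs_real_inner_le_norm _ _).trans ?_
    rw [mul_assoc]
    exact mul_le_mul (hb s ms t ht).2.2.1 (he t ht) (norm_nonneg _) hC

theorem dE (S : Strip v vs vt vss vst vtt W Ws I) {s : ℝ} (hs : s ∈ I) :
    HasDerivAt (fun x => ∫ t in Ang, inner ℝ (vs x t) (v x t))
      ((∫ t in Ang, ‖vs s t‖ ^ 2) + (∫ t in Ang, ‖vt s t‖ ^ 2) - ∫ t in Ang, W s t * ‖v s t‖ ^ 2) s := by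
  obtain ⟨δ, hδ, C, hC, hI, hb⟩ := S.bounds hs
  obtain ⟨b1, b2, b3, b4, b5, b6, b7, b8⟩ := S.bc hs
  have h1 : HasDerivAt (fun x => ∫ t in Ang, inner ℝ (vs x t) (v x t))
      (∫ t in Ang, (‖vs s t‖ ^ 2 + inner ℝ (vss s t) (v s t))) s := by
    refine deriv_int (g' := fun s t => ‖vs s t‖ ^ 2 + inner ℝ (vss s t) (v s t))
      (C := (C * (π / 2)) ^ 2 + C * (C * (π / 2))) hδ ?_ ?_ ?_ ?_
    · intro x hx t ht
      refine ((S.dss x (hI hx) t ht).inner ℝ (S.ds x (hI hx) t ht)).congr_deriv ?_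
      rw [real_inner_self_eq_norm_sq]
    · exact fun x hx => (S.bc (hI hx)).2.1.inner (S.bc (hI hx)).1
    · exact b2.sq.add (b4.inner b1)
    · intro x hx t ht
      obtain ⟨k1, k2, k3, k4, k5⟩ := hb x hx t ht
      have hl : C * (π / 2 - |t|) ≤ C * (π / 2) :=
        mul_le_mul_of_nonneg_left (by linarith [abs_nonneg t]) hC
      refine (abs_add_le _ _).trans (add_le_add ?_ ?_)
      · rw [abs_of_nonneg (by positivity)]
        exact pow_le_pow_left₀ (norm_nonneg _) (k2.trans hl) 2
      · exact (abs_real_inner_le_norm _ _).trans (mul_le_mul k4 (k1.trans hl) (norm_nonneg _) hC)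
  refine h1.congr_deriv ?_
  have ms : s ∈ Ioo (s - δ) (s + δ) := ⟨by linarith, by linarith⟩
  have z := ibp_zero (g := fun t => inner ℝ (vt s t) (v s t)) (C := C * C)
    (g' := fun t => ‖vt s t‖ ^ 2 + inner ℝ (vtt s t) (v s t))
    (fun t ht => ((S.dtt s hs t ht).inner ℝ (S.dt s hs t ht)).congr_deriv
      (by rw [real_inner_self_eq_norm_sq]))
    (b3.sq.add (b6.inner b1)) ?_
  · rw [integral_add b3.sq.integrable (b6.inner b1).integrable] at z
    have e : ∫ t in Ang, inner ℝ (vss s t) (v s t) =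
        ∫ t in Ang, (-(W s t * ‖v s t‖ ^ 2) - inner ℝ (vtt s t) (v s t)) := by
      refine setIntegral_congr_fun measurableSet_Ioo fun t ht => ?_
      have : vss s t = -((W s t) • v s t) - vtt s t := by
        rw [Complex.real_smul, ← neg_mul, ← S.eq s hs t ht]; ring
      simp only [this, inner_sub_left, inner_neg_left, real_inner_smul_left, real_inner_self_eq_norm_sq]
    rw [integral_add b2.sq.integrable (b4.inner b1).integrable, e,
      integral_sub (b7.mul b1.sq).neg.integrable (b6.inner b1).integrable, integral_neg]
    linarith
  · intro t ht
    refine (abs_real_inner_le_norm _ _).trans ?_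
    rw [mul_assoc]
    exact mul_le_mul (hb s ms t ht).2.2.1 (hb s ms t ht).1 (norm_nonneg _) hC

/-- Pohozaev identity on the strip: the defect changes only through the potential. -/
theorem dPhi (S : Strip v vs vt vss vst vtt W Ws I) {s : ℝ} (hs : s ∈ I) :
    HasDerivAt (fun x => (∫ t in Ang, ‖vs x t‖ ^ 2) - (∫ t in Ang, ‖vt x t‖ ^ 2) +
      ∫ t in Ang, W x t * ‖v x t‖ ^ 2) (∫ t in Ang, Ws s t * ‖v s t‖ ^ 2) s := by
  obtain ⟨δ, hδ, C, hC, hI, hb⟩ := S.bounds hs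
  obtain ⟨b1, b2, b3, b4, b5, b6, b7, b8⟩ := S.bc hs
  have ms : s ∈ Ioo (s - δ) (s + δ) := ⟨by linarith, by linarith⟩
  have hl : ∀ t : ℝ, C * (π / 2 - |t|) ≤ C * (π / 2) := fun t =>
    mul_le_mul_of_nonneg_left (by linarith [abs_nonneg t]) hC
  have h1 : HasDerivAt (fun x => ∫ t in Ang, ‖vs x t‖ ^ 2)
      (∫ t in Ang, 2 * inner ℝ (vs s t) (vss s t)) s := by
    refine deriv_int (g' := fun s t => 2 * inner ℝ (vs s t) (vss s t))
      (C := 2 * ((C * (π / 2)) * C)) hδ (fun x hx t ht => (S.dss x (hI hx) t ht).norm_sq)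
      (fun x hx => (S.bc (hI hx)).2.1.sq) ((BC.const (2 : ℝ)).mul (b2.inner b4)) ?_
    intro x hx t ht
    rw [abs_mul, abs_two]
    exact mul_le_mul_of_nonneg_left ((abs_real_inner_le_norm _ _).trans
      (mul_le_mul ((hb x hx t ht).2.1.trans (hl t)) (hb x hx t ht).2.2.2.1 (norm_nonneg _)
      (by positivity))) (by norm_num)
  have h2 : HasDerivAt (fun x => ∫ t in Ang, ‖vt x t‖ ^ 2)
      (∫ t in Ang, 2 * inner ℝ (vt s t) (vst s t)) s := by
    refine deriv_int (g' := fun s t => 2 * inner ℝ (vt s t) (vst s t))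
      (C := 2 * (C * C)) hδ (fun x hx t ht => (S.dts x (hI hx) t ht).norm_sq)
      (fun x hx => (S.bc (hI hx)).2.2.1.sq) ((BC.const (2 : ℝ)).mul (b3.inner b5)) ?_
    intro x hx t ht
    rw [abs_mul, abs_two]
    exact mul_le_mul_of_nonneg_left ((abs_real_inner_le_norm _ _).trans
      (mul_le_mul (hb x hx t ht).2.2.1 (hb x hx t ht).2.2.2.2 (norm_nonneg _) hC)) (by norm_num)
  have h3 : HasDerivAt (fun x => ∫ t in Ang, W x t * ‖v x t‖ ^ 2)
      (∫ t in Ang, (Ws s t * ‖v s t‖ ^ 2 + W s t * (2 * inner ℝ (v s t) (vs s t)))) s := by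
    refine deriv_int (g' := fun s t => Ws s t * ‖v s t‖ ^ 2 + W s t * (2 * inner ℝ (v s t) (vs s t)))
      (C := 1 * (C * (π / 2)) ^ 2 + 1 * (2 * (C * (π / 2) * (C * (π / 2))))) hδ
      (fun x hx t ht => (S.dW x (hI hx) t ht).mul (S.ds x (hI hx) t ht).norm_sq)
      (fun x hx => (S.bc (hI hx)).2.2.2.2.2.2.1.mul (S.bc (hI hx)).1.sq)
      ((b8.mul b1.sq).add (b7.mul ((BC.const (2 : ℝ)).mul (b1.inner b2)))) ?_
    intro x hx t ht
    obtain ⟨k1, k2, k3, k4, k5⟩ := hb x hx t ht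
    refine (abs_add_le _ _).trans (add_le_add ?_ ?_)
    · rw [abs_mul]
      refine mul_le_mul (S.bWs x (hI hx) t ht) ?_ (abs_nonneg _) zero_le_one
      rw [abs_of_nonneg (by positivity)]
      exact pow_le_pow_left₀ (norm_nonneg _) (k1.trans (hl t)) 2
    · rw [abs_mul]
      refine mul_le_mul ?_ ?_ (abs_nonneg _) zero_le_one
      · rw [abs_of_nonneg (S.W0 x (hI hx) t ht)]; exact S.bW x (hI hx) t ht
      · rw [abs_mul, abs_two]
        exact mul_le_mul_of_nonneg_left ((abs_real_inner_le_norm _ _).trans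
          (mul_le_mul (k1.trans (hl t)) (k2.trans (hl t)) (norm_nonneg _) (by positivity))) (by norm_num)
  refine ((h1.sub h2).add h3).congr_deriv ?_
  have z := ibp_zero (g := fun t => inner ℝ (vt s t) (vs s t)) (C := C * C)
    (g' := fun t => inner ℝ (vt s t) (vst s t) + inner ℝ (vtt s t) (vs s t))
    (fun t ht => (S.dtt s hs t ht).inner ℝ (S.dst s hs t ht))
    ((b3.inner b5).add (b6.inner b2)) ?_
  · have i1 := (BC.const (2 : ℝ)).mul (b2.inner b4)
    have i2 := (BC.const (2 : ℝ)).mul (b3.inner b5)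
    have i3 := (b8.mul b1.sq).add (b7.mul ((BC.const (2 : ℝ)).mul (b1.inner b2)))
    have i4 := (b3.inner b5).add (b6.inner b2)
    have e : ∫ t in Ang, Ws s t * ‖v s t‖ ^ 2 = ∫ t in Ang, (2 * inner ℝ (vs s t) (vss s t)
        - 2 * inner ℝ (vt s t) (vst s t) + (Ws s t * ‖v s t‖ ^ 2 +
          W s t * (2 * inner ℝ (v s t) (vs s t)))
        + 2 * (inner ℝ (vt s t) (vst s t) + inner ℝ (vtt s t) (vs s t))) := by
      refine setIntegral_congr_fun measurableSet_Ioo fun t ht => ?_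
      have : vss s t = -((W s t) • v s t) - vtt s t := by
        rw [Complex.real_smul, ← neg_mul, ← S.eq s hs t ht]; ring
      simp only [this, inner_sub_right, inner_neg_right, real_inner_smul_right,
        real_inner_comm (vs s t)]
      ring
    rw [e, integral_add ((i1.sub i2).add i3).integrable (i4.integrable.const_mul 2),
      integral_add (i1.sub i2).integrable i3.integrable, integral_sub i1.integrable i2.integrable,
      integral_const_mul (2 : ℝ) (fun t => inner ℝ (vt s t) (vst s t) + inner ℝ (vtt s t) (vs s t)), z, mul_zero, add_zero]
  · intro t ht
    refine (abs_real_inner_le_norm _ _).trans ?_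
    rw [mul_assoc]
    exact mul_le_mul (hb s ms t ht).2.2.1 (hb s ms t ht).2.1 (norm_nonneg _) hC

end Strip

end

section

theorem cos_ge_dist {t : ℝ} (ht : t ∈ Ang) : 2 / π * (π / 2 - |t|) ≤ cos t := by
  rw [← Real.cos_abs t, ← Real.sin_pi_div_two_sub]
  have h := abs_lt.2 ht
  exact Real.mul_le_sin (by linarith) (by linarith [abs_nonneg t])

theorem dist_div_cos {t : ℝ} (ht : t ∈ Ang) : (π / 2 - |t|) / cos t ≤ π / 2 := by
  have hc := Real.cos_pos_of_mem_Ioo ht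
  have hpi := Real.pi_pos
  rw [div_le_iff₀ hc]
  have := mul_le_mul_of_nonneg_left (cos_ge_dist ht) (by positivity : 0 ≤ π / 2)
  have e : π / 2 * (2 / π * (π / 2 - |t|)) = π / 2 - |t| := by field_simp
  linarith

/-- The one-dimensional Wirtinger (Poincaré) inequality on an interval of length `π`, from the
identity `|u'|² - |u|² = |u' + tan·u|² - (tan·|u|²)'`. -/
theorem wirtinger {u u' : ℝ → ℂ} (hu : BC u) (hu' : BC u') (hd : ∀ t ∈ Ang, HasDerivAt u (u' t) t)
    {C : ℝ} (hC : 0 ≤ C) (hb : ∀ t ∈ Ang, ‖u t‖ ≤ C * (π / 2 - |t|)) :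
    ∫ t in Ang, ‖u t‖ ^ 2 ≤ ∫ t in Ang, ‖u' t‖ ^ 2 := by
  have hpi := Real.pi_pos
  have hcos : ∀ t ∈ Ang, 0 < cos t := fun t ht => Real.cos_pos_of_mem_Ioo ht
  have hdist : ∀ t ∈ Ang, 0 < π / 2 - |t| := fun t ht => by linarith [abs_lt.2 ht]
  have htan : ∀ t ∈ Ang, |tan t| ≤ 1 / cos t := fun t ht => by
    rw [Real.tan_eq_sin_div_cos, abs_div, abs_of_pos (hcos t ht)]
    exact div_le_div_of_nonneg_right (Real.abs_sin_le_one t) (hcos t ht).le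
  have hq : ∀ t ∈ Ang, 1 / cos t * ‖u t‖ ≤ C * (π / 2) := fun t ht => by
    calc 1 / cos t * ‖u t‖ ≤ 1 / cos t * (C * (π / 2 - |t|)) :=
          mul_le_mul_of_nonneg_left (hb t ht) (by have := hcos t ht; positivity)
      _ = C * ((π / 2 - |t|) / cos t) := by ring
      _ ≤ _ := mul_le_mul_of_nonneg_left (dist_div_cos ht) hC
  have ctan : ContinuousOn tan Ang := Real.continuousOn_tan_Ioo
  -- `w = u / cos` is bounded and continuous
  have hw : BC (fun t => (1 / cos t) • u t) := by
    refine ⟨ContinuousOn.smul (ContinuousOn.div continuousOn_const continuousOn_cos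
      fun t ht => (hcos t ht).ne') hu.1, C * (π / 2), fun t ht => ?_⟩
    rw [norm_smul, Real.norm_of_nonneg (by have := hcos t ht; positivity)]
    exact hq t ht
  have hs : BC sin := ⟨continuousOn_sin, 1, fun t _ => Real.abs_sin_le_one t⟩
  have htu : BC (fun t => sin t • ((1 / cos t) • u t)) := hs.smul hw
  have hg' : BC (fun t => ‖(1 / cos t) • u t‖ ^ 2 + 2 * inner ℝ (sin t • ((1 / cos t) • u t)) (u' t)) :=
    hw.sq.add ((BC.const (2 : ℝ)).mul (htu.inner hu'))
  have z := ibp_zero (g := fun t => tan t * ‖u t‖ ^ 2) (C := C * (π / 2) * C) (fun t ht => ?_) hg' ?_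
  · have e : (∫ t in Ang, ‖u' t‖ ^ 2) - ∫ t in Ang, ‖u t‖ ^ 2 =
        (∫ t in Ang, ‖u' t + sin t • ((1 / cos t) • u t)‖ ^ 2) - ∫ t in Ang,
          (‖(1 / cos t) • u t‖ ^ 2 + 2 * inner ℝ (sin t • ((1 / cos t) • u t)) (u' t)) := by
      rw [← integral_sub hu'.sq.integrable hu.sq.integrable,
        ← integral_sub (hu'.add htu).sq.integrable hg'.integrable]
      refine setIntegral_congr_fun measurableSet_Ioo fun t ht => ?_
      simp only [norm_add_sq_real, norm_smul, mul_pow, Real.norm_eq_abs, sq_abs]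
      rw [real_inner_comm (u' t)]
      have h1 := Real.sin_sq_add_cos_sq t
      have h2 := (hcos t ht).ne'
      field_simp
      linear_combination (-‖u t‖ ^ 2) * h1
    rw [z, sub_zero] at e
    have : 0 ≤ ∫ t in Ang, ‖u' t + sin t • ((1 / cos t) • u t)‖ ^ 2 :=
      integral_nonneg fun t => by positivity
    linarith
  · refine ((Real.hasDerivAt_tan (hcos t ht).ne').mul (hd t ht).norm_sq).congr_deriv ?_
    rw [norm_smul, mul_pow, Real.norm_eq_abs, sq_abs, real_inner_smul_left, real_inner_smul_left,
      Real.tan_eq_sin_div_cos]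
    ring
  · intro t ht
    rw [abs_mul, abs_of_nonneg (by positivity : 0 ≤ ‖u t‖ ^ 2), sq, ← mul_assoc, mul_assoc (C * (π / 2))]
    refine mul_le_mul ?_ (hb t ht) (norm_nonneg _) (by positivity)
    exact (mul_le_mul_of_nonneg_right (htan t ht) (norm_nonneg _)).trans (hq t ht)

/-- One-dimensional Sobolev inequality for a function vanishing at the left end. -/
theorem sup_sq_le {u u' : ℝ → ℂ} (hu : BC u) (hu' : BC u') (hd : ∀ t ∈ Ang, HasDerivAt u (u' t) t)
    (hc : ContinuousOn u (Icc (-(π / 2)) (π / 2))) (h0 : u (-(π / 2)) = 0) {t : ℝ} (ht : t ∈ Ang) :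
    ‖u t‖ ^ 2 ≤ 2 * √((∫ t in Ang, ‖u t‖ ^ 2) * ∫ t in Ang, ‖u' t‖ ^ 2) := by
  have hsub : Ioo (-(π / 2)) t ⊆ Ang := Ioo_subset_Ioo_right ht.2.le
  have hInt : IntegrableOn (fun x => 2 * inner ℝ (u x) (u' x)) Ang :=
    ((BC.const (2 : ℝ)).mul (hu.inner hu')).integrable
  have e := intervalIntegral.integral_eq_sub_of_hasDerivAt_of_le (f := fun x => ‖u x‖ ^ 2)
    (f' := fun x => 2 * inner ℝ (u x) (u' x)) ht.1.le
    ((hc.mono (Icc_subset_Icc_right ht.2.le)).norm.pow 2) (fun x hx => (hd x (hsub hx)).norm_sq)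
    (by
      rw [intervalIntegrable_iff_integrableOn_Ioo_of_le ht.1.le]
      exact hInt.mono_set hsub)
  simp only [h0, norm_zero, ne_eq, OfNat.ofNat_ne_zero, not_false_eq_true, zero_pow, sub_zero] at e
  rw [← e, intervalIntegral.integral_of_le ht.1.le, integral_Ioc_eq_integral_Ioo,
    Real.sqrt_mul (integral_nonneg fun t => by positivity)]
  calc ∫ x in Ioo (-(π / 2)) t, 2 * inner ℝ (u x) (u' x)
      ≤ ∫ x in Ioo (-(π / 2)) t, 2 * (‖u x‖ * ‖u' x‖) := by
        refine setIntegral_mono (hInt.mono_set hsub)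
          (((BC.const (2 : ℝ)).mul (hu.norm.mul hu'.norm)).integrable.mono_set hsub) fun x => ?_
        exact mul_le_mul_of_nonneg_left (real_inner_le_norm _ _) (by norm_num)
    _ ≤ ∫ x in Ang, 2 * (‖u x‖ * ‖u' x‖) := by
        refine setIntegral_mono_set ((BC.const (2 : ℝ)).mul (hu.norm.mul hu'.norm)).integrable
          (Eventually.of_forall fun x => ?_) (LE.le.eventuallyLE hsub)
        simp only [Pi.zero_apply]; positivity
    _ ≤ _ := by
        rw [integral_const_mul]
        exact mul_le_mul_of_nonneg_left (hu.cs_norm hu') (by norm_num)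

end

/-! ### Gauge and logarithmic coordinates -/

section

theorem clm_expand (A : ℂ →L[ℝ] ℂ) (e : ℂ) : A e = (e.re : ℂ) * A 1 + (e.im : ℂ) * A Complex.I := by
  have : e = e.re • (1 : ℂ) + e.im • Complex.I := by
    apply Complex.ext <;> simp
  conv_lhs => rw [this]
  rw [map_add, map_smul, map_smul, Complex.real_smul, Complex.real_smul]

theorem lapC_eq {u : ℂ → ℂ} {z : ℂ} (h : DifferentiableAt ℝ (fderiv ℝ u) z) :
    lapC u z = fderiv ℝ (fderiv ℝ u) z 1 1 + fderiv ℝ (fderiv ℝ u) z Complex.I Complex.I := by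
  have : ∀ e : ℂ, fderiv ℝ (fun y => fderiv ℝ u y e) z = (fderiv ℝ (fderiv ℝ u) z).flip e := fun e => by
    have := (h.hasFDerivAt.clm_apply (hasFDerivAt_const e z)).fderiv
    rw [this]; ext1; simp
  simp only [lapC, pd1, pd2, this, ContinuousLinearMap.flip_apply]

theorem hasFDerivAt_fderiv {u : ℂ → ℂ} {z : ℂ} (h : ContDiffAt ℝ 2 u z) :
    HasFDerivAt (fderiv ℝ u) (fderiv ℝ (fderiv ℝ u) z) z :=
  ((h.fderiv_right (m := 1) (by norm_num)).differentiableAt (by norm_num)).hasFDerivAt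

theorem eventually_diff {u : ℂ → ℂ} {z : ℂ} (h : ContDiffAt ℝ 2 u z) :
    ∀ᶠ y in nhds z, DifferentiableAt ℝ u y := by
  filter_upwards [h.eventually (by simp)] with y hy using hy.differentiableAt (by norm_num)

/-- Product rule for the Laplacian. -/
theorem lapC_mul {u g : ℂ → ℂ} {z : ℂ} (hu : ContDiffAt ℝ 2 u z) (hg : ContDiffAt ℝ 2 g z) :
    lapC (fun y => u y * g y) z = lapC u z * g z +
      2 * (pd1 u z * pd1 g z + pd2 u z * pd2 g z) + u z * lapC g z := by
  have key : ∀ e : ℂ, fderiv ℝ (fun y => fderiv ℝ (fun x => u x * g x) y e) z e =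
      fderiv ℝ (fderiv ℝ u) z e e * g z + 2 * (fderiv ℝ u z e * fderiv ℝ g z e) +
        u z * fderiv ℝ (fderiv ℝ g) z e e := by
    intro e
    have h1 : (fun y => fderiv ℝ (fun x => u x * g x) y e) =ᶠ[nhds z]
        fun y => u y * fderiv ℝ g y e + g y * fderiv ℝ u y e := by
      filter_upwards [eventually_diff hu, eventually_diff hg] with y h1 h2
      have h3 : HasFDerivAt (fun x => u x * g x) _ y := h1.hasFDerivAt.mul h2.hasFDerivAt
      rw [h3.fderiv]
      simp
    rw [h1.fderiv_eq]
    have du := (eventually_diff hu).self_of_nhds.hasFDerivAt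
    have dg := (eventually_diff hg).self_of_nhds.hasFDerivAt
    have du2 := (hasFDerivAt_fderiv hu).clm_apply (hasFDerivAt_const e z)
    have dg2 := (hasFDerivAt_fderiv hg).clm_apply (hasFDerivAt_const e z)
    have h3 : HasFDerivAt (fun y => u y * fderiv ℝ g y e + g y * fderiv ℝ u y e) _ z :=
      (du.mul dg2).add (dg.mul du2)
    rw [h3.fderiv]
    simp
    ring
  rw [lapC_eq (hasFDerivAt_fderiv hu).differentiableAt, lapC_eq (hasFDerivAt_fderiv hg).differentiableAt]
  rw [lapC]
  simp only [pd1, pd2, key]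
  ring

/-- Conformal covariance of the Laplacian. -/
theorem lapC_comp {u f f' : ℂ → ℂ} {f'' z : ℂ} (hf : ∀ᶠ y in nhds z, HasDerivAt f (f' y) y)
    (hf' : HasDerivAt f' f'' z) (hu : ContDiffAt ℝ 2 u (f z)) :
    lapC (fun y => u (f y)) z = ((‖f' z‖ ^ 2 : ℝ) : ℂ) * lapC u (f z) := by
  have hfz := hf.self_of_nhds
  have key : ∀ e : ℂ, fderiv ℝ (fun y => fderiv ℝ (fun x => u (f x)) y e) z e =
      fderiv ℝ (fderiv ℝ u) (f z) (f' z * e) (f' z * e) + fderiv ℝ u (f z) (f'' * e * e) := by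
    intro e
    have h1 : (fun y => fderiv ℝ (fun x => u (f x)) y e) =ᶠ[nhds z]
        fun y => fderiv ℝ u (f y) (f' y * e) := by
      filter_upwards [hf, hfz.continuousAt.eventually (eventually_diff hu)] with y h1 h2
      have h3 : HasFDerivAt (fun x => u (f x)) _ y :=
        HasFDerivAt.comp y h2.hasFDerivAt (h1.hasFDerivAt.restrictScalars ℝ)
      rw [h3.fderiv]
      simp [mul_comm]
    rw [h1.fderiv_eq]
    have d1 : HasFDerivAt (fun y => fderiv ℝ u (f y)) _ z :=
      HasFDerivAt.comp z (hasFDerivAt_fderiv hu) (hfz.hasFDerivAt.restrictScalars ℝ)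
    have d2 := d1.clm_apply ((hf'.mul_const e).hasFDerivAt.restrictScalars ℝ)
    rw [d2.fderiv]
    simp [mul_comm, mul_left_comm, add_comm]
  rw [lapC_eq (hasFDerivAt_fderiv hu).differentiableAt, lapC]
  simp only [pd1, pd2, key]
  set B := fderiv ℝ (fderiv ℝ u) (f z)
  have hB : ∀ e : ℂ, B e e = (e.re : ℂ) * ((e.re : ℂ) * B 1 1 + (e.im : ℂ) * B 1 Complex.I) +
      (e.im : ℂ) * ((e.re : ℂ) * B Complex.I 1 + (e.im : ℂ) * B Complex.I Complex.I) := by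
    intro e
    rw [clm_expand (B e) e]
    have h2 : ∀ x : ℂ, B e x = (e.re : ℂ) * B 1 x + (e.im : ℂ) * B Complex.I x := fun x =>
      clm_expand (B.flip x) e
    rw [h2, h2]; ring
  rw [hB (f' z * 1), hB (f' z * Complex.I)]
  have h3 : fderiv ℝ u (f z) (f'' * 1 * 1) + fderiv ℝ u (f z) (f'' * Complex.I * Complex.I) = 0 := by
    rw [← map_add, mul_assoc _ Complex.I, Complex.I_mul_I]; simp
  rw [Complex.sq_norm, Complex.normSq_apply]
  simp only [mul_one, Complex.mul_re, Complex.mul_im, Complex.I_re, Complex.I_im] at h3 ⊢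
  push_cast
  linear_combination h3

theorem abPot_re {a x : ℂ} (h : x ≠ a) : abPot1 a x = (1 / 2) * ((x - a)⁻¹).im ∧
    abPot2 a x = (1 / 2) * ((x - a)⁻¹).re := by
  have h0 : ‖x - a‖ ≠ 0 := by simpa [sub_eq_zero] using h
  have e : abPot a x = (((1 / 2) * ((x - a)⁻¹).im : ℝ) : ℂ) + (((1 / 2) * ((x - a)⁻¹).re : ℝ) : ℂ) * Complex.I := by
    rw [abPot]
    have h1 : ((‖x - a‖ ^ 2 : ℝ) : ℂ) = ((Complex.normSq (x - a) : ℝ) : ℂ) := by rw [Complex.sq_norm]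
    push_cast at h1
    rw [h1]
    have hn : Complex.normSq (x - a) ≠ 0 := by rw [← Complex.sq_norm]; positivity
    rw [Complex.inv_re, Complex.inv_im]
    push_cast
    have hn' : ((Complex.normSq (x - a) : ℝ) : ℂ) ≠ 0 := by exact_mod_cast hn
    have e2 : (x - a) = (((x - a).re : ℝ) : ℂ) + (((x - a).im : ℝ) : ℂ) * Complex.I := (Complex.re_add_im _).symm
    field_simp
    conv_lhs => rw [e2]
    linear_combination ((((x - a).im : ℝ) : ℂ)) * Complex.I_sq
  constructor
  · rw [abPot1, e]; simp
  · rw [abPot2, e]; simp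

theorem divAB_zero {a x : ℂ} (h : x ≠ a) : divAB a x = 0 := by
  have hd : HasFDerivAt (fun y : ℂ => (y - a)⁻¹) _ x :=
    ((((hasDerivAt_id x).sub_const a).inv (sub_ne_zero.2 h)).hasFDerivAt.restrictScalars ℝ)
  have hne : ∀ᶠ y in nhds x, y ≠ a := isOpen_ne.mem_nhds h
  have e1 : abPot1 a =ᶠ[nhds x] fun y => (1 / 2) * Complex.imCLM ((y - a)⁻¹) := by
    filter_upwards [hne] with y hy using (abPot_re hy).1
  have e2 : abPot2 a =ᶠ[nhds x] fun y => (1 / 2) * Complex.reCLM ((y - a)⁻¹) := by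
    filter_upwards [hne] with y hy using (abPot_re hy).2
  have d1 := (Complex.imCLM.hasFDerivAt.comp x hd).const_mul (1 / 2)
  have d2 := (Complex.reCLM.hasFDerivAt.comp x hd).const_mul (1 / 2)
  rw [divAB, e1.fderiv_eq, e2.fderiv_eq]
  erw [d1.fderiv, d2.fderiv]
  simp

end

section

/-- The point `s + i t` of the strip. -/
def zp (s t : ℝ) : ℂ := (s : ℂ) + (t : ℂ) * Complex.I

@[simp] theorem zp_re (s t : ℝ) : (zp s t).re = s := by simp [zp]
@[simp] theorem zp_im (s t : ℝ) : (zp s t).im = t := by simp [zp]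

theorem zp_ds (s t : ℝ) : HasDerivAt (fun x => zp x t) 1 s :=
  (Complex.ofRealCLM.hasDerivAt (x := s)).add_const _ |>.congr_deriv (by simp)

theorem zp_dt (s t : ℝ) : HasDerivAt (fun y => zp s y) Complex.I t :=
  (((Complex.ofRealCLM.hasDerivAt (x := t)).mul_const Complex.I).const_add (s : ℂ)).congr_deriv (by simp)

theorem zp_cont : Continuous (fun z : ℝ × ℝ => zp z.1 z.2) := by unfold zp; fun_prop

theorem isOpen_strip {I : Set ℝ} (hI : IsOpen I) : IsOpen {ζ : ℂ | ζ.re ∈ I ∧ ζ.im ∈ Ang} :=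
  (hI.preimage Complex.continuous_re).inter (isOpen_Ioo.preimage Complex.continuous_im)

/-- A `C²` function on the complex strip solving `Δu = -Pu` and vanishing on the edges yields a
`Strip`. -/
theorem strip_of_contDiffOn {u : ℂ → ℂ} {P : ℂ → ℝ} {I : Set ℝ} (hI : IsOpen I)
    (hu : ContDiffOn ℝ 2 u {ζ : ℂ | ζ.re ∈ I ∧ ζ.im ∈ Ang})
    (hc : ContinuousOn u {ζ : ℂ | ζ.re ∈ I ∧ ζ.im ∈ Icc (-(π / 2)) (π / 2)})
    (hr : ∀ s ∈ I, u (zp s (π / 2)) = 0) (hl : ∀ s ∈ I, u (zp s (-(π / 2))) = 0)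
    (hP : ContDiff ℝ 1 P)
    (heq : ∀ ζ : ℂ, ζ.re ∈ I → ζ.im ∈ Ang → lapC u ζ = -(P ζ : ℂ) * u ζ)
    (P0 : ∀ ζ : ℂ, ζ.re ∈ I → ζ.im ∈ Ang → 0 ≤ P ζ)
    (P1 : ∀ ζ : ℂ, ζ.re ∈ I → ζ.im ∈ Ang → P ζ ≤ 1)
    (P2 : ∀ ζ : ℂ, ζ.re ∈ I → ζ.im ∈ Ang → |fderiv ℝ P ζ 1| ≤ 1) :
    Strip (fun s t => u (zp s t)) (fun s t => fderiv ℝ u (zp s t) 1)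
      (fun s t => fderiv ℝ u (zp s t) Complex.I)
      (fun s t => fderiv ℝ (fderiv ℝ u) (zp s t) 1 1)
      (fun s t => fderiv ℝ (fderiv ℝ u) (zp s t) Complex.I 1)
      (fun s t => fderiv ℝ (fderiv ℝ u) (zp s t) Complex.I Complex.I)
      (fun s t => P (zp s t)) (fun s t => fderiv ℝ P (zp s t) 1) I := by
  have hO := isOpen_strip hI
  set O := {ζ : ℂ | ζ.re ∈ I ∧ ζ.im ∈ Ang} with hOdef
  have mem : ∀ s ∈ I, ∀ t ∈ Ioo (-(π / 2)) (π / 2), zp s t ∈ O := fun s hs t ht => by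
    exact ⟨by simpa using hs, by simpa using ht⟩
  have cd : ∀ s ∈ I, ∀ t ∈ Ioo (-(π / 2)) (π / 2), ContDiffAt ℝ 2 u (zp s t) := fun s hs t ht =>
    hu.contDiffAt (hO.mem_nhds (mem s hs t ht))
  have d1 : ∀ s ∈ I, ∀ t ∈ Ioo (-(π / 2)) (π / 2), HasFDerivAt u (fderiv ℝ u (zp s t)) (zp s t) :=
    fun s hs t ht => ((cd s hs t ht).differentiableAt (by norm_num)).hasFDerivAt
  have d2 : ∀ s ∈ I, ∀ t ∈ Ioo (-(π / 2)) (π / 2), ∀ e : ℂ, HasFDerivAt (fun ζ => fderiv ℝ u ζ e)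
      ((fderiv ℝ (fderiv ℝ u) (zp s t)).flip e) (zp s t) := fun s hs t ht e => by
    have := (hasFDerivAt_fderiv (cd s hs t ht)).clm_apply (hasFDerivAt_const e (zp s t))
    exact this.congr_fderiv (by ext1; simp)
  have D2s : ∀ s ∈ I, ∀ t ∈ Ioo (-(π / 2)) (π / 2), ∀ e : ℂ, HasDerivAt
      (fun x => fderiv ℝ u (zp x t) e) (fderiv ℝ (fderiv ℝ u) (zp s t) 1 e) s := fun s hs t ht e => by
    have := (d2 s hs t ht e).comp_hasDerivAt s (zp_ds s t)
    exact this
  have D2t : ∀ s ∈ I, ∀ t ∈ Ioo (-(π / 2)) (π / 2), ∀ e : ℂ, HasDerivAt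
      (fun y => fderiv ℝ u (zp s y) e) (fderiv ℝ (fderiv ℝ u) (zp s t) Complex.I e) t :=
    fun s hs t ht e => (d2 s hs t ht e).comp_hasDerivAt t (zp_dt s t)
  have symm : ∀ s ∈ I, ∀ t ∈ Ioo (-(π / 2)) (π / 2),
      fderiv ℝ (fderiv ℝ u) (zp s t) 1 Complex.I = fderiv ℝ (fderiv ℝ u) (zp s t) Complex.I 1 :=
    fun s hs t ht => ((cd s hs t ht).isSymmSndFDerivAt (by simp)).eq _ _
  have c1 : ContinuousOn (fderiv ℝ u) O :=
    hu.continuousOn_fderiv_of_isOpen hO (by norm_num)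
  have c1' : ContDiffOn ℝ 1 (fderiv ℝ u) O := hu.fderiv_of_isOpen hO (by norm_num)
  have c2 : ContinuousOn (fderiv ℝ (fderiv ℝ u)) O :=
    c1'.continuousOn_fderiv_of_isOpen hO (by norm_num)
  have mz : MapsTo (fun z : ℝ × ℝ => zp z.1 z.2) (I ×ˢ Ioo (-(π / 2)) (π / 2)) O :=
    fun z hz => mem _ hz.1 _ hz.2
  have C1 : ∀ e : ℂ, ContinuousOn (fun z : ℝ × ℝ => fderiv ℝ u (zp z.1 z.2) e)
      (I ×ˢ Ioo (-(π / 2)) (π / 2)) := fun e =>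
    (c1.comp zp_cont.continuousOn mz).clm_apply continuousOn_const
  have C2 : ∀ e f : ℂ, ContinuousOn (fun z : ℝ × ℝ => fderiv ℝ (fderiv ℝ u) (zp z.1 z.2) e f)
      (I ×ˢ Ioo (-(π / 2)) (π / 2)) := fun e f =>
    ((c2.comp zp_cont.continuousOn mz).clm_apply continuousOn_const).clm_apply continuousOn_const
  have hPd : ∀ z, HasFDerivAt P (fderiv ℝ P z) z := fun z =>
    (hP.differentiable (by norm_num) z).hasFDerivAt
  refine ⟨hI, ?_, hr, hl, fun s hs t ht => (d1 s hs t ht).comp_hasDerivAt s (zp_ds s t),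
    fun s hs t ht => (d1 s hs t ht).comp_hasDerivAt t (zp_dt s t),
    fun s hs t ht => D2s s hs t ht 1,
    fun s hs t ht => D2t s hs t ht 1,
    fun s hs t ht => (D2s s hs t ht Complex.I).congr_deriv
      (symm s hs t ht),
    fun s hs t ht => D2t s hs t ht Complex.I,
    C1 _, C1 _, C2 _ _, C2 _ _, (hP.continuous.comp zp_cont).continuousOn,
    (((hP.continuous_fderiv (by norm_num)).comp zp_cont).clm_apply continuous_const).continuousOn, ?_,
    fun s hs t ht => (hPd _).comp_hasDerivAt s (zp_ds s t), ?_, ?_, ?_⟩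
  · exact hc.comp zp_cont.continuousOn fun z hz => ⟨by simpa using hz.1, by simpa using hz.2⟩
  · intro s hs t ht
    rw [← lapC_eq (hasFDerivAt_fderiv (cd s hs t ht)).differentiableAt]
    exact heq _ (by simpa using hs) (by simpa using ht)
  · exact fun s hs t ht => P0 _ (by simpa using hs) (by simpa using ht)
  · exact fun s hs t ht => P1 _ (by simpa using hs) (by simpa using ht)
  · exact fun s hs t ht => P2 _ (by simpa using hs) (by simpa using ht)

end

section

/-- `e^{-i Im z / 2}`. -/
def hfac (z : ℂ) : ℂ := Complex.exp (-(Complex.I / 2) * ((z.im : ℝ) : ℂ))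

theorem hfac_contDiff : ContDiff ℝ 2 hfac := by
  have : ContDiff ℝ 2 (fun z : ℂ => ((z.im : ℝ) : ℂ)) :=
    (Complex.ofRealCLM.comp Complex.imCLM).contDiff
  exact (contDiff_const.mul this).cexp

theorem hfac_fderiv (z e : ℂ) : fderiv ℝ hfac z e = -(Complex.I / 2) * (e.im : ℂ) * hfac z := by
  have h1 : HasFDerivAt (fun z : ℂ => ((z.im : ℝ) : ℂ)) (Complex.ofRealCLM.comp Complex.imCLM) z :=
    (Complex.ofRealCLM.comp Complex.imCLM).hasFDerivAt
  have h2 := (h1.const_mul (-(Complex.I / 2))).cexp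
  have h3 : HasFDerivAt hfac _ z := h2
  rw [h3.fderiv]
  simp [hfac]; ring

theorem hfac_lap (z : ℂ) : lapC hfac z = -(1 / 4) * hfac z := by
  have e1 : (fun y => pd1 hfac y) = fun _ => 0 := by
    funext y; simp [pd1, hfac_fderiv]
  have e2 : (fun y => pd2 hfac y) = fun y => -(Complex.I / 2) * hfac y := by
    funext y; simp [pd2, hfac_fderiv]
  have hd : DifferentiableAt ℝ hfac z := hfac_contDiff.contDiffAt.differentiableAt (by norm_num)
  have h3 : HasFDerivAt (fun y => -(Complex.I / 2) * hfac y) _ z := hd.hasFDerivAt.const_mul _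
  rw [lapC, e1, e2, h3.fderiv]
  simp [hfac_fderiv]
  linear_combination (1 / 4) * hfac z * Complex.I_sq

/-- `π(a) + e^ζ`: the logarithmic coordinate centred at `π(a)`. -/
def Xp (a ζ : ℂ) : ℂ := proj a + Complex.exp ζ

/-- The unimodular gauge `e^{-i arg(κ(e^ζ - a₁))/2}`. -/
def abG (κ : ℝ) (a ζ : ℂ) : ℂ := hfac (Complex.log ((κ : ℂ) * (Complex.exp ζ - (a.re : ℂ))))

/-- Gauge-covariant derivative of `φ` in the logarithmic coordinate, in the direction `e`. -/
def Dg (a : ℂ) (φ : ℂ → ℂ) (ζ e : ℂ) : ℂ :=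
  fderiv ℝ φ (Xp a ζ) (Complex.exp ζ * e) -
    (Complex.I / 2) * (((Complex.exp ζ * e / (Complex.exp ζ - (a.re : ℂ))).im : ℝ) : ℂ) * φ (Xp a ζ)

theorem norm_abG (κ : ℝ) (a ζ : ℂ) : ‖abG κ a ζ‖ = 1 := by
  rw [abG, hfac, Complex.norm_exp]; simp

theorem Xp_sub (a ζ : ℂ) : Xp a ζ - a = Complex.exp ζ - (a.re : ℂ) := by
  rw [Xp, proj]
  linear_combination -(Complex.re_add_im a).symm

theorem abG_logderiv {κ : ℝ} {a ζ : ℂ}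
    (hs : (κ : ℂ) * (Complex.exp ζ - (a.re : ℂ)) ∈ Complex.slitPlane) :
    ∀ᶠ y in nhds ζ, HasDerivAt (fun y => Complex.log ((κ : ℂ) * (Complex.exp y - (a.re : ℂ))))
      (Complex.exp y / (Complex.exp y - (a.re : ℂ))) y := by
  have hc : Continuous fun y => (κ : ℂ) * (Complex.exp y - (a.re : ℂ)) := by fun_prop
  filter_upwards [(Complex.isOpen_slitPlane.preimage hc).mem_nhds hs] with y hy
  have hne := Complex.slitPlane_ne_zero hy
  have hd : HasDerivAt (fun y => (κ : ℂ) * (Complex.exp y - (a.re : ℂ))) ((κ : ℂ) * Complex.exp y) y :=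
    ((Complex.hasDerivAt_exp y).sub_const _).const_mul _
  refine (hd.clog hy).congr_deriv ?_
  have hk : (κ : ℂ) ≠ 0 := left_ne_zero_of_mul hne
  rw [mul_div_mul_left _ _ hk]

theorem abG_contDiffAt {κ : ℝ} {a ζ : ℂ}
    (hs : (κ : ℂ) * (Complex.exp ζ - (a.re : ℂ)) ∈ Complex.slitPlane) :
    ContDiffAt ℝ 2 (abG κ a) ζ := by
  have h1 : ContDiffAt ℝ 2 (fun y => (κ : ℂ) * (Complex.exp y - (a.re : ℂ))) ζ := by fun_prop
  have h2 : ContDiffAt ℝ 2 Complex.log ((κ : ℂ) * (Complex.exp ζ - (a.re : ℂ))) :=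
    (Complex.contDiffAt_log hs).restrict_scalars ℝ
  have h3 := ContDiffAt.comp ζ h2 h1
  exact hfac_contDiff.comp_contDiffAt ζ h3

theorem abG_fderiv {κ : ℝ} {a ζ : ℂ}
    (hs : (κ : ℂ) * (Complex.exp ζ - (a.re : ℂ)) ∈ Complex.slitPlane) (e : ℂ) :
    fderiv ℝ (abG κ a) ζ e = -(Complex.I / 2) *
      (((Complex.exp ζ * e / (Complex.exp ζ - (a.re : ℂ))).im : ℝ) : ℂ) * abG κ a ζ := by
  have h1 := (abG_logderiv hs).self_of_nhds
  have hd : DifferentiableAt ℝ hfac (Complex.log ((κ : ℂ) * (Complex.exp ζ - (a.re : ℂ)))) :=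
    hfac_contDiff.contDiffAt.differentiableAt (by norm_num)
  have h2 : HasFDerivAt (abG κ a) _ ζ := hd.hasFDerivAt.comp ζ (h1.hasFDerivAt.restrictScalars ℝ)
  rw [h2.fderiv, ContinuousLinearMap.comp_apply, hfac_fderiv]
  have : (ContinuousLinearMap.restrictScalars ℝ (ContinuousLinearMap.toSpanSingleton ℂ
    (Complex.exp ζ / (Complex.exp ζ - (a.re : ℂ))))) e =
      Complex.exp ζ * e / (Complex.exp ζ - (a.re : ℂ)) := by
    simp; ring
  erw [this]
  rfl

theorem abG_lap {κ : ℝ} {a ζ : ℂ}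
    (hs : (κ : ℂ) * (Complex.exp ζ - (a.re : ℂ)) ∈ Complex.slitPlane) :
    lapC (abG κ a) ζ = ((‖Complex.exp ζ / (Complex.exp ζ - (a.re : ℂ))‖ ^ 2 : ℝ) : ℂ) *
      (-(1 / 4) * abG κ a ζ) := by
  have hne : Complex.exp ζ - (a.re : ℂ) ≠ 0 := right_ne_zero_of_mul (Complex.slitPlane_ne_zero hs)
  have hd := (Complex.hasDerivAt_exp ζ).div ((Complex.hasDerivAt_exp ζ).sub_const (a.re : ℂ)) hne
  have := lapC_comp (u := hfac) (abG_logderiv hs) hd hfac_contDiff.contDiffAt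
  rw [hfac_lap] at this
  exact this

/-- `φ` in logarithmic coordinates, multiplied by the gauge. -/
def gu (κ : ℝ) (a : ℂ) (φ : ℂ → ℂ) (ζ : ℂ) : ℂ := φ (Xp a ζ) * abG κ a ζ

theorem Xp_deriv (a ζ : ℂ) : HasDerivAt (Xp a) (Complex.exp ζ) ζ :=
  (Complex.hasDerivAt_exp ζ).const_add _

theorem phiX_contDiffAt {a ζ : ℂ} {φ : ℂ → ℂ} (hφ : ContDiffAt ℝ 2 φ (Xp a ζ)) :
    ContDiffAt ℝ 2 (fun y => φ (Xp a y)) ζ := by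
  have : ContDiffAt ℝ 2 (Xp a) ζ := by unfold Xp; fun_prop
  exact hφ.comp ζ this

theorem phiX_fderiv {a ζ : ℂ} {φ : ℂ → ℂ} (hφ : DifferentiableAt ℝ φ (Xp a ζ)) (e : ℂ) :
    fderiv ℝ (fun y => φ (Xp a y)) ζ e = fderiv ℝ φ (Xp a ζ) (Complex.exp ζ * e) := by
  have h2 : HasFDerivAt (fun y => φ (Xp a y)) _ ζ :=
    hφ.hasFDerivAt.comp ζ ((Xp_deriv a ζ).hasFDerivAt.restrictScalars ℝ)
  rw [h2.fderiv]
  simp [mul_comm]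

theorem gu_contDiffAt {κ : ℝ} {a ζ : ℂ} {φ : ℂ → ℂ} (hφ : ContDiffAt ℝ 2 φ (Xp a ζ))
    (hs : (κ : ℂ) * (Complex.exp ζ - (a.re : ℂ)) ∈ Complex.slitPlane) :
    ContDiffAt ℝ 2 (gu κ a φ) ζ := (phiX_contDiffAt hφ).mul (abG_contDiffAt hs)

theorem gu_fderiv {κ : ℝ} {a ζ : ℂ} {φ : ℂ → ℂ} (hφ : ContDiffAt ℝ 2 φ (Xp a ζ))
    (hs : (κ : ℂ) * (Complex.exp ζ - (a.re : ℂ)) ∈ Complex.slitPlane) (e : ℂ) :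
    fderiv ℝ (gu κ a φ) ζ e = Dg a φ ζ e * abG κ a ζ := by
  have h1 := ((phiX_contDiffAt hφ).differentiableAt (by norm_num)).hasFDerivAt
  have h2 := ((abG_contDiffAt hs).differentiableAt (by norm_num)).hasFDerivAt
  have h3 : HasFDerivAt (gu κ a φ) _ ζ := h1.mul h2
  rw [h3.fderiv]
  simp only [FunLike.coe_add, FunLike.coe_smul, Pi.add_apply, Pi.smul_apply, smul_eq_mul,
    phiX_fderiv (hφ.differentiableAt (by norm_num)), abG_fderiv hs, Dg]
  ring

theorem gu_lap {κ : ℝ} {a ζ : ℂ} {φ : ℂ → ℂ} (hφ : ContDiffAt ℝ 2 φ (Xp a ζ))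
    (hs : (κ : ℂ) * (Complex.exp ζ - (a.re : ℂ)) ∈ Complex.slitPlane) :
    lapC (gu κ a φ) ζ = -(((‖Complex.exp ζ‖ ^ 2 : ℝ) : ℂ) * magLap a φ (Xp a ζ)) * abG κ a ζ := by
  have hne : Complex.exp ζ - (a.re : ℂ) ≠ 0 := right_ne_zero_of_mul (Complex.slitPlane_ne_zero hs)
  have hxa : Xp a ζ ≠ a := by rw [← sub_ne_zero, Xp_sub]; exact hne
  have h1 := lapC_mul (phiX_contDiffAt hφ) (abG_contDiffAt hs)
  have h0 : lapC (fun y => φ (Xp a y)) ζ = _ :=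
    lapC_comp (u := φ) (f := Xp a) (f' := Complex.exp) (Eventually.of_forall fun y => Xp_deriv a y)
      (Complex.hasDerivAt_exp ζ) hφ
  have hgu : gu κ a φ = fun y => φ (Xp a y) * abG κ a y := rfl
  rw [hgu, h1, h0, abG_lap hs]
  simp only [pd1, pd2, phiX_fderiv (hφ.differentiableAt (by norm_num)), abG_fderiv hs]
  rw [magLap, divAB_zero hxa, (abPot_re hxa).1, (abPot_re hxa).2, Xp_sub]
  simp only [pd1, pd2, div_eq_mul_inv]
  rw [clm_expand _ (Complex.exp ζ * 1), clm_expand _ (Complex.exp ζ * Complex.I), norm_mul, mul_pow,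
    Complex.sq_norm, Complex.sq_norm, Complex.normSq_apply, Complex.normSq_apply]
  set q := (Complex.exp ζ - (a.re : ℂ))⁻¹
  simp only [mul_one, Complex.mul_re, Complex.mul_im, Complex.I_re, Complex.I_im]
  push_cast
  ring

/-- The conformal change of variables multiplies the squared magnetic gradient by `|e^ζ|²`. -/
theorem Dg_sq {a ζ : ℂ} {φ : ℂ → ℂ} (hne : Complex.exp ζ - (a.re : ℂ) ≠ 0) :
    ‖Dg a φ ζ 1‖ ^ 2 + ‖Dg a φ ζ Complex.I‖ ^ 2 = ‖Complex.exp ζ‖ ^ 2 * mgSq a φ (Xp a ζ) := by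
  have hxa : Xp a ζ ≠ a := by rw [← sub_ne_zero, Xp_sub]; exact hne
  rw [mgSq, mg1, mg2, (abPot_re hxa).1, (abPot_re hxa).2, Xp_sub, Dg, Dg]
  rw [clm_expand _ (Complex.exp ζ * 1), clm_expand _ (Complex.exp ζ * Complex.I)]
  simp only [pd1, pd2, div_eq_mul_inv]
  set q := (Complex.exp ζ - (a.re : ℂ))⁻¹
  set A := fderiv ℝ φ (Xp a ζ) 1
  set B := fderiv ℝ φ (Xp a ζ) Complex.I
  simp only [Complex.sq_norm, Complex.normSq_apply]
  simp only [mul_one, Complex.mul_re, Complex.mul_im, Complex.I_re, Complex.I_im, Complex.add_re,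
    Complex.add_im, Complex.sub_re, Complex.sub_im, Complex.ofReal_re, Complex.ofReal_im,
    Complex.inv_re, Complex.inv_im, Complex.normSq_ofNat, Complex.re_ofNat, Complex.im_ofNat]
  ring

end

section

/-- The hypotheses on `φ` and the weight used away from the pole, with the smallness of `r₀`
needed in the argument. -/
structure Sol (lam Cp : ℝ) (p : ℂ → ℝ) (a : ℂ) (r₀ : ℝ) (φ : ℂ → ℂ) : Prop where
  lam0 : 0 < lam
  Cp0 : 0 < Cp
  hp : ContDiff ℝ 1 p
  p0 : ∀ x, 0 < p x
  p1 : ∀ x, p x ≤ Cp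
  p2 : ∀ x, ‖fderiv ℝ p x‖ ≤ Cp
  a0 : 0 < a.re
  ar : 2 * a.re < r₀
  r1 : r₀ ≤ 1
  small : lam * Cp * r₀ ^ 2 ≤ 1 / 1000
  cont : ContinuousOn φ (closure (halfDisk (proj a) r₀))
  zero : ∀ x ∈ closure (halfDisk (proj a) r₀), x.re = 0 → φ x = 0
  c2 : ContDiffOn ℝ 2 φ (halfDisk (proj a) r₀ \ {a})
  eq : ∀ x ∈ halfDisk (proj a) r₀ \ {a}, magLap a φ x = ((lam * p x : ℝ) : ℂ) * φ x

/-- The potential `λ e^{2s} p` of the equation in logarithmic coordinates. -/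
def Pw (lam : ℝ) (p : ℂ → ℝ) (a ζ : ℂ) : ℝ := Real.exp (2 * ζ.re) * (lam * p (Xp a ζ))

theorem exp_zp (s t : ℝ) : Complex.exp (zp s t) = (Real.exp s : ℂ) * Complex.exp (t * Complex.I) := by
  rw [zp, Complex.exp_add, Complex.ofReal_exp]

theorem exp_zp_re (s t : ℝ) : (Complex.exp (zp s t)).re = Real.exp s * Real.cos t := by
  rw [Complex.exp_re]; simp

theorem exp_zp_im (s t : ℝ) : (Complex.exp (zp s t)).im = Real.exp s * Real.sin t := by
  rw [Complex.exp_im]; simp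

theorem norm_exp_zp (s t : ℝ) : ‖Complex.exp (zp s t)‖ = Real.exp s := by
  rw [Complex.norm_exp]; simp

theorem proj_re (a : ℂ) : (proj a).re = 0 := by simp [proj]

theorem Xp_re (a : ℂ) (s t : ℝ) : (Xp a (zp s t)).re = Real.exp s * Real.cos t := by
  rw [Xp, Complex.add_re, proj_re, exp_zp_re, zero_add]

theorem Xp_dist (a ζ : ℂ) : dist (Xp a ζ) (proj a) = Real.exp ζ.re := by
  rw [dist_eq_norm, Xp, add_sub_cancel_left, Complex.norm_exp]

theorem Xp_circle (a : ℂ) (s t : ℝ) : Xp a (zp s t) = circleMap (proj a) (Real.exp s) t := by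
  rw [Xp, circleMap, exp_zp]

theorem closedHalf_subset {c : ℂ} (hc : c.re = 0) {r : ℝ} (hr : 0 < r) {x : ℂ} (h1 : dist x c ≤ r)
    (h2 : 0 ≤ x.re) : x ∈ closure (halfDisk c r) := by
  have ht : Tendsto (fun τ : ℝ => x + (τ : ℂ) * (c + (r / 2 : ℝ) - x)) (nhdsWithin 0 (Ioi 0)) (nhds x) := by
    have : Continuous (fun τ : ℝ => x + (τ : ℂ) * (c + (r / 2 : ℝ) - x)) := by fun_prop
    have h := this.tendsto 0
    simp only [Complex.ofReal_zero, zero_mul, add_zero] at h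
    exact h.mono_left nhdsWithin_le_nhds
  refine mem_closure_of_tendsto ht ?_
  filter_upwards [Ioo_mem_nhdsGT (show (0 : ℝ) < 1 by norm_num)] with τ hτ
  have e1 : x + (τ : ℂ) * (c + (r / 2 : ℝ) - x) - c = ((1 - τ : ℝ) : ℂ) * (x - c) + ((τ * (r / 2) : ℝ) : ℂ) := by
    push_cast; ring
  constructor
  · rw [dist_eq_norm, e1]
    refine (norm_add_le _ _).trans_lt ?_
    rw [norm_mul, Complex.norm_real, Complex.norm_real, Real.norm_of_nonneg (by linarith [hτ.2]),
      Real.norm_of_nonneg (mul_nonneg hτ.1.le (by linarith)), ← dist_eq_norm]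
    nlinarith [mul_le_mul_of_nonneg_left h1 (show 0 ≤ 1 - τ by linarith [hτ.2]), mul_pos hτ.1 hr]
  · have : (x + (τ : ℂ) * (c + (r / 2 : ℝ) - x)).re = (1 - τ) * x.re + τ * (r / 2) := by
      simp [hc]; ring
    rw [this]
    nlinarith [mul_nonneg (show 0 ≤ 1 - τ by linarith [hτ.2]) h2, mul_pos hτ.1 hr]

theorem isOpen_halfDisk (c : ℂ) (r : ℝ) : IsOpen (halfDisk c r) :=
  (isOpen_lt (f := fun x : ℂ => dist x c) (by fun_prop) continuous_const).inter
    (isOpen_lt continuous_const Complex.continuous_re)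

theorem exp_sub_ne {a : ℂ} (ha : 0 < a.re) {s t : ℝ} (h : s ≠ Real.log a.re) :
    Complex.exp (zp s t) - (a.re : ℂ) ≠ 0 := by
  intro h0
  have h1 : Complex.exp (zp s t) = (a.re : ℂ) := sub_eq_zero.1 h0
  have := congrArg norm h1
  rw [norm_exp_zp, Complex.norm_real, Real.norm_of_nonneg ha.le] at this
  exact h (by rw [← this, Real.log_exp])

namespace Sol
variable {lam Cp : ℝ} {p : ℂ → ℝ} {a : ℂ} {r₀ : ℝ} {φ : ℂ → ℂ}

theorem r0 (S : Sol lam Cp p a r₀ φ) : 0 < r₀ := by linarith [S.a0, S.ar]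

theorem mem_closure (S : Sol lam Cp p a r₀ φ) {s t : ℝ} (hs : s ≤ Real.log r₀)
    (ht : t ∈ Icc (-(π / 2)) (π / 2)) : Xp a (zp s t) ∈ closure (halfDisk (proj a) r₀) := by
  apply closedHalf_subset (proj_re a) S.r0
  · rw [Xp_dist, zp_re]; exact (Real.le_log_iff_exp_le S.r0).1 hs
  · rw [Xp_re]; exact mul_nonneg (Real.exp_pos _).le (Real.cos_nonneg_of_mem_Icc ht)

theorem mem_half (S : Sol lam Cp p a r₀ φ) {s t : ℝ} (hs : s < Real.log r₀)
    (ht : t ∈ Ang) : Xp a (zp s t) ∈ halfDisk (proj a) r₀ :=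
  ⟨by rw [Xp_dist, zp_re]; exact (Real.lt_log_iff_exp_lt S.r0).1 hs,
    by rw [Xp_re]; exact mul_pos (Real.exp_pos _) (Real.cos_pos_of_mem_Ioo ht)⟩

theorem mem_dom (S : Sol lam Cp p a r₀ φ) {s t : ℝ} (hs : s < Real.log r₀) (hα : s ≠ Real.log a.re)
    (ht : t ∈ Ang) : Xp a (zp s t) ∈ halfDisk (proj a) r₀ \ {a} := by
  refine ⟨S.mem_half hs ht, ?_⟩
  rw [mem_singleton_iff, ← sub_eq_zero, Xp_sub]
  exact exp_sub_ne S.a0 hα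

theorem contDiffAt (S : Sol lam Cp p a r₀ φ) {x : ℂ} (hx : x ∈ halfDisk (proj a) r₀ \ {a}) :
    ContDiffAt ℝ 2 φ x :=
  S.c2.contDiffAt (((isOpen_halfDisk _ _).sdiff isClosed_singleton).mem_nhds hx)

theorem Pw_contDiff (S : Sol lam Cp p a r₀ φ) : ContDiff ℝ 1 (Pw lam p a) := by
  have h1 : ContDiff ℝ 1 (fun ζ : ℂ => ζ.re) := Complex.reCLM.contDiff
  have h2 : ContDiff ℝ 1 (Xp a) := by unfold Xp; fun_prop
  exact ((contDiff_const.mul h1).exp).mul (contDiff_const.mul (S.hp.comp h2))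

theorem Pw_nonneg (S : Sol lam Cp p a r₀ φ) (ζ : ℂ) : 0 ≤ Pw lam p a ζ :=
  mul_nonneg (Real.exp_pos _).le (mul_nonneg S.lam0.le (S.p0 _).le)

theorem Pw_le (S : Sol lam Cp p a r₀ φ) (ζ : ℂ) : Pw lam p a ζ ≤ lam * Cp * Real.exp (2 * ζ.re) := by
  have := mul_le_mul_of_nonneg_left (mul_le_mul_of_nonneg_left (S.p1 (Xp a ζ)) S.lam0.le)
    (Real.exp_pos (2 * ζ.re)).le
  rw [Pw]; linarith

theorem Pw_fderiv (S : Sol lam Cp p a r₀ φ) (ζ : ℂ) : fderiv ℝ (Pw lam p a) ζ 1 =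
    2 * Pw lam p a ζ + Real.exp (2 * ζ.re) * (lam * fderiv ℝ p (Xp a ζ) (Complex.exp ζ)) := by
  have h1 : HasFDerivAt (fun ζ : ℂ => ζ.re) Complex.reCLM ζ := Complex.reCLM.hasFDerivAt
  have hp : HasFDerivAt p (fderiv ℝ p (Xp a ζ)) (Xp a ζ) :=
    (S.hp.differentiable (by norm_num) _).hasFDerivAt
  have h2 : HasFDerivAt (fun y => p (Xp a y)) _ ζ :=
    hp.comp ζ ((Xp_deriv a ζ).hasFDerivAt.restrictScalars ℝ)
  have h3 : HasFDerivAt (Pw lam p a) _ ζ := ((h1.const_mul 2).exp).mul (h2.const_mul lam)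
  rw [h3.fderiv]
  simp [Pw]; ring

theorem exp_le (S : Sol lam Cp p a r₀ φ) {s : ℝ} (hs : s < Real.log r₀) : Real.exp s < r₀ :=
  (Real.lt_log_iff_exp_lt S.r0).1 hs

theorem Lexp_le (S : Sol lam Cp p a r₀ φ) {s : ℝ} (hs : s ≤ Real.log r₀) :
    lam * Cp * Real.exp (2 * s) ≤ 1 / 1000 := by
  have h1 : Real.exp s ≤ r₀ := (Real.le_log_iff_exp_le S.r0).1 hs
  have h2 : Real.exp (2 * s) ≤ r₀ ^ 2 := by
    rw [two_mul, Real.exp_add, sq]; exact mul_le_mul h1 h1 (Real.exp_pos _).le S.r0.le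
  exact (mul_le_mul_of_nonneg_left h2 (mul_pos S.lam0 S.Cp0).le).trans S.small

theorem Pws_le (S : Sol lam Cp p a r₀ φ) {ζ : ℂ} (hs : ζ.re < Real.log r₀) :
    |fderiv ℝ (Pw lam p a) ζ 1| ≤ 3 * (lam * Cp * Real.exp (2 * ζ.re)) := by
  have hl := S.lam0.le
  have h1 : |fderiv ℝ p (Xp a ζ) (Complex.exp ζ)| ≤ Cp := by
    have := (fderiv ℝ p (Xp a ζ)).le_opNorm (Complex.exp ζ)
    rw [Complex.norm_exp] at this
    have h2 : ‖fderiv ℝ p (Xp a ζ)‖ * Real.exp ζ.re ≤ Cp * 1 :=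
      mul_le_mul (S.p2 _) ((S.exp_le hs).le.trans S.r1) (Real.exp_pos _).le S.Cp0.le
    rw [← Real.norm_eq_abs]; linarith
  rw [S.Pw_fderiv]
  refine (abs_add_le _ _).trans ?_
  rw [abs_of_nonneg (mul_nonneg zero_le_two (S.Pw_nonneg ζ)), abs_mul, abs_mul, abs_of_nonneg hl,
    abs_of_pos (Real.exp_pos _)]
  have := S.Pw_le ζ
  have := mul_le_mul_of_nonneg_left (mul_le_mul_of_nonneg_left h1 hl) (Real.exp_pos (2 * ζ.re)).le
  linarith

/-- Away from the radius of the pole, the gauged function solves an equation without magnetic field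
on a strip. -/
theorem strip (S : Sol lam Cp p a r₀ φ) {κ : ℝ} {I : Set ℝ} (hI : IsOpen I)
    (hσ : ∀ s ∈ I, s < Real.log r₀) (hα : ∀ s ∈ I, s ≠ Real.log a.re)
    (hκ : ∀ s ∈ I, ∀ t ∈ Icc (-(π / 2)) (π / 2),
      (κ : ℂ) * (Complex.exp (zp s t) - (a.re : ℂ)) ∈ Complex.slitPlane) :
    Strip (fun s t => gu κ a φ (zp s t)) (fun s t => fderiv ℝ (gu κ a φ) (zp s t) 1)
      (fun s t => fderiv ℝ (gu κ a φ) (zp s t) Complex.I)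
      (fun s t => fderiv ℝ (fderiv ℝ (gu κ a φ)) (zp s t) 1 1)
      (fun s t => fderiv ℝ (fderiv ℝ (gu κ a φ)) (zp s t) Complex.I 1)
      (fun s t => fderiv ℝ (fderiv ℝ (gu κ a φ)) (zp s t) Complex.I Complex.I)
      (fun s t => Pw lam p a (zp s t)) (fun s t => fderiv ℝ (Pw lam p a) (zp s t) 1) I := by
  have zpe : ∀ ζ : ℂ, zp ζ.re ζ.im = ζ := fun ζ => Complex.re_add_im ζ
  have hIcc : ∀ t ∈ Ang, t ∈ Icc (-(π / 2)) (π / 2) := fun t ht => Ioo_subset_Icc_self ht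
  have edge : ∀ s ∈ I, ∀ t ∈ Icc (-(π / 2)) (π / 2), Real.cos t = 0 → gu κ a φ (zp s t) = 0 := by
    intro s hs t ht h0
    rw [gu, S.zero _ (S.mem_closure (hσ s hs).le ht) (by rw [Xp_re, h0, mul_zero]), zero_mul]
  have hpi := Real.pi_pos
  refine strip_of_contDiffOn hI ?_ ?_ ?_ ?_ S.Pw_contDiff ?_ ?_ ?_ ?_
  · rintro ζ ⟨h1, h2⟩
    have hd := S.mem_dom (hσ _ h1) (hα _ h1) h2
    have hk := hκ _ h1 _ (hIcc _ h2)
    rw [zpe] at hd hk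
    exact (gu_contDiffAt (S.contDiffAt hd) hk).contDiffWithinAt
  · have c1 : ContinuousOn (fun ζ => φ (Xp a ζ)) {ζ : ℂ | ζ.re ∈ I ∧ ζ.im ∈ Icc (-(π / 2)) (π / 2)} := by
      refine S.cont.comp (by unfold Xp; fun_prop) ?_
      rintro ζ ⟨h1, h2⟩
      have := S.mem_closure (hσ _ h1).le h2
      rwa [zpe] at this
    refine c1.mul ?_
    rintro ζ ⟨h1, h2⟩
    have hk := hκ _ h1 _ h2
    rw [zpe] at hk
    exact (abG_contDiffAt hk).continuousAt.continuousWithinAt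
  · exact fun s hs => edge s hs _ ⟨by linarith, le_rfl⟩ Real.cos_pi_div_two
  · exact fun s hs => edge s hs _ ⟨le_rfl, by linarith⟩ (by rw [Real.cos_neg, Real.cos_pi_div_two])
  · intro ζ h1 h2
    have hd := S.mem_dom (hσ _ h1) (hα _ h1) h2
    have hk := hκ _ h1 _ (hIcc _ h2)
    rw [zpe] at hd hk
    rw [gu_lap (S.contDiffAt hd) hk, S.eq _ hd, gu, Pw, Complex.norm_exp, two_mul, Real.exp_add]
    push_cast; ring
  · exact fun ζ _ _ => S.Pw_nonneg ζ
  · intro ζ h1 _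
    linarith [S.Pw_le ζ, S.Lexp_le (hσ _ h1).le]
  · intro ζ h1 _
    linarith [S.Pws_le (hσ _ h1), S.Lexp_le (hσ _ h1).le]

theorem slit_out {s t : ℝ} (a0 : 0 < a.re) (hs : Real.log a.re < s)
    (ht : t ∈ Icc (-(π / 2)) (π / 2)) :
    ((1 : ℝ) : ℂ) * (Complex.exp (zp s t) - (a.re : ℂ)) ∈ Complex.slitPlane := by
  rw [Complex.ofReal_one, one_mul, Complex.mem_slitPlane_iff]
  rw [Complex.sub_re, Complex.sub_im, Complex.ofReal_re, Complex.ofReal_im, exp_zp_re, exp_zp_im]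
  by_cases h : t = 0
  · left; rw [h, Real.cos_zero, mul_one]; linarith [(Real.log_lt_iff_lt_exp a0).1 hs]
  · right
    rw [sub_zero]
    refine mul_ne_zero (Real.exp_pos s).ne' ?_
    rw [Ne, Real.sin_eq_zero_iff_of_lt_of_lt (by linarith [ht.1, Real.pi_pos]) (by linarith [ht.2, Real.pi_pos])]
    exact h

theorem slit_in {s t : ℝ} (a0 : 0 < a.re) (hs : s < Real.log a.re) :
    ((-1 : ℝ) : ℂ) * (Complex.exp (zp s t) - (a.re : ℂ)) ∈ Complex.slitPlane := by
  rw [Complex.mem_slitPlane_iff]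
  left
  have h1 := (Real.lt_log_iff_exp_lt a0).1 hs
  have h2 := mul_le_mul_of_nonneg_left (Real.cos_le_one t) (Real.exp_pos s).le
  rw [Complex.re_ofReal_mul, Complex.sub_re, Complex.ofReal_re, exp_zp_re]
  linarith

end Sol

end

section

/-- `H(φ, e^s)` as an angular integral. -/
def fH (a : ℂ) (φ : ℂ → ℂ) (s : ℝ) : ℝ := ∫ t in Ang, ‖φ (Xp a (zp s t))‖ ^ 2

/-- Half of the derivative of `fH`: the boundary flux `∫ ⟨D_s φ, φ⟩`. -/
def fe (a : ℂ) (φ : ℂ → ℂ) (s : ℝ) : ℝ :=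
  ∫ t in Ang, inner ℝ (Dg a φ (zp s t) 1) (φ (Xp a (zp s t)))

/-- The radial part of the boundary energy. -/
def fa (a : ℂ) (φ : ℂ → ℂ) (s : ℝ) : ℝ := ∫ t in Ang, ‖Dg a φ (zp s t) 1‖ ^ 2

/-- The angular part of the boundary energy. -/
def fb (a : ℂ) (φ : ℂ → ℂ) (s : ℝ) : ℝ := ∫ t in Ang, ‖Dg a φ (zp s t) Complex.I‖ ^ 2

/-- The zeroth-order part of the boundary energy. -/
def fc (lam : ℝ) (p : ℂ → ℝ) (a : ℂ) (φ : ℂ → ℂ) (s : ℝ) : ℝ :=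
  ∫ t in Ang, Pw lam p a (zp s t) * ‖φ (Xp a (zp s t))‖ ^ 2

/-- The gauged function with gauge `κ` is a solution on the strip over `I`. -/
def GStrip (lam : ℝ) (p : ℂ → ℝ) (a : ℂ) (φ : ℂ → ℂ) (κ : ℝ) (I : Set ℝ) : Prop :=
  Strip (fun s t => gu κ a φ (zp s t)) (fun s t => fderiv ℝ (gu κ a φ) (zp s t) 1)
      (fun s t => fderiv ℝ (gu κ a φ) (zp s t) Complex.I)
      (fun s t => fderiv ℝ (fderiv ℝ (gu κ a φ)) (zp s t) 1 1)
      (fun s t => fderiv ℝ (fderiv ℝ (gu κ a φ)) (zp s t) Complex.I 1)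
      (fun s t => fderiv ℝ (fderiv ℝ (gu κ a φ)) (zp s t) Complex.I Complex.I)
      (fun s t => Pw lam p a (zp s t)) (fun s t => fderiv ℝ (Pw lam p a) (zp s t) 1) I

theorem inner_mul_unit {x y g : ℂ} (hg : ‖g‖ = 1) : inner ℝ (x * g) (y * g) = inner ℝ x y := by
  have h : g.re * g.re + g.im * g.im = 1 := by
    rw [← Complex.normSq_apply, ← Complex.sq_norm, hg]; norm_num
  rw [Complex.inner, Complex.inner]
  simp only [Complex.mul_re, Complex.mul_im, Complex.conj_re, Complex.conj_im]
  linear_combination (x.re * y.re + x.im * y.im) * h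

theorem norm_mul_abG (κ : ℝ) (a ζ x : ℂ) : ‖x * abG κ a ζ‖ = ‖x‖ := by
  rw [norm_mul, norm_abG, mul_one]

theorem norm_gu (κ : ℝ) (a : ℂ) (φ : ℂ → ℂ) (ζ : ℂ) : ‖gu κ a φ ζ‖ = ‖φ (Xp a ζ)‖ := norm_mul_abG _ _ _ _

namespace Sol
variable {lam Cp : ℝ} {p : ℂ → ℝ} {a : ℂ} {r₀ : ℝ} {φ : ℂ → ℂ}

theorem α_lt (S : Sol lam Cp p a r₀ φ) : Real.log a.re < Real.log r₀ :=
  Real.log_lt_log S.a0 (by linarith [S.a0, S.ar])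

theorem fderiv_gu (S : Sol lam Cp p a r₀ φ) {s t κ : ℝ} (hs : s < Real.log r₀)
    (hα : s ≠ Real.log a.re) (ht : t ∈ Ang)
    (hκ : (κ : ℂ) * (Complex.exp (zp s t) - (a.re : ℂ)) ∈ Complex.slitPlane) (e : ℂ) :
    fderiv ℝ (gu κ a φ) (zp s t) e = Dg a φ (zp s t) e * abG κ a (zp s t) :=
  gu_fderiv (S.contDiffAt (S.mem_dom hs hα ht)) hκ e

theorem strip_out (S : Sol lam Cp p a r₀ φ) :
    GStrip lam p a φ 1 (Ioo (Real.log a.re) (Real.log r₀)) :=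
  S.strip isOpen_Ioo (fun _ h => h.2) (fun _ h => h.1.ne') fun _ h _ ht => slit_out S.a0 h.1 ht

theorem strip_in (S : Sol lam Cp p a r₀ φ) : GStrip lam p a φ (-1) (Iio (Real.log a.re)) :=
  S.strip isOpen_Iio (fun _ h => lt_trans h S.α_lt) (fun _ h => ne_of_lt h)
    fun _ h _ _ => slit_in S.a0 h

/-- Every slice off the pole radius has a neighbourhood on which one of the two gauges works. -/
theorem piece (S : Sol lam Cp p a r₀ φ) {s : ℝ} (hs : s < Real.log r₀) (hα : s ≠ Real.log a.re) :
    ∃ (κ : ℝ) (I : Set ℝ), IsOpen I ∧ s ∈ I ∧ GStrip lam p a φ κ I ∧ ∀ x ∈ I, ∀ t ∈ Ang, ∀ e : ℂ,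
      fderiv ℝ (gu κ a φ) (zp x t) e = Dg a φ (zp x t) e * abG κ a (zp x t) := by
  rcases lt_or_gt_of_ne hα with h | h
  · exact ⟨-1, Iio (Real.log a.re), isOpen_Iio, h, S.strip_in, fun x hx t ht e =>
      S.fderiv_gu (lt_trans hx S.α_lt) (ne_of_lt hx) ht (slit_in S.a0 hx) e⟩
  · exact ⟨1, Ioo (Real.log a.re) (Real.log r₀), isOpen_Ioo, ⟨h, hs⟩, S.strip_out, fun x hx t ht e =>
      S.fderiv_gu hx.2 hx.1.ne' ht (slit_out S.a0 hx.1 (Ioo_subset_Icc_self ht)) e⟩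

theorem fH_eq (κ : ℝ) (s : ℝ) : ∫ t in Ang, ‖gu κ a φ (zp s t)‖ ^ 2 = fH a φ s := by
  simp only [norm_gu, fH]

theorem fc_eq (κ : ℝ) (s : ℝ) : ∫ t in Ang, Pw lam p a (zp s t) * ‖gu κ a φ (zp s t)‖ ^ 2 =
    fc lam p a φ s := by
  simp only [norm_gu, fc]

theorem fD_eq {κ s : ℝ} {e : ℂ}
    (h : ∀ t ∈ Ang, fderiv ℝ (gu κ a φ) (zp s t) e = Dg a φ (zp s t) e * abG κ a (zp s t)) :
    ∫ t in Ang, ‖fderiv ℝ (gu κ a φ) (zp s t) e‖ ^ 2 = ∫ t in Ang, ‖Dg a φ (zp s t) e‖ ^ 2 :=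
  setIntegral_congr_fun measurableSet_Ioo fun t ht => by simp only [h t ht, norm_mul_abG]

theorem fe_eq {κ s : ℝ}
    (h : ∀ t ∈ Ang, fderiv ℝ (gu κ a φ) (zp s t) 1 = Dg a φ (zp s t) 1 * abG κ a (zp s t)) :
    ∫ t in Ang, inner ℝ (fderiv ℝ (gu κ a φ) (zp s t) 1) (gu κ a φ (zp s t)) = fe a φ s :=
  setIntegral_congr_fun measurableSet_Ioo fun t ht => by
    simp only [h t ht, gu, inner_mul_unit (norm_abG _ _ _)]

/-- The derivative formulas and inequalities for the angular integrals, off the pole radius. -/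
theorem loc (S : Sol lam Cp p a r₀ φ) {s : ℝ} (hs : s < Real.log r₀) (hα : s ≠ Real.log a.re) :
    HasDerivAt (fH a φ) (2 * fe a φ s) s ∧
    HasDerivAt (fe a φ) (fa a φ s + fb a φ s - fc lam p a φ s) s ∧
    (∃ d, HasDerivAt (fun x => fa a φ x - fb a φ x + fc lam p a φ x) d s ∧
      |d| ≤ 3 * (lam * Cp * Real.exp (2 * s)) * fH a φ s) ∧
    fc lam p a φ s ≤ lam * Cp * Real.exp (2 * s) * fH a φ s ∧ fH a φ s ≤ fb a φ s ∧
    fe a φ s ^ 2 ≤ fa a φ s * fH a φ s := by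
  obtain ⟨κ, I, hI, hsI, G, hD⟩ := S.piece hs hα
  have hn : I ∈ nhds s := hI.mem_nhds hsI
  obtain ⟨b1, b2, b3, b4, b5, b6, b7, b8⟩ := Strip.bc G hsI
  have e1 : ∀ x ∈ I, ∫ t in Ang, ‖fderiv ℝ (gu κ a φ) (zp x t) 1‖ ^ 2 = fa a φ x := fun x hx =>
    fD_eq fun t ht => hD x hx t ht 1
  have e2 : ∀ x ∈ I, ∫ t in Ang, ‖fderiv ℝ (gu κ a φ) (zp x t) Complex.I‖ ^ 2 = fb a φ x :=
    fun x hx => fD_eq fun t ht => hD x hx t ht Complex.I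
  have e3 : ∀ x ∈ I, ∫ t in Ang, inner ℝ (fderiv ℝ (gu κ a φ) (zp x t) 1) (gu κ a φ (zp x t)) =
    fe a φ x := fun x hx => fe_eq fun t ht => hD x hx t ht 1
  refine ⟨?_, ?_, ⟨∫ t in Ang, fderiv ℝ (Pw lam p a) (zp s t) 1 * ‖gu κ a φ (zp s t)‖ ^ 2, ?_, ?_⟩,
    ?_, ?_, ?_⟩
  · have h := Strip.dH G hsI
    simp only [fH_eq, e3 s hsI] at h
    exact h
  · have h := Strip.dE G hsI
    simp only [fc_eq, e1 s hsI, e2 s hsI] at h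
    refine h.congr_of_eventuallyEq ?_
    filter_upwards [hn] with x hx using (e3 x hx).symm
  · have h := Strip.dPhi G hsI
    refine h.congr_of_eventuallyEq ?_
    filter_upwards [hn] with x hx
    simp only [fc_eq, e1 x hx, e2 x hx]
  · rw [← Real.norm_eq_abs, ← fH_eq (a := a) (φ := φ) κ, ← integral_const_mul]
    refine norm_integral_le_of_norm_le ((BC.const _).mul b1.sq).integrable ?_
    filter_upwards [ae_restrict_mem measurableSet_Ioo] with t ht
    rw [norm_mul, Real.norm_of_nonneg (sq_nonneg ‖gu κ a φ (zp s t)‖), Real.norm_eq_abs]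
    refine mul_le_mul_of_nonneg_right ?_ (sq_nonneg _)
    have := S.Pws_le (ζ := zp s t) (by simpa using hs)
    simpa using this
  · rw [← fc_eq κ, ← fH_eq (a := a) (φ := φ) κ, ← integral_const_mul]
    refine setIntegral_mono_on (b7.mul b1.sq).integrable ((BC.const _).mul b1.sq).integrable
      measurableSet_Ioo fun t ht => mul_le_mul_of_nonneg_right ?_ (sq_nonneg _)
    simpa using S.Pw_le (zp s t)
  · rw [← fH_eq κ, ← e2 s hsI]
    obtain ⟨C, hC, hb⟩ := Strip.edge G hsI
    exact wirtinger b1 b3 (fun t ht => G.dt s hsI t ht) hC fun t ht => (hb t ht).1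
  · rw [← fH_eq κ, ← e3 s hsI, ← e1 s hsI]
    exact b2.cs_sq b1

end Sol

end

/-! ### Behaviour at the pole -/

section

/-- The vanishing expansion of order `1/2` at the pole. -/
structure Pole (a : ℂ) (φ : ℂ → ℂ) (c₁ d₁ : ℝ) : Prop where
  ne : ¬(c₁ = 0 ∧ d₁ = 0)
  e0 : (fun x => φ x - modelHalf a c₁ d₁ x) =o[nhdsWithin a {a}ᶜ] (fun x => Real.sqrt ‖x - a‖)
  e1 : (fun x => fderiv ℝ φ x - fderiv ℝ (modelHalf a c₁ d₁) x)
          =o[nhdsWithin a {a}ᶜ] fun x => (Real.sqrt ‖x - a‖)⁻¹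

theorem model_norm (a : ℂ) (c₁ d₁ : ℝ) (x : ℂ) :
    ‖modelHalf a c₁ d₁ x‖ ≤ (|c₁| + |d₁|) * √‖x - a‖ := by
  have hω : ‖(x - a) / (‖x - a‖ : ℂ)‖ ≤ 1 := by
    rw [norm_div, Complex.norm_real, norm_norm]; exact div_self_le_one _
  have h1 : ‖(c₁ : ℂ) * (1 + (x - a) / (‖x - a‖ : ℂ)) / 2‖ ≤ |c₁| := by
    rw [norm_div, norm_mul, Complex.norm_real, Real.norm_eq_abs, Complex.norm_ofNat]
    have := (norm_add_le (1 : ℂ) ((x - a) / (‖x - a‖ : ℂ)))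
    rw [norm_one] at this
    have := mul_le_mul_of_nonneg_left (this.trans (by linarith : _ ≤ (2 : ℝ))) (abs_nonneg c₁)
    linarith
  have h2 : ‖(d₁ : ℂ) * ((x - a) / (‖x - a‖ : ℂ) - 1) / (2 * Complex.I)‖ ≤ |d₁| := by
    rw [norm_div, norm_mul, Complex.norm_real, Real.norm_eq_abs, norm_mul, Complex.norm_ofNat,
      Complex.norm_I, mul_one]
    have := (norm_sub_le ((x - a) / (‖x - a‖ : ℂ)) (1 : ℂ))
    rw [norm_one] at this
    have := mul_le_mul_of_nonneg_left (this.trans (by linarith : _ ≤ (2 : ℝ))) (abs_nonneg d₁)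
    linarith
  rw [modelHalf, norm_mul, Complex.norm_real, Real.norm_of_nonneg (Real.sqrt_nonneg _), mul_comm]
  exact mul_le_mul_of_nonneg_right ((norm_add_le _ _).trans (add_le_add h1 h2)) (Real.sqrt_nonneg _)

theorem model_fderiv_norm (a : ℂ) (c₁ d₁ : ℝ) : ∃ C, ∀ x, x ≠ a →
    ‖fderiv ℝ (modelHalf a c₁ d₁) x‖ ≤ C * (√‖x - a‖)⁻¹ := by
  set A : ℂ := (c₁ : ℂ) / 2 - (d₁ : ℂ) / (2 * Complex.I)
  set B : ℂ := (c₁ : ℂ) / 2 + (d₁ : ℂ) / (2 * Complex.I)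
  refine ⟨‖A‖ / 2 + 3 / 2 * ‖B‖, fun x hx => ?_⟩
  have hn : 0 < ‖x - a‖ := norm_pos_iff.2 (sub_ne_zero.2 hx)
  have hr : 0 < √‖x - a‖ := Real.sqrt_pos.2 hn
  have hrr : √‖x - a‖ * √‖x - a‖ = ‖x - a‖ := Real.mul_self_sqrt hn.le
  -- the radial function `√‖x - a‖` and its derivative
  have hN : DifferentiableAt ℝ (fun y : ℂ => ‖y - a‖) x :=
    (differentiableAt_id.sub_const a).norm ℝ (sub_ne_zero.2 hx)
  set ℓ := fderiv ℝ (fun y : ℂ => ‖y - a‖) x with hℓ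
  have hℓ1 : ‖ℓ‖ ≤ 1 := by
    have : LipschitzWith 1 (fun y : ℂ => ‖y - a‖) := LipschitzWith.of_dist_le' (K := 1) (fun y z => by
      rw [one_mul, Real.dist_eq]
      refine (abs_norm_sub_norm_le _ _).trans ?_
      rw [sub_sub_sub_cancel_right, dist_eq_norm]) |>.weaken (by simp)
    simpa using norm_fderiv_le_of_lipschitz ℝ this (x₀ := x)
  have hS : HasFDerivAt (fun y : ℂ => √‖y - a‖) ((1 / (2 * √‖x - a‖)) • ℓ) x :=
    hN.hasFDerivAt.sqrt hn.ne'
  have hSc : HasFDerivAt (fun y : ℂ => ((√‖y - a‖ : ℝ) : ℂ))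
      (Complex.ofRealCLM.comp ((1 / (2 * √‖x - a‖)) • ℓ)) x :=
    Complex.ofRealCLM.hasFDerivAt.comp x hS
  have hI : HasFDerivAt (fun y : ℂ => (√‖y - a‖)⁻¹) _ x :=
    (hasDerivAt_inv hr.ne').comp_hasFDerivAt x hS
  have hIc := Complex.ofRealCLM.hasFDerivAt.comp x hI
  have hid : HasFDerivAt (fun y : ℂ => y - a) (ContinuousLinearMap.id ℝ ℂ) x :=
    (hasFDerivAt_id x).sub_const a
  have hD := (hSc.const_mul A).add ((hid.mul hIc).const_mul B)
  have heq : modelHalf a c₁ d₁ =ᶠ[nhds x] fun y =>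
      A * ((√‖y - a‖ : ℝ) : ℂ) + B * ((y - a) * (((√‖y - a‖)⁻¹ : ℝ) : ℂ)) := by
    filter_upwards [isOpen_ne.mem_nhds hx] with y hy
    have h1 : 0 < ‖y - a‖ := norm_pos_iff.2 (sub_ne_zero.2 hy)
    have h2 : ((√‖y - a‖ : ℝ) : ℂ) * ((√‖y - a‖ : ℝ) : ℂ) = ((‖y - a‖ : ℝ) : ℂ) := by
      rw [← Complex.ofReal_mul, Real.mul_self_sqrt h1.le]
    have h3 : ((√‖y - a‖ : ℝ) : ℂ) ≠ 0 := by
      exact_mod_cast (Real.sqrt_pos.2 h1).ne'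
    simp only [A, B]
    rw [modelHalf, ← h2]
    push_cast
    have := Complex.I_ne_zero
    field_simp
    ring
  have hD' : HasFDerivAt (modelHalf a c₁ d₁) _ x := hD.congr_of_eventuallyEq heq
  rw [hD'.fderiv]
  refine ContinuousLinearMap.opNorm_le_bound _ (by positivity) fun e => ?_
  have hle : |ℓ e| ≤ ‖e‖ := by
    have := ℓ.le_opNorm e
    rw [Real.norm_eq_abs] at this
    exact this.trans (by nlinarith [norm_nonneg e])
  set r := √‖x - a‖
  have E1 : ‖((1 / (2 * r) * ℓ e : ℝ) : ℂ)‖ ≤ 1 / 2 * r⁻¹ * ‖e‖ := by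
    rw [Complex.norm_real, Real.norm_eq_abs, abs_mul, abs_of_pos (by positivity)]
    have := mul_le_mul_of_nonneg_left hle (by positivity : 0 ≤ 1 / (2 * r))
    refine this.trans (le_of_eq ?_)
    field_simp
  have E2 : ‖e * ((r⁻¹ : ℝ) : ℂ)‖ = r⁻¹ * ‖e‖ := by
    rw [norm_mul, Complex.norm_real, Real.norm_of_nonneg (by positivity), mul_comm]
  have E3 : ‖(x - a) * ((-(r ^ 2)⁻¹ * (1 / (2 * r) * ℓ e) : ℝ) : ℂ)‖ ≤ 1 / 2 * r⁻¹ * ‖e‖ := by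
    rw [norm_mul, Complex.norm_real, Real.norm_eq_abs, abs_mul, abs_mul, abs_neg, ← hrr,
      abs_of_pos (by positivity : 0 < (r ^ 2)⁻¹), abs_of_pos (by positivity : 0 < 1 / (2 * r))]
    have := mul_le_mul_of_nonneg_left hle (by positivity : 0 ≤ 1 / (2 * r))
    have h2 : r * r * ((r ^ 2)⁻¹ * (1 / (2 * r) * |ℓ e|)) = 1 / (2 * r) * |ℓ e| := by
      field_simp
    rw [h2]
    refine this.trans (le_of_eq ?_)
    field_simp
  have T : ‖A * ((1 / (2 * r) * ℓ e : ℝ) : ℂ) +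
      B * ((x - a) * ((-(r ^ 2)⁻¹ * (1 / (2 * r) * ℓ e) : ℝ) : ℂ) + e * ((r⁻¹ : ℝ) : ℂ))‖ ≤
      (‖A‖ / 2 + 3 / 2 * ‖B‖) * r⁻¹ * ‖e‖ := by
    refine (norm_add_le _ _).trans ?_
    rw [norm_mul, norm_mul]
    have h1 := mul_le_mul_of_nonneg_left E1 (norm_nonneg A)
    have h2 := mul_le_mul_of_nonneg_left
      ((norm_add_le ((x - a) * ((-(r ^ 2)⁻¹ * (1 / (2 * r) * ℓ e) : ℝ) : ℂ)) (e * ((r⁻¹ : ℝ) : ℂ))).trans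
        (add_le_add E3 E2.le)) (norm_nonneg B)
    refine (add_le_add h1 h2).trans (le_of_eq ?_)
    ring
  refine le_trans (le_of_eq ?_) T
  congr 1
  simp [r]
  ring

/-- Size of `φ` and its gradient near the pole. -/
theorem Pole.near {a : ℂ} {φ : ℂ → ℂ} {c₁ d₁ : ℝ} (h : Pole a φ c₁ d₁) :
    ∃ δ > 0, ∃ C, 0 ≤ C ∧ ∀ x, x ≠ a → ‖x - a‖ < δ →
      ‖φ x‖ ≤ C * √‖x - a‖ ∧ ‖fderiv ℝ φ x‖ ≤ C * (√‖x - a‖)⁻¹ := by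
  obtain ⟨K, hK⟩ := model_fderiv_norm a c₁ d₁
  have h0 := h.e0.bound (c := 1) one_pos
  have h1 := h.e1.bound (c := 1) one_pos
  obtain ⟨δ, hδ, hb⟩ := Metric.mem_nhdsWithin_iff.1 (h0.and h1)
  refine ⟨δ, hδ, 1 + |c₁| + |d₁| + |K|, by positivity, fun x hx hxδ => ?_⟩
  obtain ⟨b0, b1⟩ := hb ⟨by rw [Metric.mem_ball, dist_eq_norm]; exact hxδ, hx⟩
  rw [one_mul, Real.norm_of_nonneg (Real.sqrt_nonneg _)] at b0
  rw [one_mul, Real.norm_of_nonneg (inv_nonneg.2 (Real.sqrt_nonneg _))] at b1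
  have m0 := model_norm a c₁ d₁ x
  have m1 := hK x hx
  have s0 : 0 ≤ √‖x - a‖ := Real.sqrt_nonneg _
  have s1 : 0 ≤ (√‖x - a‖)⁻¹ := inv_nonneg.2 s0
  have q0 := norm_le_norm_add_norm_sub' (φ x) (modelHalf a c₁ d₁ x)
  have q1 := norm_le_norm_add_norm_sub' (fderiv ℝ φ x) (fderiv ℝ (modelHalf a c₁ d₁) x)
  have t1 := mul_nonneg (abs_nonneg K) s0
  have t2 := mul_le_mul_of_nonneg_right (le_abs_self K) s1
  have t3 := mul_nonneg (abs_nonneg c₁) s1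
  have t4 := mul_nonneg (abs_nonneg d₁) s1
  constructor <;> nlinarith

/-- `φ` does not vanish identically near the pole. -/
theorem Pole.not_zero {a : ℂ} {φ : ℂ → ℂ} {c₁ d₁ : ℝ} (h : Pole a φ c₁ d₁) :
    ¬ ∀ᶠ x in nhdsWithin a {a}ᶜ, φ x = 0 := by
  intro hz
  have key : ∀ u : ℂ, ‖u‖ = 1 → (c₁ : ℂ) * (1 + u) / 2 + (d₁ : ℂ) * (u - 1) / (2 * Complex.I) = 0 := by
    intro u hu
    by_contra hne
    have hpos := norm_pos_iff.2 hne
    have h0 := h.e0.bound (c := ‖(c₁ : ℂ) * (1 + u) / 2 + (d₁ : ℂ) * (u - 1) / (2 * Complex.I)‖ / 2)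
      (by positivity)
    obtain ⟨δ, hδ, hb⟩ := Metric.mem_nhdsWithin_iff.1 (h0.and hz)
    have hx : ‖a + ((δ / 2 : ℝ) : ℂ) * u - a‖ = δ / 2 := by
      rw [add_sub_cancel_left, norm_mul, hu, Complex.norm_real, Real.norm_of_nonneg (by positivity), mul_one]
    have hxne : a + ((δ / 2 : ℝ) : ℂ) * u ≠ a := by
      intro he; rw [he] at hx; simp at hx; linarith
    obtain ⟨b0, b1⟩ := hb ⟨by rw [Metric.mem_ball, dist_eq_norm, hx]; linarith, hxne⟩
    rw [b1, zero_sub, norm_neg, modelHalf, hx, add_sub_cancel_left, norm_mul, Complex.norm_real] at b0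
    have hd : ((δ / 2 : ℝ) : ℂ) ≠ 0 := by exact_mod_cast (by positivity : δ / 2 ≠ 0)
    rw [mul_div_cancel_left₀ _ hd] at b0
    have hs : 0 < ‖√(δ / 2)‖ := norm_pos_iff.2 (Real.sqrt_pos.2 (by positivity)).ne'
    nlinarith
  have k1 := key 1 (by simp)
  have k2 := key (-1) (by simp)
  refine h.ne ⟨?_, ?_⟩
  · have : (c₁ : ℂ) = 0 := by linear_combination k1
    exact_mod_cast this
  · have h2 : (d₁ : ℂ) * (-1 - 1) / (2 * Complex.I) = 0 := by linear_combination k2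
    have hI := Complex.I_ne_zero
    have : (d₁ : ℂ) = 0 := by
      field_simp at h2
      linear_combination (-(1 / 2) : ℂ) * h2
    exact_mod_cast this

end

section

namespace Sol
variable {lam Cp : ℝ} {p : ℂ → ℝ} {a : ℂ} {r₀ : ℝ} {φ : ℂ → ℂ}

theorem slit_off {s t : ℝ} (ht : t ∈ Icc (-(π / 2)) (π / 2)) (h : t ≠ 0) :
    ((1 : ℝ) : ℂ) * (Complex.exp (zp s t) - (a.re : ℂ)) ∈ Complex.slitPlane := by
  rw [Complex.ofReal_one, one_mul, Complex.mem_slitPlane_iff]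
  rw [Complex.sub_re, Complex.sub_im, Complex.ofReal_re, Complex.ofReal_im, exp_zp_re, exp_zp_im]
  right
  rw [sub_zero]
  refine mul_ne_zero (Real.exp_pos s).ne' ?_
  rw [Ne, Real.sin_eq_zero_iff_of_lt_of_lt (by linarith [ht.1, Real.pi_pos]) (by linarith [ht.2, Real.pi_pos])]
  exact h

theorem mem_dom' (S : Sol lam Cp p a r₀ φ) {s t : ℝ} (hs : s < Real.log r₀) (ht : t ∈ Ang) (h : t ≠ 0) :
    Xp a (zp s t) ∈ halfDisk (proj a) r₀ \ {a} := by
  refine ⟨S.mem_half hs ht, ?_⟩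
  rw [mem_singleton_iff, ← sub_eq_zero, Xp_sub]
  exact right_ne_zero_of_mul (Complex.slitPlane_ne_zero (slit_off (Ioo_subset_Icc_self ht) h))

theorem phi_bdd (S : Sol lam Cp p a r₀ φ) :
    ∃ M, 0 ≤ M ∧ ∀ s ≤ Real.log r₀, ∀ t ∈ Icc (-(π / 2)) (π / 2), ‖φ (Xp a (zp s t))‖ ≤ M := by
  have hb : Bornology.IsBounded (halfDisk (proj a) r₀) :=
    Metric.isBounded_ball.subset (fun x hx => Metric.mem_ball.2 hx.1)
  have hK : IsCompact (closure (halfDisk (proj a) r₀)) := hb.isCompact_closure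
  obtain ⟨M, hM⟩ := hK.exists_bound_of_continuousOn S.cont
  exact ⟨|M|, abs_nonneg M, fun s hs t ht => (hM _ (S.mem_closure hs ht)).trans (le_abs_self M)⟩

theorem α_log2 (S : Sol lam Cp p a r₀ φ) : Real.log a.re + Real.log 2 < Real.log r₀ := by
  rw [← Real.log_mul S.a0.ne' two_ne_zero]
  exact Real.log_lt_log (by linarith [S.a0]) (by linarith [S.ar])

/-- In flat coordinates reflected at an edge of the strip, a `C²` function of `ζ` is `C²`. -/
theorem c2on {u : ℂ → ℂ} {I J : Set ℝ} {τ : ℝ} (hτ : τ * τ = 1)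
    (cd : ∀ s ∈ I, ∀ t ∈ J, ContDiffAt ℝ 2 u (zp s (τ * (π / 2 - t)))) :
    C2On (fun s t => u (zp s (τ * (π / 2 - t)))) (fun s t => fderiv ℝ u (zp s (τ * (π / 2 - t))) 1)
      (fun s t => (-τ : ℝ) * fderiv ℝ u (zp s (τ * (π / 2 - t))) Complex.I)
      (fun s t => fderiv ℝ (fderiv ℝ u) (zp s (τ * (π / 2 - t))) 1 1)
      (fun s t => fderiv ℝ (fderiv ℝ u) (zp s (τ * (π / 2 - t))) Complex.I Complex.I) I J := by
  have d1 : ∀ s ∈ I, ∀ t ∈ J, HasFDerivAt u (fderiv ℝ u (zp s (τ * (π / 2 - t)))) (zp s (τ * (π / 2 - t))) :=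
    fun s hs t ht => ((cd s hs t ht).differentiableAt (by norm_num)).hasFDerivAt
  have d2 : ∀ s ∈ I, ∀ t ∈ J, ∀ e : ℂ, HasFDerivAt (fun ζ => fderiv ℝ u ζ e)
      ((fderiv ℝ (fderiv ℝ u) (zp s (τ * (π / 2 - t)))).flip e) (zp s (τ * (π / 2 - t))) := fun s hs t ht e => by
    have := (hasFDerivAt_fderiv (cd s hs t ht)).clm_apply (hasFDerivAt_const e (zp s (τ * (π / 2 - t))))
    exact this.congr_fderiv (by ext1; simp)
  have z : ∀ s t : ℝ, HasDerivAt (fun y => zp s (τ * (π / 2 - y))) ((-τ : ℝ) • Complex.I) t := fun s t => by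
    have h0 : HasDerivAt (fun y : ℝ => τ * (π / 2 - y)) (-τ) t :=
      (((hasDerivAt_id t).const_sub (π / 2)).const_mul τ).congr_deriv (by ring)
    exact (zp_dt s (τ * (π / 2 - t))).scomp t h0
  refine ⟨fun s hs t ht => (d1 s hs t ht).comp_hasDerivAt s (zp_ds s _), fun s hs t ht => ?_,
    fun s hs t ht => ?_, fun s hs t ht => ?_⟩
  · refine ((d1 s hs t ht).comp_hasDerivAt t (z s t)).congr_deriv ?_
    rw [map_smul, Complex.real_smul]
  · have := (d2 s hs t ht 1).comp_hasDerivAt s (zp_ds s _)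
    exact this
  · have h := ((d2 s hs t ht Complex.I).comp_hasDerivAt t (z s t)).const_mul ((-τ : ℝ) : ℂ)
    refine h.congr_deriv ?_
    rw [map_smul, Complex.real_smul, ← mul_assoc, ← Complex.ofReal_mul, neg_mul_neg, hτ]
    simp

/-- Up to the radius of the pole, the radial derivative is bounded near the edges. -/
theorem edge_bdd (S : Sol lam Cp p a r₀ φ) :
    ∃ C, ∀ s, |s - Real.log a.re| < 1 / 10 → ∀ t ∈ Ang, π / 2 - 1 / 20 < |t| →
      ‖Dg a φ (zp s t) 1‖ ≤ C := by
  obtain ⟨M, hM0, hM⟩ := S.phi_bdd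
  have hl2 := Real.log_two_gt_d9
  have hα := S.α_log2
  have hpi := Real.pi_gt_three
  refine ⟨flatC (1 / 20) M M, fun s hs t ht htt => ?_⟩
  rw [abs_lt] at hs
  have key : ∀ τ : ℝ, τ = 1 ∨ τ = -1 → ∀ y ∈ Ioo (0 : ℝ) (1 / 20),
      ‖fderiv ℝ (gu 1 a φ) (zp s (τ * (π / 2 - y))) 1‖ ≤ flatC (1 / 20) M M := by
    intro τ hτ y hy
    have hI : ∀ x ∈ Ioo (s - 8 * (1 / 20)) (s + 8 * (1 / 20)), x < Real.log r₀ := fun x hx => by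
      linarith [hx.2]
    have hcl : ∀ y ∈ Ico (0 : ℝ) (8 * (1 / 20)), τ * (π / 2 - y) ∈ Icc (-(π / 2)) (π / 2) ∧
        τ * (π / 2 - y) ≠ 0 := by
      intro y hy
      have h1 := hy.1
      have h2 := hy.2
      rcases hτ with h | h <;> subst h
      · exact ⟨⟨by linarith, by linarith⟩, by linarith⟩
      · exact ⟨⟨by linarith, by linarith⟩, by linarith⟩
    have hop : ∀ y ∈ Ioo (0 : ℝ) (8 * (1 / 20)), τ * (π / 2 - y) ∈ Ang := by
      intro y hy
      have h1 := hy.1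
      have h2 := hy.2
      rcases hτ with h | h <;> subst h <;> exact ⟨by linarith, by linarith⟩
    have cdφ : ∀ x ∈ Ioo (s - 8 * (1 / 20)) (s + 8 * (1 / 20)), ∀ y ∈ Ioo (0 : ℝ) (8 * (1 / 20)),
        ContDiffAt ℝ 2 φ (Xp a (zp x (τ * (π / 2 - y)))) := fun x hx y hy =>
      S.contDiffAt (S.mem_dom' (hI x hx) (hop y hy) (hcl y ⟨hy.1.le, hy.2⟩).2)
    have cd : ∀ x ∈ Ioo (s - 8 * (1 / 20)) (s + 8 * (1 / 20)), ∀ y ∈ Ioo (0 : ℝ) (8 * (1 / 20)),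
        ContDiffAt ℝ 2 (gu 1 a φ) (zp x (τ * (π / 2 - y))) := fun x hx y hy =>
      gu_contDiffAt (cdφ x hx y hy) (slit_off (hcl y ⟨hy.1.le, hy.2⟩).1 (hcl y ⟨hy.1.le, hy.2⟩).2)
    have hb : ∀ x ∈ Ioo (s - 8 * (1 / 20)) (s + 8 * (1 / 20)), ∀ y ∈ Ico (0 : ℝ) (8 * (1 / 20)),
        ‖gu 1 a φ (zp x (τ * (π / 2 - y)))‖ ≤ M := fun x hx y hy => by
      rw [norm_gu]; exact hM x (hI x hx).le _ (hcl y hy).1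
    refine (flat_est (s₀ := s) (ρ := 1 / 20) (M := M) (K := M) (by norm_num) hM0 hM0 ?_ ?_
      (c2on (by rcases hτ with h | h <;> subst h <;> norm_num) cd)
      (fun x hx y hy => hb x hx y ⟨hy.1.le, hy.2⟩) ?_ hy).2.1
    · have cz : Continuous fun z : ℝ × ℝ => zp z.1 (τ * (π / 2 - z.2)) := by unfold zp; fun_prop
      have c1 : ContinuousOn (fun z : ℝ × ℝ => φ (Xp a (zp z.1 (τ * (π / 2 - z.2)))))
          (Ioo (s - 8 * (1 / 20)) (s + 8 * (1 / 20)) ×ˢ Ico (0 : ℝ) (8 * (1 / 20))) := by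
        refine S.cont.comp (Continuous.continuousOn ?_) ?_
        · unfold Xp; fun_prop
        · rintro z ⟨h1, h2⟩
          exact S.mem_closure (hI _ h1).le (hcl _ h2).1
      refine c1.mul ?_
      rintro z ⟨h1, h2⟩
      have := (abG_contDiffAt (κ := 1) (a := a) (slit_off (a := a) (s := z.1) (hcl _ h2).1 (hcl _ h2).2)).continuousAt
      exact (ContinuousAt.comp (f := fun z : ℝ × ℝ => zp z.1 (τ * (π / 2 - z.2))) this
        cz.continuousAt).continuousWithinAt
    · intro x hx
      have h0 := (hcl 0 ⟨le_rfl, by norm_num⟩).1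
      have : Real.cos (τ * (π / 2 - 0)) = 0 := by
        rcases hτ with h | h <;> subst h <;> simp
      show gu 1 a φ (zp x (τ * (π / 2 - 0))) = 0
      rw [gu, S.zero _ (S.mem_closure (hI x hx).le h0) (by rw [Xp_re, this, mul_zero]), zero_mul]
    · intro x hx y hy
      have hm := hcl y ⟨hy.1.le, hy.2⟩
      rw [← lapC_eq (hasFDerivAt_fderiv (cd x hx y hy)).differentiableAt,
        gu_lap (cdφ x hx y hy) (slit_off hm.1 hm.2),
        S.eq _ (S.mem_dom' (hI x hx) (hop y hy) hm.2), norm_mul_abG, norm_neg, norm_mul, norm_mul,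
        Complex.norm_real, Complex.norm_real, norm_exp_zp, ← mul_assoc, ← norm_mul]
      have h1 := S.Pw_le (zp x (τ * (π / 2 - y)))
      have h2 := S.Pw_nonneg (zp x (τ * (π / 2 - y)))
      have h3 := S.Lexp_le (hI x hx).le
      rw [Pw, zp_re] at h1 h2
      rw [pow_two, ← Real.exp_add, ← two_mul, Real.norm_of_nonneg h2]
      have h4 := hb x hx y ⟨hy.1.le, hy.2⟩
      rw [norm_gu] at h4
      calc _ ≤ 1 * M := mul_le_mul (by linarith) h4 (norm_nonneg _) one_pos.le
        _ = M := one_mul M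
  have fin : ∀ τ : ℝ, τ = 1 ∨ τ = -1 → t = τ * |t| → ‖Dg a φ (zp s t) 1‖ ≤ flatC (1 / 20) M M := by
    intro τ hτ h
    have habs : |t| < π / 2 := abs_lt.2 ht
    have h1 := key τ hτ (π / 2 - |t|) ⟨by linarith, by linarith⟩
    rw [sub_sub_cancel, ← h] at h1
    have ht0 : t ≠ 0 := by rintro rfl; rw [abs_zero] at htt; linarith
    rwa [gu_fderiv (S.contDiffAt (S.mem_dom' (by linarith) ht ht0))
      (slit_off (Ioo_subset_Icc_self ht) ht0), norm_mul_abG] at h1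
  rcases le_total 0 t with h | h
  · exact fin 1 (Or.inl rfl) (by rw [abs_of_nonneg h, one_mul])
  · exact fin (-1) (Or.inr rfl) (by rw [abs_of_nonpos h]; ring)

end Sol

end

section

theorem sqrt_inv_integrable : IntegrableOn (fun t : ℝ => (√|t|)⁻¹) Ang := by
  have hpi := Real.pi_pos
  have h0 : ∀ x : ℝ, x ^ (-(1 / 2) : ℝ) = (√x)⁻¹ := fun x => by
    rcases lt_trichotomy x 0 with h | h | h
    · rw [Real.rpow_def_of_neg h, Real.sqrt_eq_zero_of_nonpos h.le, inv_zero,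
        show -(1 / 2 : ℝ) * π = -(π / 2) by ring, Real.cos_neg, Real.cos_pi_div_two, mul_zero]
    · subst h; rw [Real.zero_rpow (by norm_num), Real.sqrt_zero, inv_zero]
    · rw [Real.rpow_neg h.le, Real.sqrt_eq_rpow]
  have h1 : IntervalIntegrable (fun x : ℝ => (√x)⁻¹) volume (-(π / 2)) (π / 2) := by
    simpa only [h0] using
      intervalIntegral.intervalIntegrable_rpow' (a := -(π / 2)) (b := π / 2) (r := -(1 / 2)) (by norm_num)
  have h2 : IntervalIntegrable (fun x : ℝ => (√(-x))⁻¹) volume (-(π / 2)) (π / 2) := by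
    have := (IntervalIntegrable.iff_comp_neg (by simp)).1 h1
    rw [neg_neg] at this
    exact this.symm
  have h3 := h1.add h2
  rw [intervalIntegrable_iff_integrableOn_Ioo_of_le (by linarith)] at h3
  refine h3.congr_fun (fun t _ => ?_) measurableSet_Ioo
  show (√t)⁻¹ + (√(-t))⁻¹ = _
  rcases le_total 0 t with h | h
  · rw [Real.sqrt_eq_zero_of_nonpos (by linarith : -t ≤ 0), abs_of_nonneg h]; simp
  · rw [Real.sqrt_eq_zero_of_nonpos h, abs_of_nonpos h]; simp

/-- Continuity of an angular integral whose integrand has an inverse square root singularity at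
angle `0`. -/
theorem continuousAt_int {g : ℝ → ℝ → ℝ} {s₀ M : ℝ} {I : Set ℝ} (hI : I ∈ nhds s₀)
    (hb : ∀ s ∈ I, ∀ t ∈ Ang, t ≠ 0 → |g s t| ≤ M * (√|t|)⁻¹)
    (hm : ∀ s ∈ I, ContinuousOn (g s) (Ang \ {0}))
    (hc : ∀ t ∈ Ang, t ≠ 0 → ContinuousAt (fun s => g s t) s₀) :
    ContinuousAt (fun s => ∫ t in Ang, g s t) s₀ := by
  have h0 : ∀ᵐ t ∂(volume.restrict Ang), t ∈ Ang ∧ t ≠ 0 :=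
    (ae_restrict_mem measurableSet_Ioo).and (ae_restrict_of_ae (Measure.ae_ne volume 0))
  have hr : volume.restrict Ang = volume.restrict (Ang \ {(0 : ℝ)}) :=
    (Measure.restrict_congr_set (sdiff_null_ae_eq_self (measure_singleton _))).symm
  refine tendsto_integral_filter_of_dominated_convergence (fun t => M * (√|t|)⁻¹) ?_ ?_
    (sqrt_inv_integrable.const_mul M) ?_
  · filter_upwards [hI] with s hs
    rw [hr]
    exact (hm s hs).aestronglyMeasurable (measurableSet_Ioo.diff (measurableSet_singleton _))
  · filter_upwards [hI] with s hs
    filter_upwards [h0] with t ht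
    exact hb s hs t ht.1 ht.2
  · filter_upwards [h0] with t ht
    exact hc t ht.1 ht.2

namespace Sol
variable {lam Cp : ℝ} {p : ℂ → ℝ} {a : ℂ} {r₀ : ℝ} {φ : ℂ → ℂ}

theorem Dg_cont (S : Sol lam Cp p a r₀ φ) {ζ : ℂ} (h : Xp a ζ ∈ halfDisk (proj a) r₀ \ {a}) (e : ℂ) :
    ContinuousAt (fun ζ => Dg a φ ζ e) ζ := by
  have hX : Continuous (Xp a) := by unfold Xp; fun_prop
  have hne : Complex.exp ζ - (a.re : ℂ) ≠ 0 := by rw [← Xp_sub, sub_ne_zero]; exact h.2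
  have hO : IsOpen (halfDisk (proj a) r₀ \ {a}) := (isOpen_halfDisk _ _).sdiff isClosed_singleton
  have h1 : ContinuousAt (fderiv ℝ φ) (Xp a ζ) :=
    (S.c2.continuousOn_fderiv_of_isOpen hO (by norm_num)).continuousAt (hO.mem_nhds h)
  have h2 : ContinuousAt (fun ζ => fderiv ℝ φ (Xp a ζ)) ζ := ContinuousAt.comp h1 hX.continuousAt
  have h3 : ContinuousAt (fun ζ => φ (Xp a ζ)) ζ :=
    ContinuousAt.comp (S.contDiffAt h).continuousAt hX.continuousAt
  have h4 : ContinuousAt (fun ζ => Complex.exp ζ * e / (Complex.exp ζ - (a.re : ℂ))) ζ :=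
    ContinuousAt.div (by fun_prop) (by fun_prop) hne
  have h5 : ContinuousAt (fun ζ => (((Complex.exp ζ * e / (Complex.exp ζ - (a.re : ℂ))).im : ℝ) : ℂ)) ζ :=
    (Complex.continuous_ofReal.comp Complex.continuous_im).continuousAt.comp h4
  exact (h2.clm_apply (by fun_prop)).sub ((continuousAt_const.mul h5).mul h3)

theorem dist_ge {s t : ℝ} (ht : t ∈ Ang) :
    Real.exp s * (2 / π) * |t| ≤ ‖Xp a (zp s t) - a‖ := by
  rw [Xp_sub]
  refine le_trans ?_ (Complex.abs_im_le_norm _)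
  rw [Complex.sub_im, Complex.ofReal_im, sub_zero, exp_zp_im, abs_mul, abs_of_pos (Real.exp_pos s), mul_assoc]
  refine mul_le_mul_of_nonneg_left ?_ (Real.exp_pos s).le
  exact Real.mul_abs_le_abs_sin (abs_lt.2 ht).le

theorem Dg_le (a : ℂ) (φ : ℂ → ℂ) (s t : ℝ) : ‖Dg a φ (zp s t) 1‖ ≤
    Real.exp s * (‖fderiv ℝ φ (Xp a (zp s t))‖ + ‖Xp a (zp s t) - a‖⁻¹ * ‖φ (Xp a (zp s t))‖) := by
  rw [Dg, mul_one]
  have h1 : ‖fderiv ℝ φ (Xp a (zp s t)) (Complex.exp (zp s t))‖ ≤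
      ‖fderiv ℝ φ (Xp a (zp s t))‖ * Real.exp s := by
    refine (ContinuousLinearMap.le_opNorm _ _).trans ?_
    rw [norm_exp_zp]
  have h2 : ‖(Complex.I / 2) * (((Complex.exp (zp s t) / (Complex.exp (zp s t) - (a.re : ℂ))).im : ℝ) : ℂ) *
      φ (Xp a (zp s t))‖ ≤ (Real.exp s * ‖Xp a (zp s t) - a‖⁻¹) * ‖φ (Xp a (zp s t))‖ := by
    rw [norm_mul, norm_mul, Complex.norm_real, Real.norm_eq_abs]
    refine mul_le_mul_of_nonneg_right ?_ (norm_nonneg _)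
    have h3 := Complex.abs_im_le_norm (Complex.exp (zp s t) / (Complex.exp (zp s t) - (a.re : ℂ)))
    rw [norm_div, norm_exp_zp, ← Xp_sub, div_eq_mul_inv (Real.exp s)] at h3
    have h4 : ‖Complex.I / 2‖ = 1 / 2 := by rw [norm_div, Complex.norm_I]; norm_num
    rw [h4, ← Xp_sub]
    linarith [abs_nonneg (Complex.exp (zp s t) / (Xp a (zp s t) - a)).im]
  refine (norm_sub_le _ _).trans ((add_le_add h1 h2).trans (le_of_eq ?_))
  ring

/-- The radial derivative has at most an inverse square root singularity at the pole, uniformly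
for radii close to that of the pole. -/
theorem Dg_bdd (S : Sol lam Cp p a r₀ φ) {c₁ d₁ : ℝ} (P : Pole a φ c₁ d₁) :
    ∃ M, 0 ≤ M ∧ ∀ s, |s - Real.log a.re| < 1 / 10 → ∀ t ∈ Ang, t ≠ 0 →
      ‖Dg a φ (zp s t) 1‖ ≤ M * (√|t|)⁻¹ := by
  obtain ⟨C₁, h₁⟩ := S.edge_bdd
  obtain ⟨δ, hδ, C₂, hC₂, h₂⟩ := P.near
  have hpi := Real.pi_pos
  have hl2 := Real.log_two_gt_d9
  have hα := S.α_log2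
  have hcX : Continuous fun z : ℝ × ℝ => ‖Xp a (zp z.1 z.2) - a‖ := by unfold Xp zp; fun_prop
  have hK : IsCompact ((Icc (Real.log a.re - 1 / 10) (Real.log a.re + 1 / 10) ×ˢ
      Icc (-(π / 2 - 1 / 20)) (π / 2 - 1 / 20)) ∩ {z : ℝ × ℝ | δ ≤ ‖Xp a (zp z.1 z.2) - a‖}) :=
    (isCompact_Icc.prod isCompact_Icc).inter_right (isClosed_le continuous_const hcX)
  obtain ⟨C₃, h₃⟩ := hK.exists_bound_of_continuousOn (f := fun z => Dg a φ (zp z.1 z.2) 1) (by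
    rintro z ⟨⟨h1, h2⟩, h3⟩
    have hm : Xp a (zp z.1 z.2) ∈ halfDisk (proj a) r₀ \ {a} := by
      refine ⟨S.mem_half (by linarith [h1.2]) ⟨by linarith [h2.1], by linarith [h2.2]⟩, ?_⟩
      intro h
      rw [mem_singleton_iff] at h
      have h3' : δ ≤ ‖Xp a (zp z.1 z.2) - a‖ := h3
      rw [h, sub_self, norm_zero] at h3'
      linarith
    exact (ContinuousAt.comp (f := fun z : ℝ × ℝ => zp z.1 z.2) (S.Dg_cont hm 1)
      zp_cont.continuousAt).continuousWithinAt)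
  set c := Real.exp (Real.log a.re - 1 / 10) * (2 / π) with hc
  have hc0 : 0 < c := by positivity
  set M := 2 * |C₁| + 2 * |C₃| + Real.exp (Real.log r₀) * (2 * C₂) * (√c)⁻¹ with hM
  have k1 : 0 ≤ Real.exp (Real.log r₀) * (2 * C₂) * (√c)⁻¹ := by positivity
  refine ⟨M, by positivity, fun s hs t ht ht0 => ?_⟩
  have hs' := abs_lt.1 hs
  have htp : 0 < |t| := abs_pos.2 ht0
  have hq : 0 < (√|t|)⁻¹ := inv_pos.2 (Real.sqrt_pos.2 htp)
  have hq2 : 1 ≤ 2 * (√|t|)⁻¹ := by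
    have : √|t| ≤ 2 := by
      rw [Real.sqrt_le_left (by norm_num)]
      have h4 : |t| < π / 2 := abs_lt.2 ht
      linarith [Real.pi_lt_four]
    rw [← div_eq_mul_inv, le_div_iff₀ (Real.sqrt_pos.2 htp)]
    linarith
  have one : ∀ x : ℝ, x ≤ 2 * |x| * (√|t|)⁻¹ := fun x => by
    have := mul_le_mul_of_nonneg_left hq2 (abs_nonneg x)
    linarith [le_abs_self x]
  have a1 := mul_nonneg (mul_nonneg two_pos.le (abs_nonneg C₁)) hq.le
  have a3 := mul_nonneg (mul_nonneg two_pos.le (abs_nonneg C₃)) hq.le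
  have a2 := mul_nonneg k1 hq.le
  rw [hM, add_mul, add_mul]
  by_cases e1 : π / 2 - 1 / 20 < |t|
  · linarith [h₁ s hs t ht e1, one C₁]
  by_cases e2 : δ ≤ ‖Xp a (zp s t) - a‖
  · have e3 := abs_le.1 (not_lt.1 e1)
    have := h₃ (s, t) ⟨⟨⟨by linarith, by linarith⟩, ⟨by linarith, by linarith⟩⟩, e2⟩
    linarith [one C₃]
  · rw [not_le] at e2
    have hne : Xp a (zp s t) ≠ a := (S.mem_dom' (by linarith) ht ht0).2
    obtain ⟨b1, b2⟩ := h₂ _ hne e2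
    have hd0 : 0 < ‖Xp a (zp s t) - a‖ := norm_pos_iff.2 (sub_ne_zero.2 hne)
    have hd := dist_ge (a := a) (s := s) ht
    have hd' : c * |t| ≤ ‖Xp a (zp s t) - a‖ := by
      refine le_trans (mul_le_mul_of_nonneg_right (mul_le_mul_of_nonneg_right
        (Real.exp_le_exp.2 (by linarith)) (by positivity)) htp.le) hd
    have h0 := Dg_le a φ s t
    set d := ‖Xp a (zp s t) - a‖
    have hsd : 0 < √d := Real.sqrt_pos.2 hd0
    have e4 : d⁻¹ * ‖φ (Xp a (zp s t))‖ ≤ C₂ * (√d)⁻¹ := by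
      calc d⁻¹ * ‖φ (Xp a (zp s t))‖ ≤ d⁻¹ * (C₂ * √d) :=
            mul_le_mul_of_nonneg_left b1 (inv_nonneg.2 hd0.le)
        _ = C₂ * (√d)⁻¹ := by
            have := Real.mul_self_sqrt hd0.le
            rw [← this]; field_simp
            rw [Real.sqrt_sq hsd.le]; ring
    have e5 : (√d)⁻¹ ≤ (√c)⁻¹ * (√|t|)⁻¹ := by
      rw [← mul_inv, ← Real.sqrt_mul hc0.le]
      exact inv_anti₀ (Real.sqrt_pos.2 (by positivity)) (Real.sqrt_le_sqrt hd')
    have e6 : Real.exp s ≤ Real.exp (Real.log r₀) := Real.exp_le_exp.2 (by linarith)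
    have e7 : ‖Dg a φ (zp s t) 1‖ ≤ Real.exp (Real.log r₀) * (2 * C₂) * (√c)⁻¹ * (√|t|)⁻¹ := by
      calc _ ≤ Real.exp s * (2 * C₂ * (√d)⁻¹) := h0.trans
            (mul_le_mul_of_nonneg_left (by linarith) (Real.exp_pos s).le)
        _ ≤ Real.exp (Real.log r₀) * (2 * C₂ * ((√c)⁻¹ * (√|t|)⁻¹)) :=
            mul_le_mul e6 (mul_le_mul_of_nonneg_left e5 (by positivity)) (by positivity) (Real.exp_pos _).le
        _ = _ := by ring
    linarith

end Sol

end

section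

namespace Sol
variable {lam Cp : ℝ} {p : ℂ → ℝ} {a : ℂ} {r₀ : ℝ} {φ : ℂ → ℂ}

theorem zp_cont_t (s : ℝ) : Continuous fun t => zp s t := by unfold zp; fun_prop
theorem zp_cont_s (t : ℝ) : Continuous fun s => zp s t := by unfold zp; fun_prop
theorem Xp_cont (a : ℂ) : Continuous (Xp a) := by unfold Xp; fun_prop

theorem phi_cont_t (S : Sol lam Cp p a r₀ φ) {s : ℝ} (hs : s ≤ Real.log r₀) :
    ContinuousOn (fun t => φ (Xp a (zp s t))) (Icc (-(π / 2)) (π / 2)) :=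
  S.cont.comp ((Xp_cont a).comp (zp_cont_t s)).continuousOn fun _ ht => S.mem_closure hs ht

theorem fH_tendsto (S : Sol lam Cp p a r₀ φ) {l : Filter ℝ} [l.IsCountablyGenerated]
    (hl : ∀ᶠ s in l, s ≤ Real.log r₀) {g : ℝ → ℂ}
    (hg : ∀ t ∈ Ang, Tendsto (fun s => φ (Xp a (zp s t))) l (nhds (g t))) :
    Tendsto (fH a φ) l (nhds (∫ t in Ang, ‖g t‖ ^ 2)) := by
  obtain ⟨M, hM0, hM⟩ := S.phi_bdd
  refine tendsto_integral_filter_of_dominated_convergence (fun _ => M ^ 2) ?_ ?_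
    (BC.const (M ^ 2)).integrable ?_
  · filter_upwards [hl] with s hs
    exact ((((S.phi_cont_t hs).mono Ioo_subset_Icc_self).norm).pow 2).aestronglyMeasurable measurableSet_Ioo
  · filter_upwards [hl] with s hs
    filter_upwards [ae_restrict_mem measurableSet_Ioo] with t ht
    rw [Real.norm_of_nonneg (by positivity)]
    exact pow_le_pow_left₀ (norm_nonneg _) (hM s hs t (Ioo_subset_Icc_self ht)) 2
  · filter_upwards [ae_restrict_mem measurableSet_Ioo] with t ht
    exact ((hg t ht).norm).pow 2

theorem fH_cont (S : Sol lam Cp p a r₀ φ) : ContinuousOn (fH a φ) (Iic (Real.log r₀)) := by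
  intro s hs
  refine S.fH_tendsto self_mem_nhdsWithin fun t ht => ?_
  have : ContinuousOn (fun s => φ (Xp a (zp s t))) (Iic (Real.log r₀)) :=
    S.cont.comp ((Xp_cont a).comp (zp_cont_s t)).continuousOn
      fun x hx => S.mem_closure hx (Ioo_subset_Icc_self ht)
  exact this s hs

theorem fH_bot (S : Sol lam Cp p a r₀ φ) : Tendsto (fH a φ) atBot (nhds 0) := by
  have hm : proj a ∈ closure (halfDisk (proj a) r₀) :=
    closedHalf_subset (proj_re a) S.r0 (by rw [dist_self]; exact S.r0.le) (by rw [proj_re])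
  have h := S.fH_tendsto (l := atBot) (g := fun _ => 0) (eventually_le_atBot _) fun _ ht => by
    have hc := S.cont _ hm
    rw [ContinuousWithinAt, S.zero _ hm (proj_re a)] at hc
    refine hc.comp (tendsto_nhdsWithin_iff.2 ⟨?_, ?_⟩)
    · rw [tendsto_iff_dist_tendsto_zero]
      simp only [Xp_dist, zp_re]
      exact Real.tendsto_exp_atBot
    · filter_upwards [eventually_le_atBot (Real.log r₀)] with s hs
      exact S.mem_closure hs (Ioo_subset_Icc_self ht)
  simpa using h

theorem Dg_cont_t (S : Sol lam Cp p a r₀ φ) {s : ℝ} (hs : s < Real.log r₀) (e : ℂ) :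
    ContinuousOn (fun t => Dg a φ (zp s t) e) (Ang \ {0}) := fun _ ht =>
  (ContinuousAt.comp (f := fun t => zp s t) (S.Dg_cont (S.mem_dom' hs ht.1 ht.2) e)
    (zp_cont_t s).continuousAt).continuousWithinAt

theorem Dg_cont_s (S : Sol lam Cp p a r₀ φ) {s t : ℝ} (hs : s < Real.log r₀) (ht : t ∈ Ang) (h0 : t ≠ 0)
    (e : ℂ) : ContinuousAt (fun s => Dg a φ (zp s t) e) s :=
  ContinuousAt.comp (f := fun s => zp s t) (S.Dg_cont (S.mem_dom' hs ht h0) e) (zp_cont_s t).continuousAt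

theorem near_lt (S : Sol lam Cp p a r₀ φ) {s : ℝ} (h : |s - Real.log a.re| < 1 / 10) : s < Real.log r₀ := by
  have := abs_lt.1 h
  linarith [S.α_log2, Real.log_two_gt_d9]

theorem near_mem (a : ℂ) : {s : ℝ | |s - Real.log a.re| < 1 / 10} ∈ nhds (Real.log a.re) := by
  have : Continuous fun s : ℝ => |s - Real.log a.re| := by fun_prop
  exact (isOpen_lt this continuous_const).mem_nhds (by simp)

/-- The energy flux is continuous across the pole radius, the integrand having an integrable
singularity there. -/
theorem fe_cont (S : Sol lam Cp p a r₀ φ) {c₁ d₁ : ℝ} (P : Pole a φ c₁ d₁) :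
    ContinuousOn (fe a φ) (Iio (Real.log r₀)) := by
  intro s hs
  by_cases hα : s = Real.log a.re
  swap
  · exact (S.loc hs hα).2.1.continuousAt.continuousWithinAt
  subst hα
  refine ContinuousAt.continuousWithinAt ?_
  obtain ⟨M, hM0, hM⟩ := S.phi_bdd
  obtain ⟨K, hK0, hK⟩ := S.Dg_bdd P
  refine continuousAt_int (M := K * M) (near_mem a) ?_ ?_ ?_
  · intro s hs t ht h0
    refine (abs_real_inner_le_norm _ _).trans ?_
    calc _ ≤ (K * (√|t|)⁻¹) * M := mul_le_mul (hK s hs t ht h0)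
          (hM s (S.near_lt hs).le t (Ioo_subset_Icc_self ht)) (norm_nonneg _) (by positivity)
      _ = _ := by ring
  · intro s hs
    exact (S.Dg_cont_t (S.near_lt hs) 1).inner
      ((S.phi_cont_t (S.near_lt hs).le).mono (sdiff_subset.trans Ioo_subset_Icc_self))
  · intro t ht h0
    refine (S.Dg_cont_s S.α_lt ht h0 1).inner ?_
    exact ContinuousAt.comp (S.contDiffAt (S.mem_dom' S.α_lt ht h0)).continuousAt
      ((Xp_cont a).comp (zp_cont_s t)).continuousAt

theorem freq (S : Sol lam Cp p a r₀ φ) {c₁ d₁ : ℝ} (P : Pole a φ c₁ d₁) :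
    FreqData (Real.log a.re) (Real.log r₀) (lam * Cp) (fH a φ) (fe a φ) (fa a φ) (fb a φ) (fc lam p a φ) where
  Λpos := mul_pos S.lam0 S.Cp0
  small := S.Lexp_le le_rfl
  hσ := S.α_log2
  Hc := S.fH_cont.mono Iio_subset_Iic_self
  ec := S.fe_cont P
  dH := fun _ hs hα => (S.loc hs hα).1
  de := fun _ hs hα => (S.loc hs hα).2.1
  a0 := fun _ _ _ => integral_nonneg fun _ => by positivity
  c0 := fun _ _ _ => integral_nonneg fun _ => mul_nonneg (S.Pw_nonneg _) (by positivity)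
  c1 := fun _ hs hα => (S.loc hs hα).2.2.2.1
  bH := fun _ hs hα => (S.loc hs hα).2.2.2.2.1
  CS := fun _ hs hα => (S.loc hs hα).2.2.2.2.2
  H0 := fun _ _ => integral_nonneg fun _ => by positivity
  Hbot := S.fH_bot

theorem phi_zero (S : Sol lam Cp p a r₀ φ) {s : ℝ} (hs : s ≤ Real.log r₀) (h : fH a φ s = 0) {t : ℝ}
    (ht : t ∈ Ang) : φ (Xp a (zp s t)) = 0 := by
  have hc := (S.phi_cont_t hs).mono Ioo_subset_Icc_self
  obtain ⟨M, hM0, hM⟩ := S.phi_bdd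
  have hbc : BC fun t => φ (Xp a (zp s t)) := ⟨hc, M, fun t ht => hM s hs t (Ioo_subset_Icc_self ht)⟩
  have h1 := (integral_eq_zero_iff_of_nonneg (fun t => by positivity) hbc.sq.integrable).1 h
  have h2 := Measure.eqOn_open_of_ae_eq h1 isOpen_Ioo (hc.norm.pow 2) continuousOn_const ht
  have h3 : ‖φ (Xp a (zp s t))‖ ^ 2 = 0 := h2
  simpa using h3

/-- The positivity of `H` beyond the pole holds because `H` is nondecreasing and `φ` does not vanish
identically near the pole. -/
theorem pole (S : Sol lam Cp p a r₀ φ) {c₁ d₁ : ℝ} (P : Pole a φ c₁ d₁) :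
    PoleData (Real.log a.re) (Real.log r₀) (lam * Cp) (fH a φ) (fe a φ) (fa a φ) (fb a φ) (fc lam p a φ) where
  toFreqData := S.freq P
  dΦ := fun s h1 h2 => (S.loc h2 h1.ne').2.2.1
  Hpos := by
    intro s h1 h2
    refine lt_of_le_of_ne ((S.freq P).H0 s h2) fun h0 => P.not_zero ?_
    have hz : ∀ x ≤ s, fH a φ x = 0 := fun x hx =>
      le_antisymm (((S.freq P).H_mono hx h2).trans h0.ge) ((S.freq P).H0 x (hx.trans_lt h2))
    have o1 : ∀ᶠ x in nhds a, 0 < x.re := Complex.continuous_re.continuousAt.eventually_const_lt S.a0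
    have o2 : ∀ᶠ x in nhds a, ‖x - proj a‖ < Real.exp s := by
      have hc : Continuous fun x : ℂ => ‖x - proj a‖ := by fun_prop
      refine hc.continuousAt.eventually_lt_const ?_
      have : a - proj a = (a.re : ℂ) := by
        rw [proj]; linear_combination -(Complex.re_add_im a)
      show ‖a - proj a‖ < Real.exp s
      rw [this, Complex.norm_real, Real.norm_of_nonneg S.a0.le]
      exact (Real.log_lt_iff_lt_exp S.a0).1 h1
    refine (o1.and o2).filter_mono nhdsWithin_le_nhds |>.mono fun x hx => ?_
    have hre : 0 < (x - proj a).re := by rw [Complex.sub_re, proj_re, sub_zero]; exact hx.1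
    have hne : x - proj a ≠ 0 := by intro h; rw [h] at hre; simp at hre
    have e : Xp a (zp (Real.log ‖x - proj a‖) (Complex.arg (x - proj a))) = x := by
      have : zp (Real.log ‖x - proj a‖) (Complex.arg (x - proj a)) = Complex.log (x - proj a) := rfl
      rw [this, Xp, Complex.exp_log hne]; ring
    rw [← e]
    have hl : Real.log ‖x - proj a‖ < s := (Real.log_lt_iff_lt_exp (norm_pos_iff.2 hne)).2 hx.2
    exact S.phi_zero (hl.trans h2).le (hz _ hl.le)
      (abs_lt.1 (Complex.abs_arg_lt_pi_div_two_iff.2 (Or.inl hre)))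

end Sol

end

/-! ### The test flux across the pole -/

section

/-- The cutoff vanishing quadratically at angle `0`, with transition width `L`. -/
def cz (L t : ℝ) : ℝ := t ^ 2 / (t ^ 2 + L ^ 2)

/-- The derivative of `cz`. -/
def cz' (L t : ℝ) : ℝ := 2 * t * L ^ 2 / (t ^ 2 + L ^ 2) ^ 2

theorem cz_deriv {L : ℝ} (hL : 0 < L) (t : ℝ) : HasDerivAt (cz L) (cz' L t) t := by
  have h0 : t ^ 2 + L ^ 2 ≠ 0 := by positivity
  have h1 : HasDerivAt (fun t : ℝ => t ^ 2) (2 * t) t := by simpa using hasDerivAt_pow 2 t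
  refine (h1.div (h1.add_const (L ^ 2)) h0).congr_deriv ?_
  rw [cz']; congr 1; ring

theorem cz_nonneg (L t : ℝ) : 0 ≤ cz L t := by unfold cz; positivity

theorem cz_le {L : ℝ} (hL : 0 < L) (t : ℝ) : cz L t ≤ 1 := by
  unfold cz; rw [div_le_one (by positivity)]; nlinarith

theorem cz_compl {L : ℝ} (hL : 0 < L) (t : ℝ) : (1 - cz L t) ^ 2 ≤ L ^ 2 * (t ^ 2 + L ^ 2)⁻¹ := by
  have h1 : 1 - cz L t = L ^ 2 * (t ^ 2 + L ^ 2)⁻¹ := by unfold cz; field_simp; ring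
  have h2 := cz_nonneg L t
  have h3 := cz_le hL t
  rw [← h1]; nlinarith

theorem cz'_sq {L : ℝ} (hL : 0 < L) (t : ℝ) : cz' L t ^ 2 ≤ (t ^ 2 + L ^ 2)⁻¹ := by
  have h0 : 0 < t ^ 2 + L ^ 2 := by positivity
  rw [cz', div_pow, ← one_div, div_le_div_iff₀ (by positivity) h0]
  have h1 : (2 * t * L) ^ 2 ≤ (t ^ 2 + L ^ 2) ^ 2 := by nlinarith [sq_nonneg (t ^ 2 - L ^ 2)]
  have h2 : L ^ 2 ≤ t ^ 2 + L ^ 2 := by nlinarith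
  calc (2 * t * L ^ 2) ^ 2 * (t ^ 2 + L ^ 2) = (2 * t * L) ^ 2 * (L ^ 2 * (t ^ 2 + L ^ 2)) := by ring
    _ ≤ (t ^ 2 + L ^ 2) ^ 2 * ((t ^ 2 + L ^ 2) * (t ^ 2 + L ^ 2)) :=
      mul_le_mul h1 (mul_le_mul_of_nonneg_right h2 h0.le) (by positivity) (by positivity)
    _ = 1 * ((t ^ 2 + L ^ 2) ^ 2) ^ 2 := by ring

theorem cz_cont {L : ℝ} (hL : 0 < L) : Continuous (cz L) :=
  continuous_iff_continuousAt.2 fun t => (cz_deriv hL t).continuousAt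

theorem cz'_cont {L : ℝ} (hL : 0 < L) : Continuous (cz' L) := by
  unfold cz'
  exact Continuous.div (by fun_prop) (by fun_prop) fun t => by positivity

theorem bc_of_cont {f : ℝ → ℝ} (h : Continuous f) : BC f := by
  obtain ⟨C, hC⟩ := (isCompact_Icc (a := -(π / 2)) (b := π / 2)).exists_bound_of_continuousOn h.continuousOn
  exact ⟨h.continuousOn, C, fun t ht => hC t (Ioo_subset_Icc_self ht)⟩

theorem lor_cont {L : ℝ} (hL : 0 < L) : Continuous fun t : ℝ => (t ^ 2 + L ^ 2)⁻¹ :=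
  Continuous.inv₀ (by fun_prop) fun t => by positivity

theorem lor_int {L : ℝ} (hL : 0 < L) : ∫ t in Ang, (t ^ 2 + L ^ 2)⁻¹ ≤ π / L := by
  have hpi := Real.pi_pos
  have hd : ∀ t : ℝ, HasDerivAt (fun t => (1 / L) * Real.arctan (t / L)) ((t ^ 2 + L ^ 2)⁻¹) t := fun t => by
    have h1 := (((hasDerivAt_id t).div_const L).arctan).const_mul (1 / L)
    refine h1.congr_deriv ?_
    simp only [id]
    field_simp
    ring
  rw [← integral_Ioc_eq_integral_Ioo, ← intervalIntegral.integral_of_le (by linarith),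
    intervalIntegral.integral_eq_sub_of_hasDerivAt (fun t _ => hd t) ((lor_cont hL).intervalIntegrable _ _),
    ← mul_sub, div_eq_mul_one_div π L, mul_comm π]
  refine mul_le_mul_of_nonneg_left ?_ (by positivity)
  linarith [Real.arctan_lt_pi_div_two (π / 2 / L), Real.neg_pi_div_two_lt_arctan (-(π / 2) / L)]

/-- The locally constant unimodular factor relating the two gauges. -/
def tw (t : ℝ) : ℂ := if 0 < t then Complex.I else -Complex.I

theorem norm_tw (t : ℝ) : ‖tw t‖ = 1 := by unfold tw; split_ifs <;> simp

theorem tw_cont {t : ℝ} (ht : t ≠ 0) : tw =ᶠ[nhds t] fun _ => tw t := by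
  rcases lt_or_gt_of_ne ht with h | h
  · filter_upwards [Iio_mem_nhds h] with x hx
    have hx' : x < 0 := hx
    rw [tw, tw, if_neg (not_lt.2 hx'.le), if_neg (not_lt.2 h.le)]
  · filter_upwards [Ioi_mem_nhds h] with x hx
    have hx' : 0 < x := hx
    rw [tw, tw, if_pos hx', if_pos h]

theorem tw_deriv {ψ : ℝ → ℂ} {d : ℂ} {t : ℝ} (h : HasDerivAt ψ d t)
    (h0 : t = 0 → ψ t = 0 ∧ d = 0) : HasDerivAt (fun x => tw x * ψ x) (tw t * d) t := by
  by_cases ht : t = 0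
  · obtain ⟨h1, h2⟩ := h0 ht
    rw [h2] at h
    rw [h2, mul_zero]
    rw [hasDerivAt_iff_isLittleO] at h ⊢
    simp only [h1, sub_zero, smul_zero, mul_zero] at h ⊢
    refine IsBigO.trans_isLittleO (IsBigO.of_bound 1 (Eventually.of_forall fun x => ?_)) h
    rw [norm_mul, norm_tw]
  · refine (h.const_mul (tw t)).congr_of_eventuallyEq ?_
    filter_upwards [tw_cont ht] with x hx
    rw [hx]

theorem tw_contAt {g : ℝ → ℂ} {t : ℝ} (h : ContinuousAt g t) (h0 : t = 0 → g t = 0) :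
    ContinuousAt (fun x => tw x * g x) t := by
  by_cases ht : t = 0
  · have h1 := h0 ht
    rw [ContinuousAt, h1] at h
    rw [ContinuousAt, h1, mul_zero, tendsto_zero_iff_norm_tendsto_zero]
    simpa [norm_mul, norm_tw] using h.norm
  · refine (continuousAt_const.mul h).congr (f := fun x => tw t * g x) ?_
    filter_upwards [tw_cont ht] with x hx
    rw [hx]

theorem tw_bc {g : ℝ → ℂ} (h : BC g) (h0 : g 0 = 0) : BC fun x => tw x * g x := by
  obtain ⟨hc, C, hC⟩ := h
  refine ⟨fun t ht => (tw_contAt (hc.continuousAt (isOpen_Ioo.mem_nhds ht)) ?_).continuousWithinAt,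
    C, fun t ht => by rw [norm_mul, norm_tw, one_mul]; exact hC t ht⟩
  rintro rfl; exact h0

/-- The square roots defining the two gauges differ by the locally constant factor `tw`. -/
theorem abG_tw {a : ℂ} {s t : ℝ} (ht : t ∈ Ang) (h0 : t ≠ 0) :
    abG 1 a (zp s t) * tw t = abG (-1) a (zp s t) := by
  have him : (Complex.exp (zp s t) - (a.re : ℂ)).im = Real.exp s * Real.sin t := by
    rw [Complex.sub_im, Complex.ofReal_im, sub_zero, exp_zp_im]
  have hpi := Real.pi_pos
  rw [abG, abG, hfac, hfac, Complex.ofReal_one, one_mul, Complex.ofReal_neg, Complex.ofReal_one, neg_one_mul,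
    Complex.log_im, Complex.log_im]
  set z := Complex.exp (zp s t) - (a.re : ℂ)
  rcases lt_or_gt_of_ne h0 with h | h
  · have hz : z.im < 0 := by
      rw [him]; exact mul_neg_of_pos_of_neg (Real.exp_pos s) (Real.sin_neg_of_neg_of_neg_pi_lt h (by linarith [ht.1]))
    rw [Complex.arg_neg_eq_arg_add_pi_of_im_neg hz, tw, if_neg (not_lt.2 h.le), Complex.ofReal_add, mul_add,
      Complex.exp_add]
    congr 1
    rw [show -(Complex.I / 2) * (π : ℂ) = -((π : ℂ) / 2 * Complex.I) by ring, Complex.exp_neg,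
      Complex.exp_pi_div_two_mul_I, Complex.inv_I]
  · have hz : 0 < z.im := by
      rw [him]; exact mul_pos (Real.exp_pos s) (Real.sin_pos_of_pos_of_lt_pi h (by linarith [ht.2]))
    rw [Complex.arg_neg_eq_arg_sub_pi_of_im_pos hz, tw, if_pos h, Complex.ofReal_sub, mul_sub, sub_eq_add_neg,
      Complex.exp_add]
    congr 1
    rw [show -(-(Complex.I / 2) * (π : ℂ)) = (π : ℂ) / 2 * Complex.I by ring, Complex.exp_pi_div_two_mul_I]

end

section

namespace Sol
variable {lam Cp : ℝ} {p : ℂ → ℝ} {a : ℂ} {r₀ : ℝ} {φ : ℂ → ℂ}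

/-- The flux of the gauged solution against a fixed angular test function: its derivative, and
Cauchy–Schwarz bounds for the flux and its derivative. -/
theorem flux_strip (S : Sol lam Cp p a r₀ φ) {κ s : ℝ} {I : Set ℝ} (hI : IsOpen I) (hs : s ∈ I)
    (G : GStrip lam p a φ κ I)
    (hD : ∀ x ∈ I, ∀ t ∈ Ang, ∀ e : ℂ,
      fderiv ℝ (gu κ a φ) (zp x t) e = Dg a φ (zp x t) e * abG κ a (zp x t))
    {ψ ψ' : ℝ → ℂ} {C₀ : ℝ} (hψ : BC ψ) (hψ' : BC ψ') (hd : ∀ t ∈ Ang, HasDerivAt ψ (ψ' t) t)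
    (he : ∀ t ∈ Ang, ‖ψ t‖ ≤ C₀ * (π / 2 - |t|)) :
    ∃ d, HasDerivAt (fun x => ∫ t in Ang, inner ℝ (Dg a φ (zp x t) 1 * abG κ a (zp x t)) (ψ t)) d s ∧
      ∫ t in Ang, inner ℝ (Dg a φ (zp s t) 1 * abG κ a (zp s t)) (ψ t) ≤
        √(fa a φ s) * √(∫ t in Ang, ‖ψ t‖ ^ 2) ∧
      d ≤ √(fb a φ s) * √(∫ t in Ang, ‖ψ' t‖ ^ 2) +
        lam * Cp * Real.exp (2 * s) * (√(fH a φ s) * √(∫ t in Ang, ‖ψ t‖ ^ 2)) := by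
  obtain ⟨b1, b2, b3, -, -, -, b7, -⟩ := Strip.bc G hs
  have hf := Strip.dflux G hs hψ hψ' hd he
  have e0 : ∀ x ∈ I, ∫ t in Ang, inner ℝ (fderiv ℝ (gu κ a φ) (zp x t) 1) (ψ t) =
      ∫ t in Ang, inner ℝ (Dg a φ (zp x t) 1 * abG κ a (zp x t)) (ψ t) := fun x hx =>
    setIntegral_congr_fun measurableSet_Ioo fun t ht => by simp only [hD x hx t ht]
  have ea := fD_eq (fun t ht => hD s hs t ht 1)
  have eb := fD_eq (fun t ht => hD s hs t ht Complex.I)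
  refine ⟨_, hf.congr_of_eventuallyEq ?_, ?_, ?_⟩
  · filter_upwards [hI.mem_nhds hs] with x hx using (e0 x hx).symm
  · rw [← e0 s hs, fa, ← ea]
    exact b2.cs hψ
  · have h1 := b3.cs hψ'
    have h2 := b1.cs_norm hψ
    rw [eb] at h1
    rw [fH_eq] at h2
    have h3 : -(∫ t in Ang, Pw lam p a (zp s t) * inner ℝ (gu κ a φ (zp s t)) (ψ t)) ≤
        lam * Cp * Real.exp (2 * s) * ∫ t in Ang, ‖gu κ a φ (zp s t)‖ * ‖ψ t‖ := by
      rw [← integral_neg, ← integral_const_mul]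
      refine setIntegral_mono_on (b7.mul (b1.inner hψ)).neg.integrable
        ((BC.const (lam * Cp * Real.exp (2 * s))).mul (b1.norm.mul hψ.norm)).integrable
        measurableSet_Ioo fun t _ => ?_
      have k1 := S.Pw_le (zp s t)
      have k2 := S.Pw_nonneg (zp s t)
      rw [zp_re] at k1
      have k3 := abs_real_inner_le_norm (gu κ a φ (zp s t)) (ψ t)
      calc -(Pw lam p a (zp s t) * inner ℝ (gu κ a φ (zp s t)) (ψ t))
          = Pw lam p a (zp s t) * -(inner ℝ (gu κ a φ (zp s t)) (ψ t)) := by ring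
        _ ≤ Pw lam p a (zp s t) * (‖gu κ a φ (zp s t)‖ * ‖ψ t‖) :=
          mul_le_mul_of_nonneg_left ((neg_le_abs _).trans k3) k2
        _ ≤ _ := mul_le_mul_of_nonneg_right k1 (by positivity)
    have h4 := mul_le_mul_of_nonneg_left h2 (show 0 ≤ lam * Cp * Real.exp (2 * s) from
      mul_nonneg (mul_nonneg S.lam0.le S.Cp0.le) (Real.exp_pos _).le)
    change _ ≤ √(∫ t in Ang, ‖Dg a φ (zp s t) Complex.I‖ ^ 2) * _ + _
    linarith

theorem norm_tw_mul (t : ℝ) (x : ℂ) : ‖tw t * x‖ = ‖x‖ := by rw [norm_mul, norm_tw, one_mul]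

/-- A test function vanishing to second order at angle `0` defines a flux that is
differentiable on both sides of the pole radius, the two gauges differing by the factor `tw`. -/
theorem flux_both (S : Sol lam Cp p a r₀ φ) {s : ℝ} (hs : s < Real.log r₀) (hα : s ≠ Real.log a.re)
    {ψ ψ' : ℝ → ℂ} {C₀ : ℝ} (hψ : BC ψ) (hψ' : BC ψ') (hd : ∀ t ∈ Ang, HasDerivAt ψ (ψ' t) t)
    (he : ∀ t ∈ Ang, ‖ψ t‖ ≤ C₀ * (π / 2 - |t|)) (h0 : ψ 0 = 0) (h0' : ψ' 0 = 0) :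
    ∃ d, HasDerivAt (fun x => ∫ t in Ang, inner ℝ (Dg a φ (zp x t) 1 * abG 1 a (zp x t)) (ψ t)) d s ∧
      ∫ t in Ang, inner ℝ (Dg a φ (zp s t) 1 * abG 1 a (zp s t)) (ψ t) ≤
        √(fa a φ s) * √(∫ t in Ang, ‖ψ t‖ ^ 2) ∧
      d ≤ √(fb a φ s) * √(∫ t in Ang, ‖ψ' t‖ ^ 2) +
        lam * Cp * Real.exp (2 * s) * (√(fH a φ s) * √(∫ t in Ang, ‖ψ t‖ ^ 2)) := by
  rcases lt_or_gt_of_ne hα with h | h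
  · have key := S.flux_strip isOpen_Iio h S.strip_in (fun x hx t ht e =>
      S.fderiv_gu (lt_trans hx S.α_lt) (ne_of_lt hx) ht (slit_in S.a0 hx) e)
      (tw_bc hψ h0) (tw_bc hψ' h0')
      (fun t ht => tw_deriv (hd t ht) (by rintro rfl; exact ⟨h0, h0'⟩))
      (fun t ht => by rw [norm_tw_mul]; exact he t ht)
    simp only [norm_tw_mul] at key
    have e0 : ∀ x, ∫ t in Ang, inner ℝ (Dg a φ (zp x t) 1 * abG (-1) a (zp x t)) (tw t * ψ t) =
        ∫ t in Ang, inner ℝ (Dg a φ (zp x t) 1 * abG 1 a (zp x t)) (ψ t) := fun x =>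
      setIntegral_congr_fun measurableSet_Ioo fun t ht => by
        by_cases ht0 : t = 0
        · simp only [ht0, h0, mul_zero, inner_zero_right]
        · simp only [← abG_tw ht ht0, ← mul_assoc, mul_comm (tw t) (ψ t)]
          exact inner_mul_unit (norm_tw t)
    simpa only [e0] using key
  · exact S.flux_strip isOpen_Ioo ⟨h, hs⟩ S.strip_out (fun x hx t ht e =>
      S.fderiv_gu hx.2 hx.1.ne' ht (slit_out S.a0 hx.1 (Ioo_subset_Icc_self ht)) e) hψ hψ' hd he

/-- The flux against a bounded test function is continuous at the pole radius. -/
theorem flux_cont (S : Sol lam Cp p a r₀ φ) {c₁ d₁ : ℝ} (P : Pole a φ c₁ d₁) {ψ : ℝ → ℂ} (hψ : BC ψ) :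
    ContinuousAt (fun x => ∫ t in Ang, inner ℝ (Dg a φ (zp x t) 1 * abG 1 a (zp x t)) (ψ t))
      (Real.log a.re) := by
  obtain ⟨hc, M, hM⟩ := hψ
  obtain ⟨K, hK0, hK⟩ := S.Dg_bdd P
  refine continuousAt_int (M := K * M) (near_mem a) ?_ ?_ ?_
  · intro s hs t ht h0
    refine (abs_real_inner_le_norm _ _).trans ?_
    rw [norm_mul_abG]
    calc _ ≤ (K * (√|t|)⁻¹) * M := mul_le_mul (hK s hs t ht h0)
          (hM t ht) (norm_nonneg _) (by positivity)
      _ = _ := by ring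
  · intro s hs
    refine ((S.Dg_cont_t (S.near_lt hs) 1).mul fun t ht => ?_).inner (hc.mono sdiff_subset)
    exact (ContinuousAt.comp (f := fun t => zp s t)
      (abG_contDiffAt (slit_off (Ioo_subset_Icc_self ht.1) ht.2)).continuousAt
      (zp_cont_t s).continuousAt).continuousWithinAt
  · intro t ht h0
    refine ((S.Dg_cont_s S.α_lt ht h0 1).mul ?_).inner continuousAt_const
    exact ContinuousAt.comp (f := fun s => zp s t)
      (abG_contDiffAt (slit_off (Ioo_subset_Icc_self ht) h0)).continuousAt (zp_cont_s t).continuousAt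

/-- The test flux is built from the gauged profile on the slice, multiplied by the cutoff `cz`. -/
theorem flux (S : Sol lam Cp p a r₀ φ) {c₁ d₁ : ℝ} (P : Pole a φ c₁ d₁) :
    FluxTest (Real.log a.re) (Real.log r₀) (lam * Cp) (fH a φ) (fe a φ) (fa a φ) (fb a φ) := by
  intro s₁ h1 h2 L hL
  have hs : s₁ ∈ Ioo (Real.log a.re) (Real.log r₀) := ⟨h1, h2⟩
  have G := S.strip_out
  have hD : ∀ t ∈ Ang, ∀ e : ℂ, fderiv ℝ (gu 1 a φ) (zp s₁ t) e =
      Dg a φ (zp s₁ t) e * abG 1 a (zp s₁ t) := fun t ht e =>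
    S.fderiv_gu h2 h1.ne' ht (slit_out S.a0 h1 (Ioo_subset_Icc_self ht)) e
  obtain ⟨b1, b2, b3, -⟩ := Strip.bc G hs
  obtain ⟨C, hC, hedge⟩ := Strip.edge G hs
  have hdt := Strip.dt G s₁ hs
  have hsup := fun t ht => sup_sq_le b1 b3 hdt
    ((Strip.cv G).comp (f := fun t => (s₁, t)) (by fun_prop) fun t ht => ⟨hs, ht⟩) (Strip.zl G s₁ hs) (t := t) ht
  have ea := fD_eq (fun t ht => hD t ht 1)
  have eb := fD_eq (fun t ht => hD t ht Complex.I)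
  have ee := fe_eq (fun t ht => hD t ht 1)
  rw [fH_eq, eb] at hsup
  change ∀ t ∈ Ang, _ ≤ 2 * √(fH a φ s₁ * fb a φ s₁) at hsup
  change _ = fa a φ s₁ at ea
  change _ = fb a φ s₁ at eb
  have eH := fH_eq (a := a) (φ := φ) 1 s₁
  set w : ℝ → ℂ := fun t => gu 1 a φ (zp s₁ t) with hw
  set w' : ℝ → ℂ := fun t => fderiv ℝ (gu 1 a φ) (zp s₁ t) Complex.I with hw'
  set X := √(fH a φ s₁ * fb a φ s₁) with hX
  have hX0 : 0 ≤ X := Real.sqrt_nonneg _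
  have bz := bc_of_cont (cz_cont hL)
  have bz' := bc_of_cont (cz'_cont hL)
  have bl := bc_of_cont (lor_cont hL)
  have hli := lor_int hL
  have bψ : BC fun t => cz L t • w t := bz.smul b1
  have bψ' : BC fun t => cz' L t • w t + cz L t • w' t := (bz'.smul b1).add (bz.smul b3)
  have bR : BC fun t => (1 - cz L t) • w t := ((BC.const (1 : ℝ)).sub bz).smul b1
  have hd : ∀ t ∈ Ang, HasDerivAt (fun t => cz L t • w t) (cz' L t • w t + cz L t • w' t) t := by
    intro t ht
    have := (cz_deriv hL t).smul (hdt t ht)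
    exact this.congr_deriv (add_comm _ _)
  have he : ∀ t ∈ Ang, ‖cz L t • w t‖ ≤ C * (π / 2 - |t|) := by
    intro t ht
    rw [norm_smul, Real.norm_of_nonneg (cz_nonneg L t)]
    exact (mul_le_of_le_one_left (norm_nonneg _) (cz_le hL t)).trans (hedge t ht).1
  have hψ0 : cz L 0 • w 0 = 0 := by simp [cz]
  have hψ0' : cz' L 0 • w 0 + cz L 0 • w' 0 = 0 := by simp [cz, cz']
  have key := fun s (hs : s < Real.log r₀) (hα : s ≠ Real.log a.re) =>
    S.flux_both hs hα bψ bψ' hd he hψ0 hψ0'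
  choose! Fd hFd using key
  refine ⟨_, Fd, ∫ t in Ang, ‖cz L t • w t‖ ^ 2, ∫ t in Ang, ‖cz' L t • w t + cz L t • w' t‖ ^ 2,
    ∫ t in Ang, ‖(1 - cz L t) • w t‖ ^ 2, integral_nonneg fun _ => by positivity, ?_,
    integral_nonneg fun _ => by positivity, ?_, integral_nonneg fun _ => by positivity, ?_, ?_, hFd, ?_⟩
  · rw [← eH]
    refine setIntegral_mono_on bψ.sq.integrable b1.sq.integrable measurableSet_Ioo fun t _ => ?_
    refine pow_le_pow_left₀ (norm_nonneg _) ?_ 2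
    rw [norm_smul, Real.norm_of_nonneg (cz_nonneg L t)]
    exact mul_le_of_le_one_left (norm_nonneg _) (cz_le hL t)
  · have hm : ∫ t in Ang, ‖cz' L t • w t + cz L t • w' t‖ ^ 2 ≤
        ∫ t in Ang, (4 * X * (t ^ 2 + L ^ 2)⁻¹ + 2 * ‖w' t‖ ^ 2) := by
      refine setIntegral_mono_on bψ'.sq.integrable
        (((BC.const (4 * X)).mul bl).add ((BC.const (2 : ℝ)).mul b3.sq)).integrable measurableSet_Ioo fun t ht => ?_
      have n1 : ‖cz' L t • w t‖ ^ 2 ≤ (t ^ 2 + L ^ 2)⁻¹ * (2 * X) := by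
        rw [norm_smul, mul_pow, Real.norm_eq_abs, sq_abs]
        exact mul_le_mul (cz'_sq hL t) (hsup t ht) (by positivity) (by positivity)
      have n2 : ‖cz L t • w' t‖ ≤ ‖w' t‖ := by
        rw [norm_smul, Real.norm_of_nonneg (cz_nonneg L t)]
        exact mul_le_of_le_one_left (norm_nonneg _) (cz_le hL t)
      have n3 : ‖cz L t • w' t‖ ^ 2 ≤ ‖w' t‖ ^ 2 := pow_le_pow_left₀ (norm_nonneg _) n2 2
      have n4 : ‖cz' L t • w t + cz L t • w' t‖ ^ 2 ≤ (‖cz' L t • w t‖ + ‖cz L t • w' t‖) ^ 2 :=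
        pow_le_pow_left₀ (norm_nonneg _) (norm_add_le _ _) 2
      have n5 := sq_nonneg (‖cz' L t • w t‖ - ‖cz L t • w' t‖)
      linarith
    rw [integral_add ((BC.const (4 * X)).mul bl).integrable ((BC.const (2 : ℝ)).mul b3.sq).integrable,
      integral_const_mul, integral_const_mul, eb] at hm
    have h5 := mul_le_mul_of_nonneg_left hli (show 0 ≤ 4 * X by positivity)
    have h6 : 16 * π / L * X = 4 * X * (π / L) + 12 * (X * (π / L)) := by ring
    have h7 : 0 ≤ X * (π / L) := by positivity
    linarith
  · have hm : ∫ t in Ang, ‖(1 - cz L t) • w t‖ ^ 2 ≤ ∫ t in Ang, 2 * X * L ^ 2 * (t ^ 2 + L ^ 2)⁻¹ := by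
      refine setIntegral_mono_on bR.sq.integrable ((BC.const (2 * X * L ^ 2)).mul bl).integrable
        measurableSet_Ioo fun t ht => ?_
      rw [norm_smul, mul_pow, Real.norm_eq_abs, sq_abs]
      calc (1 - cz L t) ^ 2 * ‖w t‖ ^ 2 ≤ (L ^ 2 * (t ^ 2 + L ^ 2)⁻¹) * (2 * X) :=
            mul_le_mul (cz_compl hL t) (hsup t ht) (by positivity) (by positivity)
        _ = _ := by ring
    rw [integral_const_mul] at hm
    refine hm.trans ((mul_le_mul_of_nonneg_left hli (by positivity)).trans (le_of_eq ?_))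
    field_simp
  · intro s hs
    by_cases hα : s = Real.log a.re
    · subst hα; exact (S.flux_cont P bψ).continuousWithinAt
    · exact (hFd s hs hα).1.continuousAt.continuousWithinAt
  · have e1 : ∫ t in Ang, inner ℝ (Dg a φ (zp s₁ t) 1 * abG 1 a (zp s₁ t)) (cz L t • w t) =
        ∫ t in Ang, inner ℝ (fderiv ℝ (gu 1 a φ) (zp s₁ t) 1) (cz L t • w t) :=
      setIntegral_congr_fun measurableSet_Ioo fun t ht => by simp only [hD t ht]
    have e2 : fe a φ s₁ - ∫ t in Ang, inner ℝ (fderiv ℝ (gu 1 a φ) (zp s₁ t) 1) (cz L t • w t) =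
        ∫ t in Ang, inner ℝ (fderiv ℝ (gu 1 a φ) (zp s₁ t) 1) ((1 - cz L t) • w t) := by
      rw [← ee, ← integral_sub (b2.inner b1).integrable (b2.inner bψ).integrable]
      refine setIntegral_congr_fun measurableSet_Ioo fun t ht => ?_
      simp only [real_inner_smul_right]
      ring
    have e3 := b2.cs bR
    rw [ea] at e3
    rw [e1]
    linarith

end Sol

end

/-! ### Energy and height in logarithmic coordinates -/

section

/-- The half-strip `{Re ζ < s, |Im ζ| < π/2}` mapped by `Xp a` onto a half-disk. -/
def hStrip (s : ℝ) : Set ℂ := {ζ : ℂ | ζ.re ∈ Iio s ∧ ζ.im ∈ Ang}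

theorem Xp_image (a : ℂ) (s : ℝ) : Xp a '' hStrip s = halfDisk (proj a) (Real.exp s) := by
  ext x
  constructor
  · rintro ⟨ζ, ⟨h1, h2⟩, rfl⟩
    have e : ζ = zp ζ.re ζ.im := (Complex.re_add_im ζ).symm
    refine ⟨?_, ?_⟩
    · rw [Xp_dist]; exact Real.exp_lt_exp.2 h1
    · rw [e, Xp_re]
      exact mul_pos (Real.exp_pos _) (Real.cos_pos_of_mem_Ioo h2)
  · rintro ⟨h1, h2⟩
    have hre : 0 < (x - proj a).re := by rw [Complex.sub_re, proj_re, sub_zero]; exact h2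
    have hne : x - proj a ≠ 0 := by intro h; rw [h] at hre; simp at hre
    refine ⟨Complex.log (x - proj a), ⟨?_, ?_⟩, ?_⟩
    · rw [Complex.log_re]
      rw [dist_eq_norm] at h1
      exact (Real.log_lt_iff_lt_exp (norm_pos_iff.2 hne)).2 h1
    · rw [Complex.log_im]
      exact abs_lt.1 (Complex.abs_arg_lt_pi_div_two_iff.2 (Or.inl hre))
    · rw [Xp, Complex.exp_log hne]; ring

theorem Xp_injOn (a : ℂ) (s : ℝ) : InjOn (Xp a) (hStrip s) := by
  intro x hx y hy h
  have h' : Complex.exp x = Complex.exp y := add_left_cancel h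
  have h1 : -(π / 2) < x.im ∧ x.im < π / 2 := hx.2
  have h2 : -(π / 2) < y.im ∧ y.im < π / 2 := hy.2
  exact Complex.exp_inj_of_neg_pi_lt_of_le_pi (by linarith [Real.pi_pos]) (by linarith [Real.pi_pos])
    (by linarith [Real.pi_pos]) (by linarith [Real.pi_pos]) h'

theorem det_smul_one (w : ℂ) : (w • (1 : ℂ →L[ℝ] ℂ)).det = ‖w‖ ^ 2 := by
  have h : ((w • (1 : ℂ →L[ℝ] ℂ) : ℂ →L[ℝ] ℂ) : ℂ →ₗ[ℝ] ℂ) = LinearMap.mul ℝ ℂ w := by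
    ext; simp
  rw [ContinuousLinearMap.det, h]
  have := Algebra.norm_complex_apply w
  rw [Algebra.norm_apply] at this
  rw [← Complex.normSq_eq_norm_sq]
  exact this

theorem Xp_jac (ζ : ℂ) : |(Complex.exp ζ • (1 : ℂ →L[ℝ] ℂ)).det| = Real.exp (2 * ζ.re) := by
  rw [det_smul_one, Complex.norm_exp, ← Real.exp_nat_mul, abs_of_pos (Real.exp_pos _)]; simp

theorem strip_change (a : ℂ) (s : ℝ) (g : ℂ → ℝ) (hg : IntegrableOn g (halfDisk (proj a) (Real.exp s))) :
    IntegrableOn (fun z : ℝ × ℝ => Real.exp (2 * z.1) * g (Xp a (zp z.1 z.2))) (Iio s ×ˢ Ang)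
      ((volume : Measure ℝ).prod volume) ∧
    ∫ x in halfDisk (proj a) (Real.exp s), g x =
      ∫ z in Iio s ×ˢ Ang, Real.exp (2 * z.1) * g (Xp a (zp z.1 z.2)) ∂((volume : Measure ℝ).prod volume) := by
  have hm : MeasurableSet (hStrip s) := (isOpen_strip isOpen_Iio).measurableSet
  have hd : ∀ ζ ∈ hStrip s, HasFDerivWithinAt (Xp a) (Complex.exp ζ • (1 : ℂ →L[ℝ] ℂ)) (hStrip s) ζ :=
    fun ζ _ => (Xp_deriv a ζ).complexToReal_fderiv.hasFDerivWithinAt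
  have k := Complex.volume_preserving_equiv_real_prod.symm
  have hpre : Complex.measurableEquivRealProd.symm ⁻¹' hStrip s = Iio s ×ˢ Ang := by
    ext z; simp [hStrip]
  have hf : (fun z : ℝ × ℝ => Real.exp (2 * z.1) * g (Xp a (zp z.1 z.2))) =
      (fun ζ : ℂ => |(Complex.exp ζ • (1 : ℂ →L[ℝ] ℂ)).det| • g (Xp a ζ)) ∘
        Complex.measurableEquivRealProd.symm := by
    funext z
    simp only [Function.comp, Xp_jac, smul_eq_mul, Complex.measurableEquivRealProd_symm_apply]
    have : zp z.1 z.2 = ⟨z.1, z.2⟩ := by apply Complex.ext <;> simp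
    rw [this]
  rw [← Measure.volume_eq_prod]
  rw [← Xp_image] at hg ⊢
  constructor
  · rw [integrableOn_image_iff_integrableOn_abs_det_fderiv_smul volume hm hd (Xp_injOn a s)] at hg
    rw [hf, ← hpre]
    exact (k.integrableOn_comp_preimage (MeasurableEquiv.measurableEmbedding _)).2 hg
  · rw [integral_image_eq_integral_abs_det_fderiv_smul volume hm hd (Xp_injOn a s), hf, ← hpre]
    exact (k.setIntegral_preimage_emb (MeasurableEquiv.measurableEmbedding _) _ _).symm

theorem strip_fubini (a : ℂ) (s : ℝ) (g : ℂ → ℝ) (hg : IntegrableOn g (halfDisk (proj a) (Real.exp s))) :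
    IntegrableOn (fun x => ∫ t in Ang, Real.exp (2 * x) * g (Xp a (zp x t))) (Iio s) ∧
    ∫ x in halfDisk (proj a) (Real.exp s), g x =
      ∫ x in Iio s, ∫ t in Ang, Real.exp (2 * x) * g (Xp a (zp x t)) := by
  obtain ⟨h1, h2⟩ := strip_change a s g hg
  refine ⟨?_, h2.trans (setIntegral_prod _ h1)⟩
  rw [IntegrableOn, ← Measure.prod_restrict] at h1
  exact h1.integral_prod_left

theorem Hfun_eq (a : ℂ) (φ : ℂ → ℂ) (s : ℝ) : Hfun φ (Real.exp s) (proj a) = fH a φ s := by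
  rw [Hfun, bdryInt, integral_const_mul, ← mul_assoc, one_div, inv_mul_cancel₀ (Real.exp_pos s).ne',
    one_mul, fH]
  simp only [Xp_circle]

namespace Sol
variable {lam Cp : ℝ} {p : ℂ → ℝ} {a : ℂ} {r₀ : ℝ} {φ : ℂ → ℂ}

/-- The energy density integrated over a slice. -/
theorem slice_energy (S : Sol lam Cp p a r₀ φ) {s : ℝ} (hs : s < Real.log r₀) (hα : s ≠ Real.log a.re) :
    ∫ t in Ang, Real.exp (2 * s) * (mgSq a φ (Xp a (zp s t)) -
      lam * p (Xp a (zp s t)) * ‖φ (Xp a (zp s t))‖ ^ 2) = fa a φ s + fb a φ s - fc lam p a φ s := by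
  obtain ⟨κ, I, hI, hsI, G, hD⟩ := S.piece hs hα
  obtain ⟨b1, b2, b3, -, -, -, b7, -⟩ := Strip.bc G hsI
  rw [fa, fb, ← fD_eq (fun t ht => hD s hsI t ht 1), ← fD_eq (fun t ht => hD s hsI t ht Complex.I),
    ← fc_eq κ, ← integral_add b2.sq.integrable b3.sq.integrable,
    ← integral_sub (b2.sq.add b3.sq).integrable (b7.mul b1.sq).integrable]
  refine setIntegral_congr_fun measurableSet_Ioo fun t ht => ?_
  have h := Dg_sq (φ := φ) (exp_sub_ne S.a0 (t := t) hα)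
  simp only [hD s hsI t ht, norm_mul_abG, norm_gu]
  rw [h, norm_exp_zp, Pw, zp_re, ← Real.exp_nat_mul]
  push_cast
  ring

/-- The energy density is integrable on the half-disk. -/
theorem dens_int (S : Sol lam Cp p a r₀ φ) (hi : IntegrableOn (mgSq a φ) (halfDisk (proj a) r₀)) :
    IntegrableOn (fun x => mgSq a φ x - lam * p x * ‖φ x‖ ^ 2) (halfDisk (proj a) r₀) := by
  refine hi.sub ?_
  have hcl : ContinuousOn (fun x => lam * p x * ‖φ x‖ ^ 2) (closure (halfDisk (proj a) r₀)) :=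
    (continuousOn_const.mul S.hp.continuous.continuousOn).mul (S.cont.norm.pow 2)
  have hb : Bornology.IsBounded (halfDisk (proj a) r₀) :=
    Metric.isBounded_ball.subset fun x hx => hx.1
  exact (hcl.integrableOn_compact (hb.isCompact_closure)).mono_set subset_closure

/-- The energy on half-disks is the logarithmic flux `fe`: both have the derivative `a + b - c` and
vanish as the radius tends to `0`. -/
theorem Efun_eq (S : Sol lam Cp p a r₀ φ) {c₁ d₁ : ℝ} (P : Pole a φ c₁ d₁)
    (hi : IntegrableOn (mgSq a φ) (halfDisk (proj a) r₀)) {s : ℝ} (hs : s < Real.log r₀) :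
    Efun a φ (Real.exp s) (proj a) lam p = fe a φ s := by
  have hg := (S.dens_int hi).mono_set (show halfDisk (proj a) (Real.exp s) ⊆ halfDisk (proj a) r₀ from
    fun x hx => ⟨hx.1.trans (S.exp_le hs), hx.2⟩)
  obtain ⟨h1, h2⟩ := strip_fubini a s _ hg
  have hae : (fun x => ∫ t in Ang, Real.exp (2 * x) * (mgSq a φ (Xp a (zp x t)) -
      lam * p (Xp a (zp x t)) * ‖φ (Xp a (zp x t))‖ ^ 2)) =ᵐ[volume.restrict (Iio s)]
      fun x => fa a φ x + fb a φ x - fc lam p a φ x := by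
    filter_upwards [ae_restrict_mem measurableSet_Iio,
      ae_restrict_of_ae (compl_mem_ae_iff.2 (measure_singleton (Real.log a.re)))] with x hx hx'
    exact S.slice_energy (hx.trans hs) hx'
  rw [Efun, h2, integral_congr_ae hae]
  have h3 : IntegrableOn (fun x => fa a φ x + fb a φ x - fc lam p a φ x) (Iic s) := by
    rw [integrableOn_Iic_iff_integrableOn_Iio]; exact h1.congr hae
  rw [← integral_Iic_eq_integral_Iio]
  have F := S.freq P
  refine tendsto_nhds_unique (intervalIntegral_tendsto_integral_Iic s h3 tendsto_id) ?_
  have h4 : Tendsto (fun x => fe a φ s - fe a φ x) atBot (nhds (fe a φ s)) := by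
    simpa using tendsto_const_nhds.sub F.e_tendsto
  refine h4.congr' ?_
  filter_upwards [eventually_le_atBot s] with x hx
  refine (integral_eq_of_hasDerivAt_off_countable_of_le _ _ hx (countable_singleton (Real.log a.re))
    (F.ec.mono fun y hy => hy.2.trans_lt hs) (fun y hy => F.de y (hy.1.2.trans hs) hy.2) ?_).symm
  rw [intervalIntegrable_iff_integrableOn_Ioc_of_le hx]
  exact h3.mono_set fun y hy => hy.2

end Sol

end

/-! ### Conclusion -/

section

namespace Sol
variable {lam Cp : ℝ} {p : ℂ → ℝ} {a : ℂ} {r₀ : ℝ} {φ : ℂ → ℂ}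

/-- `main_le` for the frequency, with the outer radius tending to `r₀`. -/
theorem Nfun_le (S : Sol lam Cp p a r₀ φ) {c₁ d₁ : ℝ} (P : Pole a φ c₁ d₁)
    (hi : IntegrableOn (mgSq a φ) (halfDisk (proj a) r₀)) {k r : ℝ} (hk : 1 < k) (hr : k * a.re < r)
    (hr₀ : r < r₀) :
    0 ≤ Nfun a φ r₀ (proj a) lam p ∧
    Nfun a φ r (proj a) lam p ≤ Nfun a φ r₀ (proj a) lam p *
      Real.exp ((6 * Real.exp 7 + 4 * Real.log (10 ^ 17)) / k ^ 2 + lam * Cp * r₀ ^ 2) := by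
  have F := S.freq P
  have D := S.pole P
  have hka : 0 < k * a.re := mul_pos (by linarith) S.a0
  have hr0 : 0 < r := hka.trans hr
  have hs : Real.log a.re + Real.log k < Real.log r := by
    rw [← Real.log_mul S.a0.ne' (by linarith), mul_comm]
    exact Real.log_lt_log hka hr
  have hsσ : Real.log r < Real.log r₀ := Real.log_lt_log hr0 hr₀
  have hαs : Real.log a.re < Real.log r := by linarith [Real.log_pos hk]
  have er : Real.exp (Real.log r) = r := Real.exp_log hr0
  have er₀ : Real.exp (Real.log r₀) = r₀ := Real.exp_log S.r0
  obtain ⟨u, um, ul, ut⟩ := exists_seq_strictMono_tendsto (Real.log r₀)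
  have tH : Tendsto (fun n => fH a φ (u n)) atTop (nhds (Hfun φ r₀ (proj a))) := by
    have h := S.fH_cont (Real.log r₀) (mem_Iic.2 le_rfl)
    rw [ContinuousWithinAt, ← Hfun_eq, er₀] at h
    exact h.comp (tendsto_nhdsWithin_iff.2 ⟨ut, Eventually.of_forall fun n => (ul n).le⟩)
  have tE : Tendsto (fun n => fe a φ (u n)) atTop (nhds (Efun a φ r₀ (proj a) lam p)) := by
    have hU : ⋃ n, halfDisk (proj a) (Real.exp (u n)) = halfDisk (proj a) r₀ := by
      ext x
      simp only [mem_iUnion]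
      constructor
      · rintro ⟨n, hx⟩; exact ⟨hx.1.trans (S.exp_le (ul n)), hx.2⟩
      · intro hx
        have ht := (Real.continuous_exp.tendsto _).comp ut
        rw [er₀] at ht
        obtain ⟨n, hn⟩ := (ht.eventually_const_lt hx.1).exists
        exact ⟨n, hn, hx.2⟩
    have h := tendsto_setIntegral_of_monotone (μ := volume)
      (f := fun x => mgSq a φ x - lam * p x * ‖φ x‖ ^ 2)
      (s := fun n => halfDisk (proj a) (Real.exp (u n)))
      (fun n => (isOpen_halfDisk _ _).measurableSet)
      (fun m n hmn x hx => ⟨hx.1.trans_le (Real.exp_le_exp.2 (um.monotone hmn)), hx.2⟩)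
      (by rw [hU]; exact S.dens_int hi)
    rw [hU] at h
    exact h.congr fun n => S.Efun_eq P hi (ul n)
  have hHr : 0 < fH a φ (Real.log r) := D.Hpos _ hαs hsσ
  have hev : ∀ᶠ n in atTop, Real.log r ≤ u n ∧ Real.log a.re + Real.log 2 ≤ u n := by
    filter_upwards [ut.eventually_const_lt hsσ, ut.eventually_const_lt S.α_log2] with n h1 h2
    exact ⟨h1.le, h2.le⟩
  have hH₀ : 0 < Hfun φ r₀ (proj a) := hHr.trans_le
    (ge_of_tendsto tH (hev.mono fun n hn => F.H_mono hn.1 (ul n)))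
  have hE₀ : 0 ≤ Efun a φ r₀ (proj a) lam p :=
    ge_of_tendsto' tE fun n => F.e_nonneg (ul n)
  refine ⟨div_nonneg hE₀ hH₀.le, ?_⟩
  have tX : Tendsto (fun n => Real.exp ((6 * Real.exp 7 + 4 * Real.log (10 ^ 17)) / k ^ 2 +
      lam * Cp * Real.exp (2 * u n))) atTop (nhds (Real.exp
        ((6 * Real.exp 7 + 4 * Real.log (10 ^ 17)) / k ^ 2 + lam * Cp * r₀ ^ 2))) := by
    have hc : Continuous fun x : ℝ => Real.exp ((6 * Real.exp 7 + 4 * Real.log (10 ^ 17)) / k ^ 2 +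
      lam * Cp * Real.exp (2 * x)) := by fun_prop
    have h := (hc.tendsto (Real.log r₀)).comp ut
    have e : Real.exp (2 * Real.log r₀) = r₀ ^ 2 := by
      rw [two_mul, Real.exp_add, er₀]; ring
    rw [e] at h
    exact h
  have hN : Nfun a φ r (proj a) lam p = fe a φ (Real.log r) / fH a φ (Real.log r) := by
    rw [Nfun, ← S.Efun_eq P hi hsσ, ← Hfun_eq, er]
  rw [hN]
  exact ge_of_tendsto ((tE.div tH hH₀.ne').mul tX)
    (hev.mono fun n hn => D.main_le (S.flux P) hk hs hn.1 hn.2 (ul n))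

end Sol

end

/-- Almost-monotonicity of the Almgren frequency: given `λ > 0`, a bound `Cp` for the
`C¹` norm of the weight and `C₀ > 0`, there is a constant `C > 0` (depending only on
`λ`, `Cp`, `C₀`, and not on `a₁`, `k`, `r`, `r₀`) such that, for every datum
satisfying the standing hypotheses, the vanishing expansion of order `1/2` at `a`,
`2a₁ < r₀` and `|M_a| ≤ C₀·H(φ,2a₁,π(a))`, and provided `C r₀² < 1`, one has for all
`k > 1` with `a₁ < r₀/k` and all `k a₁ < r < r₀`:
`N(φ,r,π(a),λ,A_a) ≤ (N(φ,r₀,π(a),λ,A_a) + 1)·exp(C e^{C r₀²}/k² + C r₀²/(1−C r₀²)) − 1`. -/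
theorem frequency_almost_monotone
    (lam Cp C₀ : ℝ) (hlam : 0 < lam) (hCp : 0 < Cp) (hC₀ : 0 < C₀) :
    ∃ C : ℝ, 0 < C ∧
      ∀ (p : ℂ → ℝ) (a : ℂ) (r₀ : ℝ) (φ : ℂ → ℂ) (c₁ d₁ Ma : ℝ),
        ContDiff ℝ 1 p → (∀ x, 0 < p x) → (∀ x, p x ≤ Cp) →
        (∀ x, ‖fderiv ℝ p x‖ ≤ Cp) →
        0 < a.re → a.re < r₀ → 2 * a.re < r₀ →
        2 * lam * sSup (Set.range p) * r₀ ^ 2 < 1 →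
        ContinuousOn φ (closure (halfDisk (proj a) r₀)) →
        (∀ x ∈ closure (halfDisk (proj a) r₀), x.re = 0 → φ x = 0) →
        ContDiffOn ℝ 2 φ (halfDisk (proj a) r₀ \ {a}) →
        (∀ x ∈ halfDisk (proj a) r₀ \ {a},
          magLap a φ x = ((lam * p x : ℝ) : ℂ) * φ x) →
        IntegrableOn (mgSq a φ) (halfDisk (proj a) r₀) →
        ¬(c₁ = 0 ∧ d₁ = 0) →
        (fun x => φ x - modelHalf a c₁ d₁ x) =o[nhdsWithin a {a}ᶜ]
          (fun x => Real.sqrt ‖x - a‖) →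
        ((fun x => fderiv ℝ φ x - fderiv ℝ (modelHalf a c₁ d₁) x)
          =o[nhdsWithin a {a}ᶜ] fun x => (Real.sqrt ‖x - a‖)⁻¹) →
        Tendsto (pohoBdry a φ) (nhdsWithin 0 (Set.Ioi 0)) (nhds Ma) →
        |Ma| ≤ C₀ * Hfun φ (2 * a.re) (proj a) →
        C * r₀ ^ 2 < 1 →
        ∀ k r : ℝ, 1 < k → a.re < r₀ / k → k * a.re < r → r < r₀ →
          Nfun a φ r (proj a) lam p ≤
            (Nfun a φ r₀ (proj a) lam p + 1) *
              Real.exp (C * Real.exp (C * r₀ ^ 2) / k ^ 2 +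
                C * r₀ ^ 2 / (1 - C * r₀ ^ 2)) - 1 := by
  set K : ℝ := 6 * Real.exp 7 + 4 * Real.log (10 ^ 17) with hK
  have hK0 : 0 < K := by
    have := Real.exp_pos 7
    have := Real.log_nonneg (show (1 : ℝ) ≤ 10 ^ 17 by norm_num)
    rw [hK]; positivity
  have hΛ : 0 < lam * Cp := mul_pos hlam hCp
  -- The summand `1` forces `r₀ ≤ 1`, the summand `1000·λ·Cp` forces `λ·Cp·r₀² ≤ 1/1000`.
  refine ⟨K + 1 + 1000 * (lam * Cp), by positivity, ?_⟩
  intro p a r₀ φ c₁ d₁ Ma hp p0 p1 p2 a0 _ ar _ cont zero c2 eq hi hne e0 e1 _ _ hC k r hk _ hr hr₀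
  set C : ℝ := K + 1 + 1000 * (lam * Cp) with hCdef
  clear_value C K
  have q0 : 0 < r₀ ^ 2 := pow_pos (by linarith) 2
  have q1 : 0 < K * r₀ ^ 2 := by positivity
  have q2 : 0 < (lam * Cp) * r₀ ^ 2 := by positivity
  have q3 : C * r₀ ^ 2 = K * r₀ ^ 2 + r₀ ^ 2 + 1000 * ((lam * Cp) * r₀ ^ 2) := by rw [hCdef]; ring
  have S : Sol lam Cp p a r₀ φ :=
    { lam0 := hlam, Cp0 := hCp, hp := hp, p0 := p0, p1 := p1, p2 := p2, a0 := a0, ar := ar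
      r1 := by
        by_contra! h
        have := one_lt_pow₀ h two_ne_zero
        linarith
      small := by linarith
      cont := cont, zero := zero, c2 := c2, eq := eq }
  obtain ⟨hN, h⟩ := S.Nfun_le ⟨hne, e0, e1⟩ hi hk hr hr₀
  rw [← hK] at h
  have hk2 : 0 < k ^ 2 := by positivity
  have hX : K / k ^ 2 + lam * Cp * r₀ ^ 2 ≤
      C * Real.exp (C * r₀ ^ 2) / k ^ 2 + C * r₀ ^ 2 / (1 - C * r₀ ^ 2) := by
    have hC0 : 0 ≤ C := by rw [hCdef]; positivity
    have h1 : (1 : ℝ) ≤ Real.exp (C * r₀ ^ 2) := Real.one_le_exp (by positivity)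
    have h2 : C ≤ C * Real.exp (C * r₀ ^ 2) := le_mul_of_one_le_right hC0 h1
    refine add_le_add (div_le_div_of_nonneg_right (by linarith) hk2.le) ?_
    rw [le_div_iff₀ (by linarith)]
    calc _ ≤ lam * Cp * r₀ ^ 2 * 1 := mul_le_mul_of_nonneg_left (by linarith) q2.le
      _ ≤ _ := by linarith
  have hX0 : 0 ≤ K / k ^ 2 + lam * Cp * r₀ ^ 2 := by positivity
  have h1 := h.trans (mul_le_mul_of_nonneg_left (Real.exp_le_exp.2 hX) hN)
  have h2 := Real.one_le_exp (hX0.trans hX)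
  linarith

end
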